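/- Let p ∈ (1, ∞), and let Φ be a Φ-function with Φ ∈ (aInc)_p ∩ (Dec). There is a constant C depending only on Φ and p such that for every N-dimensional subspace X_N ⊂ C(Ω) with X_N ∈ NI_{2,∞}(H), every ε ∈ (0, 1/2], every δ ∈ (0, 1], and every m ≥ C·(εδ)^{-2}·(log((εδ)^{-1}))^{min{p,2}/2}·Φ(H^{2/min{p,2}})·(log 2N)²·log 2H², if x₁, …, x_m are i.i.d. random points in Ω distributed according to μ, then with probability at least 1 − δ/2 one has a_Φ(1)^{-1}(1−ε)‖f‖_Φ ≤ ‖f‖_{Φ,x} ≤ a_Φ(1)(1+ε)‖f‖_Φ for all f ∈ X_N. -/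

import Mathlib

open MeasureTheory

noncomputable section

/-- The sup-norm (uniform norm) `‖f‖_∞ = sup_{x ∈ Ω} |f x|` of a real-valued function. -/
def supNorm {Ω : Type*} (f : Ω → ℝ) : ℝ := ⨆ x, |f x|

/-- The Luxemburg functional `‖f‖_Φ = inf {λ > 0 : ∫ Φ(|f|/λ) dμ ≤ 1}`. -/
def luxNorm {Ω : Type*} [MeasurableSpace Ω] (μ : Measure Ω) (Φ : ℝ → ℝ) (f : Ω → ℝ) : ℝ :=
  sInf {lam : ℝ | 0 < lam ∧ ∫ x, Φ (|f x| / lam) ∂μ ≤ 1}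

/-- The discrete Luxemburg functional `‖f‖_{Φ,x}` with respect to the uniform discrete
probability measure `(1/m) ∑_{j=1}^m δ_{x_j}`. -/
def discLuxNorm {Ω : Type*} (Φ : ℝ → ℝ) {m : ℕ} (x : Fin m → Ω) (f : Ω → ℝ) : ℝ :=
  sInf {lam : ℝ | 0 < lam ∧ (∑ j, Φ (|f (x j)| / lam)) / (m : ℝ) ≤ 1}

/-- The weighted discrete Luxemburg functional `‖f‖_{Φ,x,λ}` with respect to the discrete
probability measure `∑_{j=1}^m λ_j δ_{x_j}`. -/
def wDiscLuxNorm {Ω : Type*} (Φ : ℝ → ℝ) {m : ℕ} (x : Fin m → Ω) (w : Fin m → ℝ)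
    (f : Ω → ℝ) : ℝ :=
  sInf {lam : ℝ | 0 < lam ∧ (∑ j, w j * Φ (|f (x j)| / lam)) ≤ 1}

/-- `Φ : [0,∞) → [0,∞)` is a Φ-prefunction: increasing, `Φ(0) = 0`, `Φ(0+) = 0`,
`Φ(∞) = ∞` (stated for a function on `ℝ`, with the relevant conditions on `[0,∞)`). -/
structure IsPhiPrefun (Φ : ℝ → ℝ) : Prop where
  mono : MonotoneOn Φ (Set.Ici 0)
  map_zero : Φ 0 = 0
  nonneg : ∀ t : ℝ, 0 ≤ t → 0 ≤ Φ t
  tendsto_zero : Filter.Tendsto Φ (nhdsWithin 0 (Set.Ioi 0)) (nhds 0)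
  tendsto_atTop : Filter.Tendsto Φ Filter.atTop Filter.atTop

/-- `Φ ∈ (aInc)_p` with constant `a`: `t ↦ Φ(t) t^{-p}` is almost increasing on `(0,∞)`. -/
def AIncP (Φ : ℝ → ℝ) (p a : ℝ) : Prop :=
  ∀ s t : ℝ, 0 < s → s < t → Φ s / s ^ p ≤ a * (Φ t / t ^ p)

/-- `Φ ∈ (Inc)_p` : `t ↦ Φ(t) t^{-p}` is increasing on `(0,∞)`. -/
def IncP (Φ : ℝ → ℝ) (p : ℝ) : Prop :=
  ∀ s t : ℝ, 0 < s → s < t → Φ s / s ^ p ≤ Φ t / t ^ p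

/-- `Φ ∈ (Dec)_q` : `t ↦ Φ(t) t^{-q}` is decreasing on `(0,∞)`. -/
def DecQ (Φ : ℝ → ℝ) (q : ℝ) : Prop :=
  ∀ s t : ℝ, 0 < s → s < t → Φ t / t ^ q ≤ Φ s / s ^ q

/-- `Φ ∈ (aDec)_q` with constant `b`: `t ↦ Φ(t) t^{-q}` is almost decreasing on `(0,∞)`. -/
def ADecQ (Φ : ℝ → ℝ) (q b : ℝ) : Prop :=
  ∀ s t : ℝ, 0 < s → s < t → Φ t / t ^ q ≤ b * (Φ s / s ^ q)

/-- `t ↦ Φ(t) t^{-p}` is almost increasing with constant `a` on `(t_*, ∞)`. -/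
def AIncPOn (Φ : ℝ → ℝ) (p a tstar : ℝ) : Prop :=
  ∀ s t : ℝ, tstar < s → s < t → Φ s / s ^ p ≤ a * (Φ t / t ^ p)

/-- `t ↦ Φ(t) t^{-q}` is almost decreasing with constant `b` on `(t_*, ∞)`. -/
def ADecQOn (Φ : ℝ → ℝ) (q b tstar : ℝ) : Prop :=
  ∀ s t : ℝ, tstar < s → s < t → Φ t / t ^ q ≤ b * (Φ s / s ^ q)

/-- Entropy numbers `e_n(F, d)` of a set `F` with respect to a distance-like function `dd`:
the infimum of `ε > 0` such that `F` can be covered by `2^{2^n}` (one, for `n = 0`)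
`ε`-balls centered in `F`. -/
def entropyNumD {X : Type*} (dd : X → X → ℝ) (F : Set X) (n : ℕ) : ℝ :=
  sInf {ε : ℝ | 0 < ε ∧ ∃ T : Finset X, ↑T ⊆ F ∧
    T.card ≤ (if n = 0 then 1 else 2 ^ 2 ^ n) ∧ ∀ f ∈ F, ∃ g ∈ T, dd f g < ε}

/-- Sampling numbers `ϱ_m(F, ‖·‖)`: recovery by linear methods from samples at `m` points. -/
def sampNum {Ω : Type*} (nrm : (Ω → ℝ) → ℝ) (F : Set (Ω → ℝ)) (m : ℕ) : ℝ :=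
  sInf {r : ℝ | ∃ (x : Fin m → Ω) (T : (Fin m → ℝ) →ₗ[ℝ] (Ω → ℝ)),
    r = ⨆ f ∈ F, nrm (fun y => f y - T (fun j => f (x j)) y)}

/-- Modified sampling numbers `ϱ*_m(F, ‖·‖)`: recovery by arbitrary methods mapping into a
subspace of dimension at most `m`, from samples at `m` points. -/
def sampNumStar {Ω : Type*} (nrm : (Ω → ℝ) → ℝ) (F : Set (Ω → ℝ)) (m : ℕ) : ℝ :=
  sInf {r : ℝ | ∃ (x : Fin m → Ω) (Y : Submodule ℝ (Ω → ℝ)), Module.finrank ℝ Y ≤ m ∧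
    ∃ T : (Fin m → ℝ) → Ω → ℝ, (∀ v, T v ∈ Y) ∧
    r = ⨆ f ∈ F, nrm (fun y => f y - T (fun j => f (x j)) y)}

/-- Kolmogorov width `d_N(F, ‖·‖_∞)` : infimum over `N`-dimensional subspaces of `C(Ω)` of the
worst-case best approximation error in the uniform norm. -/
def kolWidth {Ω : Type*} [TopologicalSpace Ω] (F : Set (Ω → ℝ)) (N : ℕ) : ℝ :=
  sInf {r : ℝ | ∃ X : Submodule ℝ (Ω → ℝ), Module.finrank ℝ X = N ∧
    (∀ u ∈ X, Continuous u) ∧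
    r = ⨆ f ∈ F, sInf ((fun u => supNorm (fun y => f y - u y)) '' (X : Set (Ω → ℝ)))}

end

/-!
An orthonormal basis of `X` in `L²(μ)` writes every `f ∈ X` as `⟪u ·, a⟫` with `a` in a Euclidean
space, where `a ↦ ⟪u ·, a⟫` is an isometry into `L²(μ)` and `‖u ·‖ ≤ H`. It is enough that, with
the required probability, the empirical mean of `Φ |⟪u ·, a⟫|` is within `ε` of its integral for
all `a` in the modular unit ball: at the level `‖f‖_Φ`, almost monotonicity of `Φ(t) / t` turns
this into the two-sided inequality between the Luxemburg functionals.

Symmetrization replaces the expected deviation by a Rademacher process, whose increments `(Dec)`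
bounds by those of the functions at the sample points. It is chained along nets for the supremum
over the sample. The unit ball of a norm with large Gaussian measure covers Euclidean balls
efficiently (dual Sudakov). This is used twice: for the `L^{2k}(μ)` norms with `k` of order
`log H`, halving the radius at each step, and then to pass to the supremum over the sample, at the
cost of the logarithm of its size. In each step the Euclidean radius of a piece is controlled by its
`L^{2k}(μ)` radius and by the `p`-th moments, which `(aInc)_p` bounds on the modular unit ball. At
the finest scales a volumetric covering is enough. The chaining bound contains the deviation
itself under a square root, and solving the resulting inequality gives the expectation; Markov's
inequality concludes.
-/

open ProbabilityTheory
open scoped BigOperators ENNReal InnerProductSpace NNReal Pointwise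

section Probability

variable {α : Type*} [MeasurableSpace α] {P : Measure α}

lemma half_le_measureReal_of_integral_le [IsProbabilityMeasure P] {g : α → ℝ}
    (hg : Measurable g) (hg₀ : 0 ≤ g) (hint : Integrable g P) {B : ℝ} (hB : 0 < B)
    (h : ∫ x, g x ∂P ≤ B) : 1 / 2 ≤ P.real {x | g x ≤ 2 * B} := by
  have hmarkov : 2 * B * P.real {x | g x ≤ 2 * B}ᶜ ≤ B :=
    calc 2 * B * P.real {x | g x ≤ 2 * B}ᶜ ≤ 2 * B * P.real {x | 2 * B ≤ g x} := by
          refine mul_le_mul_of_nonneg_left (measureReal_mono fun x hx => ?_) (by positivity)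
          exact (not_le.1 (show ¬ g x ≤ 2 * B from hx)).le
      _ ≤ ∫ x, g x ∂P := mul_meas_ge_le_integral_of_nonneg (.of_forall hg₀) hint _
      _ ≤ B := h
  have hcompl :=
    probReal_add_probReal_compl (μ := P) (measurableSet_le hg (measurable_const (a := 2 * B)))
  nlinarith

lemma half_le_measureReal_forall_abs_le [IsProbabilityMeasure P] {ι : Type*} [Fintype ι]
    [Nonempty ι] {X : ι → α → ℝ} {c : ℝ≥0} (hc : 0 < c) (hXm : ∀ i, Measurable (X i))
    (hX : ∀ i, HasSubgaussianMGF (X i) c P) :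
    1 / 2 ≤ P.real {x | ∀ i, |X i x| ≤ √(2 * c * Real.log (4 * Fintype.card ι))} := by
  set n := (Fintype.card ι : ℝ)
  have hn : 1 ≤ n := Nat.one_le_cast.2 Fintype.card_pos
  set t := √(2 * c * Real.log (4 * n))
  have ht2 : t ^ 2 = 2 * c * Real.log (4 * n) :=
    Real.sq_sqrt (mul_nonneg (by positivity) (Real.log_nonneg (by linarith)))
  have htail {Y : α → ℝ} (hY : HasSubgaussianMGF Y c P) :
      P.real {x | t ≤ Y x} ≤ (4 * n)⁻¹ := by
    refine (hY.measure_ge_le (Real.sqrt_nonneg _)).trans_eq ?_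
    rw [ht2, neg_div, mul_div_cancel_left₀ _ (by positivity), Real.exp_neg,
      Real.exp_log (by linarith)]
  have hsub : {x | ∀ i, |X i x| ≤ t}ᶜ ⊆ ⋃ i, ({x | t ≤ X i x} ∪ {x | t ≤ (-X i) x}) := by
    intro x hx
    obtain ⟨i, hi⟩ := not_forall.1 hx
    exact Set.mem_iUnion.2 ⟨i, (lt_abs.1 (not_le.1 hi)).imp le_of_lt le_of_lt⟩
  have hcompl : P.real {x | ∀ i, |X i x| ≤ t}ᶜ ≤ 1 / 2 :=
    calc P.real {x | ∀ i, |X i x| ≤ t}ᶜ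
        ≤ ∑ i, P.real ({x | t ≤ X i x} ∪ {x | t ≤ (-X i) x}) :=
          (measureReal_mono hsub).trans (measureReal_iUnion_fintype_le _)
      _ ≤ ∑ _i : ι, ((4 * n)⁻¹ + (4 * n)⁻¹) := Finset.sum_le_sum fun i _ =>
          (measureReal_union_le _ _).trans (add_le_add (htail (hX i)) (htail (hX i).neg))
      _ = 1 / 2 := by
          rw [Finset.sum_const, Finset.card_univ, nsmul_eq_mul]
          change n * _ = _
          field_simp
          norm_num
  have hmeas : MeasurableSet {x | ∀ i, |X i x| ≤ t} := by
    rw [Set.ofPred_forall]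
    exact MeasurableSet.iInter fun i => measurableSet_le (hXm i).abs measurable_const
  linarith [probReal_add_probReal_compl (μ := P) hmeas]

lemma pow_two_mul_le_mul_exp_add_exp (y : ℝ) {l : ℝ} (hl : 0 < l) (k : ℕ) :
    y ^ (2 * k) ≤ (2 * k / l) ^ (2 * k) * (Real.exp (l * y) + Real.exp (-l * y)) := by
  have hexp : (l * y) ^ (2 * k) ≤ (2 * k) ^ (2 * k) * (Real.exp (l * y) + Real.exp (-l * y)) :=
    calc (l * y) ^ (2 * k) = |l * y| ^ (2 * k) := ((even_two_mul k).pow_abs _).symm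
      _ ≤ (2 * k).factorial * Real.exp |l * y| := by
          rw [← div_le_iff₀' (by positivity)]
          exact Real.pow_div_factorial_le_exp _ (abs_nonneg _) _
      _ ≤ (2 * k) ^ (2 * k) * (Real.exp (l * y) + Real.exp (-l * y)) := by
          gcongr
          · exact_mod_cast Nat.factorial_le_pow (2 * k)
          · rw [neg_mul]
            exact Real.exp_abs_le _
  rw [div_pow, div_mul_eq_mul_div, le_div_iff₀ (by positivity), mul_comm, ← mul_pow]
  exact hexp

lemma integrable_pow_of_hasSubgaussianMGF {X : α → ℝ} {c : ℝ≥0} (hX : HasSubgaussianMGF X c P)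
    (n : ℕ) : Integrable (fun x => X x ^ n) P :=
  integrable_pow_of_mem_interior_integrableExpSet (by simp [hX.integrableExpSet_eq_univ]) n

-- The exponential bound is used at `l = √(2k / c)`.
lemma integral_pow_two_mul_le_of_hasSubgaussianMGF {X : α → ℝ} {c : ℝ≥0} (hc : 0 < c)
    (hX : HasSubgaussianMGF X c P) {k : ℕ} (hk : 0 < k) :
    ∫ x, X x ^ (2 * k) ∂P ≤ 2 * (6 * k * c) ^ k := by
  set l : ℝ := √(2 * k / c)
  have hl0 : 0 < l := by positivity
  have hl2 : l ^ 2 = 2 * k / c := Real.sq_sqrt (by positivity)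
  have hmgf (t : ℝ) (ht : t ^ 2 = l ^ 2) : mgf X P t ≤ 3 ^ k :=
    calc mgf X P t ≤ Real.exp (c * t ^ 2 / 2) := hX.mgf_le t
      _ = Real.exp 1 ^ k := by
          rw [← Real.exp_nat_mul, ht, hl2]
          congr 1
          field_simp
      _ ≤ 3 ^ k := by
          gcongr
          exact Real.exp_one_lt_three.le
  calc ∫ x, X x ^ (2 * k) ∂P
      ≤ ∫ x, (2 * k / l) ^ (2 * k) * (Real.exp (l * X x) + Real.exp (-l * X x)) ∂P :=
        integral_mono (integrable_pow_of_hasSubgaussianMGF hX _)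
          (((hX.integrable_exp_mul _).add (hX.integrable_exp_mul _)).const_mul _)
          fun x => pow_two_mul_le_mul_exp_add_exp (X x) hl0 k
    _ = (2 * k / l) ^ (2 * k) * (mgf X P l + mgf X P (-l)) := by
        rw [integral_const_mul, integral_add (hX.integrable_exp_mul _) (hX.integrable_exp_mul _)]
        rfl
    _ ≤ (2 * k / l) ^ (2 * k) * (3 ^ k + 3 ^ k) := by
        gcongr
        exacts [hmgf l rfl, hmgf (-l) (neg_sq l)]
    _ = 2 * (6 * k * c) ^ k := by
        have hbase : (2 * k / l) ^ 2 * 3 = 6 * k * c := by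
          rw [div_pow, hl2]
          field_simp
          ring
        rw [pow_mul, ← two_mul, mul_left_comm, ← mul_pow, hbase]

end Probability

section Gaussian

variable {E : Type*} [NormedAddCommGroup E] [InnerProductSpace ℝ E]

/-- The density of the standard Gaussian measure of a Euclidean space. -/
noncomputable def stdGaussianPDF (x : E) : ℝ :=
  (2 * Real.pi) ^ (-(Module.finrank ℝ E / 2 : ℝ)) * Real.exp (-‖x‖ ^ 2 / 2)

lemma stdGaussianPDF_nonneg (x : E) : 0 ≤ stdGaussianPDF x := by
  unfold stdGaussianPDF
  positivity

lemma cexp_mul_stdGaussianPDF (x t : E) :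
    stdGaussianPDF x • Complex.exp (⟪x, t⟫_ℝ * Complex.I) =
      ((2 * Real.pi) ^ (-(Module.finrank ℝ E / 2 : ℝ)) : ℝ) *
        Complex.exp (-(1 / 2 : ℂ) * ‖x‖ ^ 2 + Complex.I * ⟪t, x⟫_ℝ) := by
  rw [stdGaussianPDF, Complex.real_smul, Complex.ofReal_mul, mul_assoc, Complex.ofReal_exp,
    ← Complex.exp_add, real_inner_comm]
  congr 2
  push_cast
  ring

lemma exp_neg_mul_stdGaussianPDF_le (x y : E) :
    2 * (Real.exp (-‖y‖ ^ 2 / 2) * stdGaussianPDF x) ≤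
      stdGaussianPDF (x + y) + stdGaussianPDF (-x + y) := by
  have hexp (z : E) : Real.exp (-‖z + y‖ ^ 2 / 2) =
      Real.exp (-‖y‖ ^ 2 / 2) * Real.exp (-‖z‖ ^ 2 / 2) * Real.exp (-⟪z, y⟫_ℝ) := by
    rw [← Real.exp_add, ← Real.exp_add, norm_add_sq_real]
    congr 1
    ring
  have hcosh := Real.one_le_cosh ⟪x, y⟫_ℝ
  rw [Real.cosh_eq] at hcosh
  rw [stdGaussianPDF, stdGaussianPDF, stdGaussianPDF, hexp, hexp, norm_neg, inner_neg_left, neg_neg]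
  set c := (2 * Real.pi) ^ (-(Module.finrank ℝ E / 2 : ℝ))
  calc 2 * (Real.exp (-‖y‖ ^ 2 / 2) * (c * Real.exp (-‖x‖ ^ 2 / 2)))
      ≤ 2 * (Real.exp (-‖y‖ ^ 2 / 2) * (c * Real.exp (-‖x‖ ^ 2 / 2))) *
        ((Real.exp ⟪x, y⟫_ℝ + Real.exp (-⟪x, y⟫_ℝ)) / 2) :=
        le_mul_of_one_le_right (by positivity) hcosh
    _ = _ := by ring

variable [MeasurableSpace E] [BorelSpace E]

@[fun_prop]
lemma measurable_stdGaussianPDF : Measurable (stdGaussianPDF : E → ℝ) := by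
  unfold stdGaussianPDF
  fun_prop

variable [FiniteDimensional ℝ E]

lemma integral_stdGaussianPDF_smul_cexp (t : E) :
    ∫ x : E, stdGaussianPDF x • Complex.exp (⟪x, t⟫_ℝ * Complex.I) =
      Complex.exp (-‖t‖ ^ 2 / 2) := by
  have hconst : (((2 * Real.pi) ^ (-(Module.finrank ℝ E / 2 : ℝ)) : ℝ) : ℂ) *
      (Real.pi / (1 / 2 : ℂ)) ^ ((Module.finrank ℝ E : ℂ) / 2) = 1 := by
    have h : (Real.pi / (1 / 2 : ℂ)) ^ ((Module.finrank ℝ E : ℂ) / 2) =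
        (((2 * Real.pi) ^ (Module.finrank ℝ E / 2 : ℝ) : ℝ) : ℂ) := by
      rw [Complex.ofReal_cpow (by positivity)]
      push_cast
      congr 1
      ring
    rw [h, ← Complex.ofReal_mul, ← Real.rpow_add (by positivity)]
    simp
  simp_rw [cexp_mul_stdGaussianPDF]
  rw [integral_const_mul,
    GaussianFourier.integral_cexp_neg_mul_sq_norm_add (by norm_num) Complex.I t, ← mul_assoc,
    hconst, one_mul, Complex.I_sq]
  congr 1
  ring

lemma integrable_stdGaussianPDF : Integrable (stdGaussianPDF : E → ℝ) := by
  have h := (GaussianFourier.integrable_cexp_neg_mul_sq_norm_add (V := E) (b := (1 / 2 : ℂ))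
    (by norm_num) Complex.I 0).const_mul
      ((2 * Real.pi) ^ (-(Module.finrank ℝ E / 2 : ℝ)) : ℝ)
  simp_rw [← cexp_mul_stdGaussianPDF, inner_zero_right] at h
  simpa using h.re

lemma stdGaussian_eq_withDensity :
    stdGaussian E = volume.withDensity fun x => ENNReal.ofReal (stdGaussianPDF x) := by
  have := isFiniteMeasure_withDensity_ofReal (integrable_stdGaussianPDF (E := E)).2
  refine Measure.ext_of_charFun (funext fun t => ?_)
  rw [charFun_stdGaussian, charFun_apply, integral_withDensity_eq_integral_toReal_smul
    (by fun_prop) (by simp), ← integral_stdGaussianPDF_smul_cexp t]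
  simp_rw [ENNReal.toReal_ofReal (stdGaussianPDF_nonneg _)]

-- The preimage and its reflection have the same measure, and averaging the two densities is where
-- the factor `cosh ⟪x, y⟫ ≥ 1` appears.
lemma exp_neg_mul_stdGaussian_le_preimage_sub {K : Set E} (hK : MeasurableSet K)
    (hsymm : ∀ x ∈ K, -x ∈ K) (y : E) :
    Real.exp (-‖y‖ ^ 2 / 2) * (stdGaussian E).real K ≤
      (stdGaussian E).real ((fun x => x - y) ⁻¹' K) := by
  have hneg : Neg.neg ⁻¹' K = K :=
    Set.Subset.antisymm (fun x hx => neg_neg x ▸ hsymm _ hx) hsymm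
  have hreal {A : Set E} (hA : MeasurableSet A) :
      (stdGaussian E).real A = ∫ x in A, stdGaussianPDF x := by
    rw [stdGaussian_eq_withDensity, measureReal_def, withDensity_apply _ hA,
      integral_eq_lintegral_of_nonneg_ae (Filter.Eventually.of_forall stdGaussianPDF_nonneg)
        (by fun_prop)]
  have hshift : (stdGaussian E).real ((fun x => x - y) ⁻¹' K) =
      ∫ x in K, stdGaussianPDF (x + y) := by
    rw [hreal (measurable_sub_const y hK),
      ← (measurePreserving_sub_right volume y).setIntegral_preimage_emb
        (measurableEmbedding_subRight y) fun x => stdGaussianPDF (x + y)]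
    simp_rw [sub_add_cancel]
  have hreflect : ∫ x in K, stdGaussianPDF (x + y) = ∫ x in K, stdGaussianPDF (-x + y) := by
    rw [← (Measure.measurePreserving_neg volume).setIntegral_preimage_emb
      (MeasurableEquiv.neg E).measurableEmbedding, hneg]
  have hint : Integrable fun x : E => stdGaussianPDF (x + y) :=
    integrable_stdGaussianPDF.comp_add_right y
  have hint' : Integrable fun x : E => stdGaussianPDF (-x + y) := hint.comp_neg
  have hsum : 2 * (Real.exp (-‖y‖ ^ 2 / 2) * (stdGaussian E).real K) ≤
      2 * (stdGaussian E).real ((fun x => x - y) ⁻¹' K) :=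
    calc 2 * (Real.exp (-‖y‖ ^ 2 / 2) * (stdGaussian E).real K)
        = ∫ x in K, 2 * (Real.exp (-‖y‖ ^ 2 / 2) * stdGaussianPDF x) := by
          rw [integral_const_mul, integral_const_mul, hreal hK]
      _ ≤ ∫ x in K, (stdGaussianPDF (x + y) + stdGaussianPDF (-x + y)) :=
          integral_mono ((integrable_stdGaussianPDF.const_mul _).const_mul _).restrict
            (hint.add hint').restrict fun x => exp_neg_mul_stdGaussianPDF_le x y
      _ = 2 * (stdGaussian E).real ((fun x => x - y) ⁻¹' K) := by
          rw [integral_add hint.restrict hint'.restrict, ← hreflect, hshift, two_mul]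
  linarith

lemma map_inner_stdGaussian (u : E) :
    (stdGaussian E).map (fun x => ⟪u, x⟫_ℝ) = gaussianReal 0 (‖u‖₊ ^ 2) := by
  have h := IsGaussian.map_eq_gaussianReal (μ := stdGaussian E) (innerSL ℝ u)
  rw [integral_strongDual_stdGaussian, variance_dual_stdGaussian, innerSL_apply_norm] at h
  convert! h using 2
  rw [Real.toNNReal_pow (norm_nonneg u), norm_toNNReal]

lemma hasSubgaussianMGF_inner_stdGaussian {u : E} {c : ℝ≥0} (hu : ‖u‖₊ ^ 2 ≤ c) :
    HasSubgaussianMGF (fun x => ⟪u, x⟫_ℝ) c (stdGaussian E) where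
  integrable_exp_mul t := by
    have h := integrable_exp_mul_gaussianReal (μ := 0) (v := ‖u‖₊ ^ 2) t
    rw [← map_inner_stdGaussian, integrable_map_measure (by fun_prop) (by fun_prop)] at h
    exact h
  mgf_le t := by
    rw [mgf_gaussianReal (map_inner_stdGaussian u), zero_mul, zero_add]
    gcongr

end Gaussian

section DualSudakov

/-- `T` is covered by at most `n` translates of `B` whose centres belong to `T`. -/
def IsCoveredBy {E : Type*} [AddCommGroup E] (T : Finset E) (n : ℝ) (B : Set E) : Prop :=
  ∃ F ⊆ T, (F.card : ℝ) ≤ n ∧ ∀ a ∈ T, ∃ f ∈ F, a - f ∈ B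

lemma IsCoveredBy.mono {E : Type*} [AddCommGroup E] {T : Finset E} {n n' : ℝ} {B : Set E}
    (h : IsCoveredBy T n B) (hn : n ≤ n') : IsCoveredBy T n' B :=
  let ⟨F, hF, hcard, hcov⟩ := h
  ⟨F, hF, hcard.trans hn, hcov⟩

lemma IsCoveredBy.of_forall_sub_mem {E : Type*} [AddCommGroup E] {T : Finset E} {n : ℝ}
    {B : Set E} (hT : T.Nonempty) (hn : 1 ≤ n) (h : ∀ a ∈ T, ∀ b ∈ T, a - b ∈ B) :
    IsCoveredBy T n B :=
  let ⟨b, hb⟩ := hT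
  ⟨{b}, by simpa using hb, by simpa using hn, fun a ha => ⟨b, by simp, h a ha b hb⟩⟩

lemma mem_of_two_mul_smul_eq_sub {E : Type*} [AddCommGroup E] [Module ℝ E] {B : Set E}
    (hB : Convex ℝ B) (hsymm : ∀ x ∈ B, -x ∈ B) {t : ℝ} (ht : 0 < t) {d x y : E}
    (hx : x ∈ t • B) (hy : y ∈ t • B) (hd : (2 * t) • d = x - y) : d ∈ B := by
  obtain ⟨b, hb, rfl⟩ := hx
  obtain ⟨c, hc, rfl⟩ := hy
  have hmid : d = (1 / 2 : ℝ) • b + (1 / 2 : ℝ) • -c := by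
    refine smul_right_injective E (mul_pos two_pos ht).ne' (hd.trans ?_)
    module
  exact hmid ▸ hB hb (hsymm c hc) (by norm_num) (by norm_num) (by norm_num)

variable {E : Type*} [NormedAddCommGroup E] [InnerProductSpace ℝ E] [FiniteDimensional ℝ E]
  [MeasurableSpace E] [BorelSpace E]

lemma card_le_of_pairwiseDisjoint_preimage_sub {F : Finset E} {c : E → E} {R : ℝ} {K : Set E}
    (hK : MeasurableSet K) (hsymm : ∀ x ∈ K, -x ∈ K) (hhalf : 1 / 2 ≤ (stdGaussian E).real K)
    (hc : ∀ f ∈ F, ‖c f‖ ≤ R)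
    (hF : (F : Set E).PairwiseDisjoint fun f => (fun x => x - c f) ⁻¹' K) :
    (F.card : ℝ) ≤ 2 * Real.exp (R ^ 2 / 2) := by
  have hlower (f : E) (hf : f ∈ F) :
      Real.exp (-R ^ 2 / 2) * (1 / 2) ≤ (stdGaussian E).real ((fun x => x - c f) ⁻¹' K) :=
    calc Real.exp (-R ^ 2 / 2) * (1 / 2)
        ≤ Real.exp (-‖c f‖ ^ 2 / 2) * (stdGaussian E).real K := by gcongr; exact hc f hf
      _ ≤ _ := exp_neg_mul_stdGaussian_le_preimage_sub hK hsymm _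
  have hsum : F.card • (Real.exp (-R ^ 2 / 2) * (1 / 2)) ≤ 1 :=
    calc F.card • (Real.exp (-R ^ 2 / 2) * (1 / 2))
        ≤ ∑ f ∈ F, (stdGaussian E).real ((fun x => x - c f) ⁻¹' K) :=
          Finset.card_nsmul_le_sum _ _ _ hlower
      _ = (stdGaussian E).real (⋃ f ∈ F, (fun x => x - c f) ⁻¹' K) :=
          (measureReal_biUnion_finset hF fun f _ => measurable_sub_const (c f) hK).symm
      _ ≤ 1 := measureReal_le_one
  rw [nsmul_eq_mul, neg_div, Real.exp_neg, ← mul_assoc, ← div_eq_mul_inv, mul_one_div,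
    div_div, div_le_one (by positivity)] at hsum
  linarith

-- A maximal family of points whose translates of `t • B` by `(2 * t) • (f - a₀)` are disjoint is
-- a cover.
open Classical in
lemma isCoveredBy_of_half_le_stdGaussian {T : Finset E} {a₀ : E} {ρ t : ℝ} {B : Set E}
    (ht : 0 < t) (hT : ∀ a ∈ T, ‖a - a₀‖ ≤ ρ) (hB : MeasurableSet B) (hconv : Convex ℝ B)
    (hsymm : ∀ x ∈ B, -x ∈ B) (hhalf : 1 / 2 ≤ (stdGaussian E).real (t • B)) :
    IsCoveredBy T (2 * Real.exp (2 * t ^ 2 * ρ ^ 2)) B := by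
  set S : E → Set E := fun f => (fun x => x - (2 * t) • (f - a₀)) ⁻¹' (t • B)
  have hBne : B.Nonempty := by
    by_contra! hempty
    norm_num [hempty] at hhalf
  have hzero : (0 : E) ∈ B := by
    obtain ⟨x, hx⟩ := hBne
    exact mem_of_two_mul_smul_eq_sub hconv hsymm ht (Set.smul_mem_smul_set hx)
      (Set.smul_mem_smul_set hx) (by simp)
  have hsymm' : ∀ x ∈ t • B, -x ∈ t • B := by
    rintro _ ⟨b, hb, rfl⟩
    exact ⟨-b, hsymm b hb, smul_neg t b⟩
  obtain ⟨F, hF, hmax⟩ := Finset.exists_max_image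
    (T.powerset.filter fun F : Finset E => (F : Set E).PairwiseDisjoint S) Finset.card ⟨∅, by simp⟩
  rw [Finset.mem_filter, Finset.mem_powerset] at hF
  refine ⟨F, hF.1, ?_, fun a ha => ?_⟩
  · convert card_le_of_pairwiseDisjoint_preimage_sub (R := 2 * t * ρ)
      (hB.const_smul₀ t) hsymm' hhalf (fun f hf => ?_) hF.2 using 3
    · ring
    · rw [norm_smul, Real.norm_of_nonneg (by positivity)]
      gcongr
      exact hT f (hF.1 hf)
  · by_contra! hfar
    have haF : a ∉ F := fun h => hfar a h (by simpa using hzero)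
    have hdisj : ((insert a F : Finset E) : Set E).PairwiseDisjoint S := by
      rw [Finset.coe_insert]
      refine hF.2.insert fun f hf _ => Set.disjoint_left.2 fun x hxa hxf => hfar f hf ?_
      refine mem_of_two_mul_smul_eq_sub hconv hsymm ht hxf hxa ?_
      module
    have hle := hmax (insert a F) (Finset.mem_filter.2
      ⟨Finset.mem_powerset.2 (Finset.insert_subset ha hF.1), hdisj⟩)
    rw [Finset.card_insert_of_notMem haF] at hle
    omega

open Classical in
lemma IsCoveredBy.refine {T : Finset E} {n : ℝ} {B B' : Set E} (hcov : IsCoveredBy T n B)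
    {ρ t : ℝ} (hρ : ∀ a ∈ T, ∀ b ∈ T, a - b ∈ B → ‖a - b‖ ≤ ρ) (ht : 0 < t)
    (hB' : MeasurableSet B') (hconv : Convex ℝ B') (hsymm : ∀ x ∈ B', -x ∈ B')
    (hhalf : 1 / 2 ≤ (stdGaussian E).real (t • B')) :
    IsCoveredBy T (n * (2 * Real.exp (2 * t ^ 2 * ρ ^ 2))) B' := by
  obtain ⟨F, hFT, hFn, hF⟩ := hcov
  have hpiece (f : E) (hf : f ∈ F) :
      IsCoveredBy (T.filter fun a => a - f ∈ B) (2 * Real.exp (2 * t ^ 2 * ρ ^ 2)) B' :=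
    isCoveredBy_of_half_le_stdGaussian (a₀ := f) ht
      (fun a ha => hρ a (Finset.mem_filter.1 ha).1 f (hFT hf) (Finset.mem_filter.1 ha).2)
      hB' hconv hsymm hhalf
  choose! G hGsub hGcard hG using hpiece
  refine ⟨F.biUnion G, ?_, ?_, fun a ha => ?_⟩
  · exact Finset.biUnion_subset.2 fun f hf => (hGsub f hf).trans (Finset.filter_subset _ _)
  · calc ((F.biUnion G).card : ℝ) ≤ ∑ f ∈ F, ((G f).card : ℝ) := by
          exact_mod_cast Finset.card_biUnion_le
      _ ≤ F.card • (2 * Real.exp (2 * t ^ 2 * ρ ^ 2)) := Finset.sum_le_card_nsmul _ _ _ hGcard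
      _ ≤ n * (2 * Real.exp (2 * t ^ 2 * ρ ^ 2)) := by
          rw [nsmul_eq_mul]
          gcongr
  · obtain ⟨f, hf, haf⟩ := hF a ha
    obtain ⟨g, hg, hag⟩ := hG f hf a (Finset.mem_filter.2 ⟨ha, haf⟩)
    exact ⟨g, Finset.mem_biUnion.2 ⟨f, hf, hg⟩, hag⟩

lemma two_mul_exp_le_exp_one_add (x : ℝ) : 2 * Real.exp x ≤ Real.exp (1 + x) := by
  rw [Real.exp_add]
  gcongr
  linarith [Real.add_one_le_exp (1 : ℝ)]

lemma integral_inner_sq_stdGaussian (u : E) : ∫ x, ⟪u, x⟫_ℝ ^ 2 ∂stdGaussian E = ‖u‖ ^ 2 := by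
  have h := covarianceBilin_apply (μ := stdGaussian E) (IsGaussian.memLp_id _ 2 (by simp)) u u
  rw [covarianceBilin_stdGaussian, innerSL_apply_apply, real_inner_self_eq_norm_sq] at h
  simpa [sq] using h.symm

lemma integrable_inner_sq_stdGaussian (u : E) :
    Integrable (fun x => ⟪u, x⟫_ℝ ^ 2) (stdGaussian E) :=
  integrable_pow_of_hasSubgaussianMGF (hasSubgaussianMGF_inner_stdGaussian le_rfl) 2

lemma half_le_stdGaussian_norm_sq_le [Nontrivial E] :
    1 / 2 ≤ (stdGaussian E).real {x | ‖x‖ ^ 2 ≤ 2 * Module.finrank ℝ E} := by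
  have hsq (x : E) : ‖x‖ ^ 2 = ∑ i, ⟪stdOrthonormalBasis ℝ E i, x⟫_ℝ ^ 2 := by
    simp [← (stdOrthonormalBasis ℝ E).sum_sq_norm_inner_right x]
  have hint : Integrable (fun x : E => ‖x‖ ^ 2) (stdGaussian E) := by
    simp_rw [hsq]
    exact integrable_finsetSum _ fun i _ => integrable_inner_sq_stdGaussian _
  refine half_le_measureReal_of_integral_le (by fun_prop) (fun x => sq_nonneg ‖x‖) hint
    (Nat.cast_pos.2 Module.finrank_pos) ?_
  simp_rw [hsq]
  rw [integral_finsetSum _ fun i _ => integrable_inner_sq_stdGaussian _]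
  simp [integral_inner_sq_stdGaussian]

lemma isCoveredBy_closedBall_div_two_pow [Nontrivial E] {T : Finset E} (hT : T.Nonempty) {ρ : ℝ}
    (hρ : 0 < ρ) (h : ∀ a ∈ T, ∀ b ∈ T, ‖a - b‖ ≤ ρ) (i : ℕ) :
    IsCoveredBy T (Real.exp (17 * Module.finrank ℝ E * i)) (Metric.closedBall 0 (ρ / 2 ^ i)) := by
  set n := (Module.finrank ℝ E : ℝ)
  have hn1 : 1 ≤ n := Nat.one_le_cast.2 Module.finrank_pos
  induction i with
  | zero => exact .of_forall_sub_mem hT (by simp) fun a ha b hb => by simpa using h a ha b hb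
  | succ i ih =>
    set σ := ρ / 2 ^ (i + 1) with hσ
    have hσ0 : 0 < σ := by positivity
    have hsub : {x : E | ‖x‖ ^ 2 ≤ 2 * n} ⊆ (√(2 * n) / σ) • Metric.closedBall (0 : E) σ := by
      intro x hx
      rw [smul_closedBall' (by positivity), smul_zero, Real.norm_of_nonneg (by positivity),
        div_mul_cancel₀ _ hσ0.ne', mem_closedBall_zero_iff]
      exact Real.le_sqrt_of_sq_le hx
    refine (ih.refine (fun a _ b _ hab => mem_closedBall_zero_iff.1 hab)
      (t := √(2 * n) / σ) (by positivity) measurableSet_closedBall (convex_closedBall 0 σ)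
      (fun x hx => by simpa using hx)
      (half_le_stdGaussian_norm_sq_le.trans (measureReal_mono hsub))).mono ?_
    have hexponent : 2 * (√(2 * n) / σ) ^ 2 * (ρ / 2 ^ i) ^ 2 = 16 * n := by
      rw [div_pow, Real.sq_sqrt (by positivity), hσ, pow_succ]
      field_simp
      ring
    rw [hexponent]
    calc _ ≤ Real.exp (17 * n * i) * Real.exp (1 + 16 * n) := by
          gcongr
          exact two_mul_exp_le_exp_one_add _
      _ ≤ Real.exp (17 * n * (i + 1 : ℕ)) := by
          rw [← Real.exp_add, Real.exp_le_exp]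
          push_cast
          linarith

end DualSudakov

section ParsevalFrame

variable {Ω E : Type*} [MeasurableSpace Ω] [NormedAddCommGroup E] [InnerProductSpace ℝ E]

/-- A measurable field `u` of vectors of norm at most `h` which is a continuous Parseval frame:
`a ↦ ⟪u ·, a⟫` is an isometry of `E` into `L²(μ)`. It models a space of functions whose sup-norm is
at most `h` times the `L²(μ)` norm. -/
structure IsBoundedParsevalFrame [MeasurableSpace E] (μ : Measure Ω) (u : Ω → E) (h : ℝ) :
    Prop where
  bound_pos : 0 < h
  measurable : Measurable u
  norm_le : ∀ y, ‖u y‖ ≤ h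
  integral_inner_sq : ∀ a, ∫ y, ⟪u y, a⟫_ℝ ^ 2 ∂μ = ‖a‖ ^ 2

/-- The ball of radius `σ` of `E` in the norm `a ↦ ‖⟪u ·, a⟫‖_{L^{2k}(μ)}`. -/
def momentBall (μ : Measure Ω) (u : Ω → E) (k : ℕ) (σ : ℝ) : Set E :=
  {a | ∫ y, ⟪u y, a⟫_ℝ ^ (2 * k) ∂μ ≤ σ ^ (2 * k)}

lemma sq_le_rpow_mul_abs_rpow {s t p : ℝ} (hp : p ≤ 2) (ht : |t| ≤ s) :
    t ^ 2 ≤ s ^ (2 - p) * |t| ^ p :=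
  calc t ^ 2 = |t| ^ (2 - p) * |t| ^ p := by
        rw [← Real.rpow_add' (abs_nonneg t) (by norm_num), sub_add_cancel, Real.rpow_two, sq_abs]
    _ ≤ s ^ (2 - p) * |t| ^ p := by gcongr

lemma sq_le_rpow_mul_add_inv_pow_mul {A p : ℝ} (hA : 0 < A) (hp : p ≤ 2) {k : ℕ} (hk : 1 ≤ k)
    (t : ℝ) : t ^ 2 ≤ A ^ (2 - p) * |t| ^ p + (A ^ (2 * k - 2))⁻¹ * t ^ (2 * k) := by
  rcases le_total |t| A with ht | ht
  · exact (sq_le_rpow_mul_abs_rpow hp ht).trans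
      (le_add_of_nonneg_right (mul_nonneg (by positivity) ((even_two_mul k).pow_nonneg t)))
  · refine le_add_of_nonneg_of_le (by positivity) ?_
    have hsplit : t ^ (2 * k) = t ^ 2 * |t| ^ (2 * k - 2) := by
      rw [← (even_two_mul k).pow_abs, ← sq_abs, ← pow_add]
      congr 1
      omega
    rw [inv_mul_eq_div, le_div_iff₀ (by positivity), hsplit]
    gcongr

variable {μ : Measure Ω} {u : Ω → E} {h : ℝ} {a : E}

lemma neg_mem_momentBall {k : ℕ} {σ : ℝ} (ha : a ∈ momentBall μ u k σ) :
    -a ∈ momentBall μ u k σ := by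
  simpa only [momentBall, Set.mem_ofPred_eq, inner_neg_right, (even_two_mul k).neg_pow] using ha

namespace IsBoundedParsevalFrame

variable [MeasurableSpace E]

lemma abs_inner_le (hu : IsBoundedParsevalFrame μ u h) (a : E) (y : Ω) :
    |⟪u y, a⟫_ℝ| ≤ h * ‖a‖ :=
  (abs_real_inner_le_norm _ _).trans (by gcongr; exact hu.norm_le y)

variable [BorelSpace E] [FiniteDimensional ℝ E]

lemma hasSubgaussianMGF_inner (hu : IsBoundedParsevalFrame μ u h) (y : Ω) :
    HasSubgaussianMGF (fun x => ⟪u y, x⟫_ℝ) (h.toNNReal ^ 2) (stdGaussian E) :=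
  hasSubgaussianMGF_inner_stdGaussian
    (pow_le_pow_left₀ zero_le (NNReal.le_toNNReal_of_coe_le (hu.norm_le y)) 2)

lemma measurable_inner (hu : IsBoundedParsevalFrame μ u h) (a : E) :
    Measurable fun y => ⟪u y, a⟫_ℝ :=
  hu.measurable.inner_const

variable [IsProbabilityMeasure μ] {p M D : ℝ}

lemma integrable_inner_pow (hu : IsBoundedParsevalFrame μ u h) (a : E) (n : ℕ) :
    Integrable (fun y => ⟪u y, a⟫_ℝ ^ n) μ := by
  refine .of_bound ((hu.measurable_inner a).pow_const n).aestronglyMeasurable ((h * ‖a‖) ^ n)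
    (.of_forall fun y => ?_)
  rw [norm_pow]
  gcongr
  exact hu.abs_inner_le a y

lemma integrable_abs_inner_rpow (hu : IsBoundedParsevalFrame μ u h) (hp : 0 ≤ p) (a : E) :
    Integrable (fun y => |⟪u y, a⟫_ℝ| ^ p) μ := by
  refine .of_bound ((hu.measurable_inner a).abs.pow_const p).aestronglyMeasurable ((h * ‖a‖) ^ p)
    (.of_forall fun y => ?_)
  rw [Real.norm_of_nonneg (by positivity)]
  gcongr
  exact hu.abs_inner_le a y

lemma bound_mul_norm_le (hu : IsBoundedParsevalFrame μ u h) (hp : 0 < p) (hp2 : p ≤ 2)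
    (hD : 0 ≤ D) (hDM : D ^ p = M * h ^ 2) (ha : ∫ y, |⟪u y, a⟫_ℝ| ^ p ∂μ ≤ M) :
    h * ‖a‖ ≤ D := by
  rcases eq_or_ne a 0 with rfl | ha0
  · simpa using hD
  set s := h * ‖a‖ with hs
  have hs0 : 0 < s := mul_pos hu.bound_pos (norm_pos_iff.2 ha0)
  have hnorm : ‖a‖ ^ 2 ≤ s ^ (2 - p) * M :=
    calc ‖a‖ ^ 2 = ∫ y, ⟪u y, a⟫_ℝ ^ 2 ∂μ := (hu.integral_inner_sq a).symm
      _ ≤ ∫ y, s ^ (2 - p) * |⟪u y, a⟫_ℝ| ^ p ∂μ :=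
          integral_mono (hu.integrable_inner_pow a 2)
            ((hu.integrable_abs_inner_rpow hp.le a).const_mul _)
            fun y => sq_le_rpow_mul_abs_rpow hp2 (hu.abs_inner_le a y)
      _ = s ^ (2 - p) * ∫ y, |⟪u y, a⟫_ℝ| ^ p ∂μ := integral_const_mul _ _
      _ ≤ s ^ (2 - p) * M := by gcongr
  have hrpow : s ^ (2 - p) * s ^ p ≤ s ^ (2 - p) * D ^ p :=
    calc s ^ (2 - p) * s ^ p = ‖a‖ ^ 2 * h ^ 2 := by
          rw [← Real.rpow_add hs0, sub_add_cancel, Real.rpow_two, hs]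
          ring
      _ ≤ s ^ (2 - p) * M * h ^ 2 := by gcongr
      _ = s ^ (2 - p) * D ^ p := by rw [hDM, mul_assoc]
  exact (Real.rpow_le_rpow_iff hs0.le hD hp).1 (le_of_mul_le_mul_left hrpow (by positivity))

lemma mem_momentBall_of_bound_mul_norm_le (hu : IsBoundedParsevalFrame μ u h) {k : ℕ} {σ : ℝ}
    (ha : h * ‖a‖ ≤ σ) : a ∈ momentBall μ u k σ :=
  calc ∫ y, ⟪u y, a⟫_ℝ ^ (2 * k) ∂μ ≤ ∫ _, σ ^ (2 * k) ∂μ := by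
        refine integral_mono (hu.integrable_inner_pow a _) (integrable_const _) fun y => ?_
        rw [← (even_two_mul k).pow_abs]
        gcongr
        exact (hu.abs_inner_le a y).trans ha
    _ = σ ^ (2 * k) := by simp

lemma norm_sq_le_of_mem_momentBall (hu : IsBoundedParsevalFrame μ u h) (hp : 0 ≤ p) (hp2 : p ≤ 2)
    (ha : ∫ y, |⟪u y, a⟫_ℝ| ^ p ∂μ ≤ M) {A σ : ℝ} (hA : 0 < A) {k : ℕ} (hk : 1 ≤ k)
    (hmem : a ∈ momentBall μ u k σ) :
    ‖a‖ ^ 2 ≤ A ^ (2 - p) * M + (A ^ (2 * k - 2))⁻¹ * σ ^ (2 * k) := by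
  have hint₁ := (hu.integrable_abs_inner_rpow hp a).const_mul (A ^ (2 - p))
  have hint₂ := (hu.integrable_inner_pow a (2 * k)).const_mul (A ^ (2 * k - 2))⁻¹
  calc ‖a‖ ^ 2 = ∫ y, ⟪u y, a⟫_ℝ ^ 2 ∂μ := (hu.integral_inner_sq a).symm
    _ ≤ ∫ y, (A ^ (2 - p) * |⟪u y, a⟫_ℝ| ^ p
          + (A ^ (2 * k - 2))⁻¹ * ⟪u y, a⟫_ℝ ^ (2 * k)) ∂μ :=
        integral_mono (hu.integrable_inner_pow a 2) (hint₁.add hint₂)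
          fun y => sq_le_rpow_mul_add_inv_pow_mul hA hp2 hk _
    _ = A ^ (2 - p) * ∫ y, |⟪u y, a⟫_ℝ| ^ p ∂μ
          + (A ^ (2 * k - 2))⁻¹ * ∫ y, ⟪u y, a⟫_ℝ ^ (2 * k) ∂μ := by
        rw [integral_add hint₁ hint₂, integral_const_mul, integral_const_mul]
    _ ≤ A ^ (2 - p) * M + (A ^ (2 * k - 2))⁻¹ * σ ^ (2 * k) := by
        gcongr
        exact hmem

-- The truncation level is `A = 4σ`: then `h ^ 2 ≤ 4 ^ (2 * k - 2)` absorbs the moment term.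
lemma sq_bound_mul_norm_sq_le (hu : IsBoundedParsevalFrame μ u h) (hp : 1 ≤ p) (hp2 : p ≤ 2)
    (hD : 0 < D) (hM : 0 ≤ M) (hDM : D ^ p = M * h ^ 2) (ha : ∫ y, |⟪u y, a⟫_ℝ| ^ p ∂μ ≤ M)
    {k : ℕ} (hk : 1 ≤ k) (hhk : h ^ 2 ≤ 4 ^ (2 * k - 2)) (j : ℕ)
    (hmem : a ∈ momentBall μ u k (D / 2 ^ j)) :
    h ^ 2 * ‖a‖ ^ 2 ≤ 5 * (D / 2 ^ j) ^ 2 * ((2 : ℝ) ^ p) ^ j := by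
  set σ := D / 2 ^ j with hσ
  have hσ0 : 0 < σ := by positivity
  have hMσ : M * h ^ 2 = σ ^ p * ((2 : ℝ) ^ p) ^ j := by
    rw [← hDM, ← Real.rpow_natCast _ j, ← Real.rpow_mul zero_le_two, mul_comm p,
      Real.rpow_mul zero_le_two, Real.rpow_natCast, ← Real.mul_rpow hσ0.le (by positivity), hσ,
      div_mul_cancel₀ _ (by positivity)]
  have hlow : h ^ 2 * ((4 * σ) ^ (2 - p) * M) ≤ 4 * σ ^ 2 * ((2 : ℝ) ^ p) ^ j :=
    calc h ^ 2 * ((4 * σ) ^ (2 - p) * M) = 4 ^ (2 - p) * σ ^ (2 - p) * (M * h ^ 2) := by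
          rw [Real.mul_rpow zero_le_four hσ0.le]
          ring
      _ ≤ 4 ^ (1 : ℝ) * σ ^ (2 - p) * (M * h ^ 2) := by
          gcongr
          · norm_num
          · linarith
      _ = 4 * (σ ^ (2 - p) * σ ^ p) * ((2 : ℝ) ^ p) ^ j := by
          rw [hMσ, Real.rpow_one]
          ring
      _ = 4 * σ ^ 2 * ((2 : ℝ) ^ p) ^ j := by
          rw [← Real.rpow_add hσ0, sub_add_cancel, Real.rpow_two]
  have hhigh : h ^ 2 * (((4 * σ) ^ (2 * k - 2))⁻¹ * σ ^ (2 * k)) ≤ σ ^ 2 * ((2 : ℝ) ^ p) ^ j :=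
    calc h ^ 2 * (((4 * σ) ^ (2 * k - 2))⁻¹ * σ ^ (2 * k))
        = h ^ 2 / 4 ^ (2 * k - 2) * σ ^ 2 := by
          rw [← Nat.sub_add_cancel (show 2 ≤ 2 * k by omega), pow_add σ, Nat.add_sub_cancel,
            mul_pow]
          field_simp
      _ ≤ 1 * σ ^ 2 := by
          gcongr
          exact div_le_one_of_le₀ hhk (by positivity)
      _ = σ ^ 2 * 1 := by ring
      _ ≤ σ ^ 2 * ((2 : ℝ) ^ p) ^ j := by
          gcongr
          exact one_le_pow₀ (Real.one_le_rpow one_le_two (by linarith))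
  calc h ^ 2 * ‖a‖ ^ 2
      ≤ h ^ 2 * ((4 * σ) ^ (2 - p) * M + ((4 * σ) ^ (2 * k - 2))⁻¹ * σ ^ (2 * k)) := by
        gcongr
        exact hu.norm_sq_le_of_mem_momentBall (by linarith) hp2 ha (by positivity) hk hmem
    _ ≤ 5 * σ ^ 2 * ((2 : ℝ) ^ p) ^ j := by linarith

lemma norm_le_of_mem_momentBall (hu : IsBoundedParsevalFrame μ u h) (hp : 1 ≤ p) (hp2 : p ≤ 2)
    (hD : 0 < D) (hM : 0 ≤ M) (hDM : D ^ p = M * h ^ 2) (ha : ∫ y, |⟪u y, a⟫_ℝ| ^ p ∂μ ≤ M)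
    {k : ℕ} (hk : 1 ≤ k) (hhk : h ^ 2 ≤ 4 ^ (2 * k - 2)) (j : ℕ)
    (hmem : a ∈ momentBall μ u k (D / 2 ^ j)) :
    ‖a‖ ≤ √(5 * (D / 2 ^ j) ^ 2 * ((2 : ℝ) ^ p) ^ j) / h := by
  rw [le_div_iff₀' hu.bound_pos]
  refine Real.le_sqrt_of_sq_le ?_
  rw [mul_pow]
  exact hu.sq_bound_mul_norm_sq_le hp hp2 hD hM hDM ha hk hhk j hmem

lemma convex_momentBall (hu : IsBoundedParsevalFrame μ u h) (k : ℕ) (σ : ℝ) :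
    Convex ℝ (momentBall μ u k σ) := by
  intro a ha b hb s t hs ht hst
  have hint₁ := (hu.integrable_inner_pow a (2 * k)).const_mul s
  have hint₂ := (hu.integrable_inner_pow b (2 * k)).const_mul t
  calc ∫ y, ⟪u y, s • a + t • b⟫_ℝ ^ (2 * k) ∂μ
      ≤ ∫ y, (s * ⟪u y, a⟫_ℝ ^ (2 * k) + t * ⟪u y, b⟫_ℝ ^ (2 * k)) ∂μ := by
        refine integral_mono (hu.integrable_inner_pow _ _) (hint₁.add hint₂) fun y => ?_
        simpa only [inner_add_right, inner_smul_right, smul_eq_mul] using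
          (even_two_mul k).convexOn_pow.2 (Set.mem_univ ⟪u y, a⟫_ℝ) (Set.mem_univ ⟪u y, b⟫_ℝ)
            hs ht hst
    _ = s * ∫ y, ⟪u y, a⟫_ℝ ^ (2 * k) ∂μ + t * ∫ y, ⟪u y, b⟫_ℝ ^ (2 * k) ∂μ := by
        rw [integral_add hint₁ hint₂, integral_const_mul, integral_const_mul]
    _ ≤ s * σ ^ (2 * k) + t * σ ^ (2 * k) := by
        gcongr
        exacts [ha, hb]
    _ = σ ^ (2 * k) := by rw [← add_mul, hst, one_mul]

lemma measurable_integral_inner_pow (hu : IsBoundedParsevalFrame μ u h) (n : ℕ) :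
    Measurable fun a => ∫ y, ⟪u y, a⟫_ℝ ^ n ∂μ :=
  (StronglyMeasurable.integral_prod_right' (f := fun z : E × Ω => ⟪u z.2, z.1⟫_ℝ ^ n)
    (((hu.measurable.comp measurable_snd).inner measurable_fst).pow_const n).stronglyMeasurable
    ).measurable

lemma measurableSet_momentBall (hu : IsBoundedParsevalFrame μ u h) (k : ℕ) (σ : ℝ) :
    MeasurableSet (momentBall μ u k σ) :=
  measurableSet_le (hu.measurable_integral_inner_pow (2 * k)) measurable_const

lemma integrable_inner_pow_prod (hu : IsBoundedParsevalFrame μ u h) (n : ℕ) :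
    Integrable (fun z : E × Ω => ⟪u z.2, z.1⟫_ℝ ^ n) ((stdGaussian E).prod μ) := by
  have hnorm : Integrable (fun x : E => ‖x‖ ^ n) (stdGaussian E) :=
    (IsGaussian.memLp_id (stdGaussian E) n (by simp)).integrable_norm_pow'
  refine ((hnorm.const_mul (h ^ n)).comp_fst μ).mono'
    (((hu.measurable.comp measurable_snd).inner measurable_fst).pow_const n).aestronglyMeasurable
    (.of_forall fun z => ?_)
  rw [norm_pow, ← mul_pow]
  gcongr
  exact hu.abs_inner_le z.1 z.2

lemma integral_integral_inner_pow_le (hu : IsBoundedParsevalFrame μ u h) {k : ℕ} (hk : 0 < k) :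
    ∫ x, ∫ y, ⟪u y, x⟫_ℝ ^ (2 * k) ∂μ ∂stdGaussian E ≤ 2 * (6 * k * h ^ 2) ^ k := by
  have hc : ((h.toNNReal ^ 2 : ℝ≥0) : ℝ) = h ^ 2 := by
    rw [NNReal.coe_pow, Real.coe_toNNReal _ hu.bound_pos.le]
  rw [integral_integral_swap (hu.integrable_inner_pow_prod (2 * k))]
  calc ∫ y, ∫ x, ⟪u y, x⟫_ℝ ^ (2 * k) ∂stdGaussian E ∂μ ≤ ∫ _, 2 * (6 * k * h ^ 2) ^ k ∂μ := by
        refine integral_mono (hu.integrable_inner_pow_prod (2 * k)).integral_prod_right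
          (integrable_const _) fun y => ?_
        rw [← hc]
        exact integral_pow_two_mul_le_of_hasSubgaussianMGF
          (pow_pos (Real.toNNReal_pos.2 hu.bound_pos) 2) (hu.hasSubgaussianMGF_inner y) hk
    _ = 2 * (6 * k * h ^ 2) ^ k := by simp

lemma half_le_stdGaussian_smul_momentBall (hu : IsBoundedParsevalFrame μ u h) {k : ℕ}
    (hk : 0 < k) {t σ : ℝ} (ht : 0 < t) (htσ : (t * σ) ^ 2 = 24 * k * h ^ 2) :
    1 / 2 ≤ (stdGaussian E).real (t • momentBall μ u k σ) := by
  have hh := hu.bound_pos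
  refine (half_le_measureReal_of_integral_le (hu.measurable_integral_inner_pow (2 * k))
    (fun x => integral_nonneg fun y => (even_two_mul k).pow_nonneg _)
    (hu.integrable_inner_pow_prod (2 * k)).integral_prod_left (by positivity)
    (hu.integral_integral_inner_pow_le hk)).trans (measureReal_mono fun x hx => ?_)
  rw [Set.mem_smul_set_iff_inv_smul_mem₀ ht.ne']
  have hpow : t ^ (2 * k) * σ ^ (2 * k) = 4 ^ k * (6 * k * h ^ 2) ^ k := by
    rw [← mul_pow, pow_mul, htσ, ← mul_pow]
    congr 1
    ring
  simp only [momentBall, Set.mem_ofPred_eq, inner_smul_right, mul_pow, integral_const_mul]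
  rw [inv_pow, inv_mul_le_iff₀ (by positivity), hpow]
  calc _ ≤ 2 * (2 * (6 * k * h ^ 2) ^ k) := hx
    _ = 4 ^ 1 * (6 * k * h ^ 2) ^ k := by ring
    _ ≤ 4 ^ k * (6 * k * h ^ 2) ^ k := by
        gcongr
        · norm_num
        · exact hk

end IsBoundedParsevalFrame

end ParsevalFrame

section ParsevalFrameCovering

lemma measurableSet_forall_abs_inner_le {ι E : Type*} [Finite ι] [NormedAddCommGroup E]
    [InnerProductSpace ℝ E] [MeasurableSpace E] [OpensMeasurableSpace E] (v : ι → E) (s : ℝ) :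
    MeasurableSet {a | ∀ l, |⟪v l, a⟫_ℝ| ≤ s} := by
  rw [Set.ofPred_forall]
  exact .iInter fun l => (isClosed_le (by fun_prop) continuous_const).measurableSet

lemma convex_forall_abs_inner_le {ι E : Type*} [NormedAddCommGroup E] [InnerProductSpace ℝ E]
    (v : ι → E) (s : ℝ) : Convex ℝ {a | ∀ l, |⟪v l, a⟫_ℝ| ≤ s} := by
  rw [Set.ofPred_forall]
  refine convex_iInter fun l => ?_
  simpa using ((convexOn_univ_norm (E := ℝ)).comp_linearMap (innerₗ E (v l))).convex_le s

variable {Ω E : Type*} [MeasurableSpace Ω] [NormedAddCommGroup E] [InnerProductSpace ℝ E]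
  [MeasurableSpace E] [BorelSpace E] [FiniteDimensional ℝ E] {μ : Measure Ω}
  {u : Ω → E} {h : ℝ}

namespace IsBoundedParsevalFrame

lemma half_le_stdGaussian_smul_forall_abs_inner_le (hu : IsBoundedParsevalFrame μ u h)
    {ι : Type*} [Fintype ι] [Nonempty ι] (x : ι → Ω) {t s : ℝ} (ht : 0 < t) (hs : 0 ≤ s)
    (hts : (t * s) ^ 2 = 2 * h ^ 2 * Real.log (4 * Fintype.card ι)) :
    1 / 2 ≤ (stdGaussian E).real (t • {a | ∀ l, |⟪u (x l), a⟫_ℝ| ≤ s}) := by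
  refine (half_le_measureReal_forall_abs_le (pow_pos (Real.toNNReal_pos.2 hu.bound_pos) 2)
    (fun l => (by fun_prop : Measurable fun z : E => ⟪u (x l), z⟫_ℝ))
    fun l => hu.hasSubgaussianMGF_inner (x l)).trans (measureReal_mono fun z hz => ?_)
  rw [Set.mem_smul_set_iff_inv_smul_mem₀ ht.ne']
  intro l
  rw [inner_smul_right, abs_mul, abs_of_pos (inv_pos.2 ht), inv_mul_le_iff₀ ht]
  refine (hz l).trans_eq ?_
  rw [NNReal.coe_pow, Real.coe_toNNReal _ hu.bound_pos.le, ← hts, Real.sqrt_sq (by positivity)]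

variable [IsProbabilityMeasure μ] {p M D : ℝ} {k : ℕ} {T : Finset E}

lemma isCoveredBy_of_isCoveredBy_momentBall (hu : IsBoundedParsevalFrame μ u h) (hp : 1 ≤ p)
    (hp2 : p ≤ 2) (hD : 0 < D) (hM : 0 ≤ M) (hDM : D ^ p = M * h ^ 2) (hk : 1 ≤ k)
    (hhk : h ^ 2 ≤ 4 ^ (2 * k - 2))
    (hTM : ∀ a ∈ T, ∀ b ∈ T, ∫ y, |⟪u y, a - b⟫_ℝ| ^ p ∂μ ≤ M) {j : ℕ} {e e' t : ℝ} {B : Set E}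
    (hcov : IsCoveredBy T (Real.exp e) (momentBall μ u k (D / 2 ^ j))) (ht : 0 < t)
    (hB : MeasurableSet B) (hconv : Convex ℝ B) (hsymm : ∀ x ∈ B, -x ∈ B)
    (hhalf : 1 / 2 ≤ (stdGaussian E).real (t • B))
    (hte : 10 * t ^ 2 * (D / 2 ^ j) ^ 2 * ((2 : ℝ) ^ p) ^ j ≤ e' * h ^ 2) :
    IsCoveredBy T (Real.exp (e + 1 + e')) B := by
  have hh := hu.bound_pos
  set ρ := √(5 * (D / 2 ^ j) ^ 2 * ((2 : ℝ) ^ p) ^ j) / h with hρ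
  have hρ2 : ρ ^ 2 = 5 * (D / 2 ^ j) ^ 2 * ((2 : ℝ) ^ p) ^ j / h ^ 2 := by
    rw [hρ, div_pow, Real.sq_sqrt (by positivity)]
  have hexponent : 2 * t ^ 2 * ρ ^ 2 ≤ e' := by
    rw [hρ2, ← mul_div_assoc, div_le_iff₀ (by positivity)]
    linarith
  refine (hcov.refine (fun a ha a' ha' hmem =>
      hu.norm_le_of_mem_momentBall hp hp2 hD hM hDM (hTM a ha a' ha') hk hhk j hmem)
    ht hB hconv hsymm hhalf).mono ?_
  calc Real.exp e * (2 * Real.exp (2 * t ^ 2 * ρ ^ 2))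
      ≤ Real.exp e * Real.exp (1 + 2 * t ^ 2 * ρ ^ 2) := by
        gcongr
        exact two_mul_exp_le_exp_one_add _
    _ ≤ Real.exp (e + 1 + e') := by
        rw [← Real.exp_add, Real.exp_le_exp]
        linarith

lemma isCoveredBy_momentBall (hu : IsBoundedParsevalFrame μ u h) (hp : 1 ≤ p) (hp2 : p ≤ 2)
    (hD : 0 < D) (hM : 0 ≤ M) (hDM : D ^ p = M * h ^ 2) (hk : 1 ≤ k)
    (hhk : h ^ 2 ≤ 4 ^ (2 * k - 2)) (hT : T.Nonempty)
    (hTM : ∀ a ∈ T, ∀ b ∈ T, ∫ y, |⟪u y, a - b⟫_ℝ| ^ p ∂μ ≤ M) (j : ℕ) :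
    IsCoveredBy T (Real.exp (961 * k * ((2 : ℝ) ^ p) ^ j)) (momentBall μ u k (D / 2 ^ j)) := by
  have hk1 : (1 : ℝ) ≤ k := Nat.one_le_cast.2 hk
  have hh := hu.bound_pos
  have hb : (2 : ℝ) ≤ 2 ^ p := Real.self_le_rpow_of_one_le one_le_two hp
  induction j with
  | zero =>
    refine .of_forall_sub_mem hT (Real.one_le_exp (by positivity)) fun a ha a' ha' => ?_
    refine hu.mem_momentBall_of_bound_mul_norm_le ?_
    simpa using hu.bound_mul_norm_le (by linarith) hp2 hD.le hDM (hTM a ha a' ha')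
  | succ j ih =>
    set b : ℝ := 2 ^ p
    set σ := D / 2 ^ (j + 1) with hσ
    have hσ0 : 0 < σ := by positivity
    set t := √(24 * k) * h / σ with ht
    have htσ : (t * σ) ^ 2 = 24 * k * h ^ 2 := by
      rw [ht, div_mul_cancel₀ _ hσ0.ne', mul_pow, Real.sq_sqrt (by positivity)]
    have hte : 10 * t ^ 2 * (D / 2 ^ j) ^ 2 * b ^ j = 960 * k * b ^ j * h ^ 2 := by
      rw [show D / 2 ^ j = 2 * σ by rw [hσ, pow_succ]; field_simp]
      linear_combination 40 * b ^ j * htσ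
    have hkb : 1 ≤ k * b ^ j := one_le_mul_of_one_le_of_one_le hk1 (one_le_pow₀ (by linarith))
    refine (hu.isCoveredBy_of_isCoveredBy_momentBall hp hp2 hD hM hDM hk hhk hTM ih
      (by positivity : 0 < t) (hu.measurableSet_momentBall k σ) (hu.convex_momentBall k σ)
      (fun x hx => neg_mem_momentBall hx)
      (hu.half_le_stdGaussian_smul_momentBall hk (by positivity) htσ) hte.le).mono ?_
    rw [Real.exp_le_exp, pow_succ]
    nlinarith

lemma isCoveredBy_forall_abs_inner_le (hu : IsBoundedParsevalFrame μ u h) (hp : 1 ≤ p)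
    (hp2 : p ≤ 2) (hD : 0 < D) (hM : 0 ≤ M) (hDM : D ^ p = M * h ^ 2) (hk : 1 ≤ k)
    (hhk : h ^ 2 ≤ 4 ^ (2 * k - 2)) (hT : T.Nonempty)
    (hTM : ∀ a ∈ T, ∀ b ∈ T, ∫ y, |⟪u y, a - b⟫_ℝ| ^ p ∂μ ≤ M)
    {ι : Type*} [Fintype ι] [Nonempty ι] (x : ι → Ω) {r : ℕ}
    (hr : Real.log (4 * Fintype.card ι) ≤ k * 4 ^ r) (i : ℕ) :
    IsCoveredBy T (Real.exp (982 * k * ((2 : ℝ) ^ p) ^ (i + r)))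
      {a | ∀ l, |⟪u (x l), a⟫_ℝ| ≤ D / 2 ^ i} := by
  have hk1 : (1 : ℝ) ≤ k := Nat.one_le_cast.2 hk
  have hh := hu.bound_pos
  set L := Real.log (4 * Fintype.card ι)
  have hL : 0 < L := Real.log_pos (by
    have : (1 : ℝ) ≤ Fintype.card ι := Nat.one_le_cast.2 Fintype.card_pos
    linarith)
  set s := D / 2 ^ i with hs
  have hs0 : 0 < s := by positivity
  set t := h * √(2 * L) / s with ht
  have hts : (t * s) ^ 2 = 2 * h ^ 2 * L := by
    rw [ht, div_mul_cancel₀ _ hs0.ne', mul_pow, Real.sq_sqrt (by positivity)]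
    ring
  have hte : 10 * t ^ 2 * (D / 2 ^ (i + r)) ^ 2 * ((2 : ℝ) ^ p) ^ (i + r) ≤
      20 * k * ((2 : ℝ) ^ p) ^ (i + r) * h ^ 2 :=
    calc _ = 10 * ((t * s) ^ 2 / 4 ^ r) * ((2 : ℝ) ^ p) ^ (i + r) := by
          rw [hs, pow_add 2, ← div_div, div_pow _ (2 ^ r), ← pow_mul, mul_comm r, pow_mul]
          ring
      _ = 20 * (L / 4 ^ r) * ((2 : ℝ) ^ p) ^ (i + r) * h ^ 2 := by
          rw [hts]
          ring
      _ ≤ _ := by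
          gcongr
          exact div_le_of_le_mul₀ (by positivity) (by positivity) hr
  have hkb : 1 ≤ k * ((2 : ℝ) ^ p) ^ (i + r) := one_le_mul_of_one_le_of_one_le hk1
    (one_le_pow₀ (Real.one_le_rpow one_le_two (by linarith)))
  refine (hu.isCoveredBy_of_isCoveredBy_momentBall hp hp2 hD hM hDM hk hhk hTM
    (hu.isCoveredBy_momentBall hp hp2 hD hM hDM hk hhk hT hTM (i + r))
    (by positivity : 0 < t) (measurableSet_forall_abs_inner_le _ s)
    (convex_forall_abs_inner_le _ s) (fun z hz l => by simpa using hz l)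
    (hu.half_le_stdGaussian_smul_forall_abs_inner_le x (by positivity) hs0.le hts) hte).mono ?_
  rw [Real.exp_le_exp]
  linarith

end IsBoundedParsevalFrame

end ParsevalFrameCovering

section PhiFunction

variable {Φ : ℝ → ℝ} {p a q : ℝ}

lemma IsPhiPrefun.apply_le (hΦ : IsPhiPrefun Φ) {s t : ℝ} (hs : 0 ≤ s) (hst : s ≤ t) :
    Φ s ≤ Φ t :=
  hΦ.mono hs (Set.mem_Ici.2 (hs.trans hst)) hst

lemma IsPhiPrefun.measurable_comp_abs (hΦ : IsPhiPrefun Φ) : Measurable fun t : ℝ => Φ |t| := by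
  have hmono : Monotone fun t : ℝ => Φ (max t 0) := fun s t hst =>
    hΦ.mono (le_max_right s 0) (le_max_right t 0) (max_le_max_right 0 hst)
  simpa only [Function.comp_def, abs_nonneg, sup_of_le_left] using
    hmono.measurable.comp measurable_abs

lemma IsPhiPrefun.integrable_comp_abs (hΦ : IsPhiPrefun Φ) {α : Type*} [MeasurableSpace α]
    {P : Measure α} [IsFiniteMeasure P] {f : α → ℝ} (hf : Measurable f) {B : ℝ}
    (hB : ∀ y, |f y| ≤ B) : Integrable (fun y => Φ |f y|) P := by
  refine .of_bound (hΦ.measurable_comp_abs.comp hf).aestronglyMeasurable (Φ B)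
    (.of_forall fun y => ?_)
  rw [Real.norm_of_nonneg (hΦ.nonneg _ (abs_nonneg _))]
  exact hΦ.apply_le (abs_nonneg _) (hB y)

lemma DecQ.le_mul_rpow (hdec : DecQ Φ q) {s t : ℝ} (hs : 0 < s) (hst : s ≤ t) :
    Φ t ≤ Φ s * (t / s) ^ q := by
  rcases hst.eq_or_lt with rfl | hlt
  · rw [div_self hs.ne', Real.one_rpow, mul_one]
  have h := hdec s t hs hlt
  have ht := hs.trans hlt
  rw [div_le_iff₀ (Real.rpow_pos_of_pos ht q)] at h
  rw [Real.div_rpow ht.le hs.le]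
  exact h.trans_eq (by ring)

lemma DecQ.pos (hdec : DecQ Φ q) (hΦ : IsPhiPrefun Φ) {t : ℝ} (ht : 0 < t) : 0 < Φ t := by
  obtain ⟨T, hT, htT⟩ := ((hΦ.tendsto_atTop.eventually_gt_atTop 0).and
    (Filter.eventually_ge_atTop t)).exists
  refine pos_of_mul_pos_left (hT.trans_le (hdec.le_mul_rpow ht htT)) ?_
  have := ht.trans_le htT
  positivity

lemma AIncP.le_mul_rpow (hinc : AIncP Φ p a) (ha : 1 ≤ a) (hΦ : IsPhiPrefun Φ) {s t : ℝ}
    (hs : 0 ≤ s) (hst : s ≤ t) : Φ s ≤ a * Φ t * (s / t) ^ p := by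
  have hΦs := hΦ.nonneg s hs
  have hΦt := hΦ.nonneg t (hs.trans hst)
  rcases hs.eq_or_lt with rfl | hs
  · rw [hΦ.map_zero]
    positivity
  rcases hst.eq_or_lt with rfl | hlt
  · rw [div_self hs.ne', Real.one_rpow, mul_one]
    exact le_mul_of_one_le_left hΦs ha
  have h := hinc s t hs hlt
  rw [div_le_iff₀ (Real.rpow_pos_of_pos hs p)] at h
  rw [Real.div_rpow hs.le (hs.trans hlt).le]
  exact h.trans_eq (by ring)

lemma AIncP.of_le {p' : ℝ} (h : AIncP Φ p a) (hΦ : IsPhiPrefun Φ) (hp : p' ≤ p) :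
    AIncP Φ p' a := by
  intro s t hs hst
  have ht : 0 < t := hs.trans hst
  have hsplit (x : ℝ) (hx : 0 < x) : Φ x / x ^ p' = Φ x / x ^ p * x ^ (p - p') := by
    rw [div_mul_eq_mul_div, Real.rpow_sub hx,
      mul_div_assoc, div_right_comm, div_self (by positivity), mul_one_div]
  have hΦs : 0 ≤ Φ s / s ^ p := div_nonneg (hΦ.nonneg s hs.le) (by positivity)
  rw [hsplit s hs, hsplit t ht, ← mul_assoc]
  exact mul_le_mul (h s t hs hst) (Real.rpow_le_rpow hs.le hst.le (by linarith)) (by positivity)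
    (hΦs.trans (h s t hs hst))

lemma DecQ.sub_le (hdec : DecQ Φ q) (hq : 1 ≤ q) (hΦ : IsPhiPrefun Φ) {s t : ℝ} (hs : 0 ≤ s)
    (hst : s ≤ t) (ht : 0 < t) : Φ t - Φ s ≤ q * Φ t * ((t - s) / t) := by
  have hΦt := hΦ.nonneg t ht.le
  rcases hs.eq_or_lt with rfl | hs
  · rw [hΦ.map_zero, sub_zero, sub_zero, div_self ht.ne', mul_one]
    exact le_mul_of_one_le_left hΦt hq
  have hbern : 1 + q * (s / t - 1) ≤ (s / t) ^ q := by
    simpa using one_add_mul_self_le_rpow_one_add (s := s / t - 1) (by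
      linarith [div_pos hs ht]) hq
  have hdown : Φ t * (s / t) ^ q ≤ Φ s :=
    calc Φ t * (s / t) ^ q ≤ Φ s * (t / s) ^ q * (s / t) ^ q := by
          gcongr
          exact hdec.le_mul_rpow hs hst
      _ = Φ s := by
          rw [mul_assoc, ← Real.mul_rpow (by positivity) (by positivity),
            div_mul_div_cancel₀ hs.ne', div_self ht.ne', Real.one_rpow, mul_one]
  have hmul := mul_le_mul_of_nonneg_left hbern hΦt
  rw [sub_div, div_self ht.ne']
  linarith

/-- The hypotheses on `Φ` under which the sampling theorem is proved: a Φ-prefunction in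
`(aInc)_p`, with constant `a`, and in `(Dec)_q`, for some `1 < p ≤ 2` and `1 ≤ q`. -/
structure HasPowerGrowth (Φ : ℝ → ℝ) (p a q : ℝ) : Prop where
  isPhiPrefun : IsPhiPrefun Φ
  one_lt : 1 < p
  le_two : p ≤ 2
  one_le_const : 1 ≤ a
  ainc : AIncP Φ p a
  one_le_exponent : 1 ≤ q
  dec : DecQ Φ q

namespace HasPowerGrowth

lemma sq_sub_le (hΦ : HasPowerGrowth Φ p a q) {D s t d : ℝ} (hs : |s| ≤ D) (ht : |t| ≤ D)
    (hd : |s - t| ≤ d) :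
    (Φ |s| - Φ |t|) ^ 2 ≤ q ^ 2 * a * Φ D * (d / D) ^ p * (Φ |s| + Φ |t|) := by
  wlog hst : |t| ≤ |s| generalizing s t
  · have := this ht hs (by rwa [abs_sub_comm]) (le_of_not_ge hst)
    rwa [← neg_sub, neg_sq, add_comm (Φ |s|)]
  rcases (abs_nonneg s).eq_or_lt with hs0 | hs0
  · simp [← hs0, le_antisymm (hs0 ▸ hst) (abs_nonneg t), hΦ.isPhiPrefun.map_zero]
  have hp := hΦ.one_lt
  have hq := hΦ.one_le_exponent
  have ha := hΦ.one_le_const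
  have hΦs := hΦ.isPhiPrefun.nonneg _ hs0.le
  have hΦt := hΦ.isPhiPrefun.nonneg _ (abs_nonneg t)
  have hΦD := hΦ.isPhiPrefun.nonneg _ (hs0.le.trans hs)
  have hD : 0 < D := hs0.trans_le hs
  have hd0 : 0 ≤ d := (abs_nonneg _).trans hd
  set κ := (|s| - |t|) / |s| with hκ
  have hκ0 : 0 ≤ κ := div_nonneg (sub_nonneg.2 hst) hs0.le
  have hκ1 : κ ≤ 1 := div_le_one_of_le₀ (sub_le_self _ (abs_nonneg t)) hs0.le
  have hκ2 : κ ^ 2 ≤ κ ^ p := by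
    rw [← Real.rpow_two]
    exact Real.rpow_le_rpow_of_exponent_ge_of_imp hκ0 hκ1 hΦ.le_two (fun _ h => by linarith)
  have hκD : κ * (|s| / D) ≤ d / D := by
    rw [hκ, div_mul_div_cancel₀ hs0.ne']
    gcongr
    exact (abs_sub_abs_le_abs_sub s t).trans hd
  calc (Φ |s| - Φ |t|) ^ 2 ≤ (q * Φ |s| * κ) ^ 2 := by
        refine pow_le_pow_left₀ (sub_nonneg.2 (hΦ.isPhiPrefun.apply_le (abs_nonneg t) hst)) ?_ 2
        exact hΦ.dec.sub_le hq hΦ.isPhiPrefun (abs_nonneg t) hst hs0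
    _ = q ^ 2 * Φ |s| * Φ |s| * κ ^ 2 := by ring
    _ ≤ q ^ 2 * Φ |s| * (a * Φ D * (|s| / D) ^ p) * κ ^ p := by
        gcongr
        exact hΦ.ainc.le_mul_rpow ha hΦ.isPhiPrefun hs0.le hs
    _ = q ^ 2 * a * Φ D * (κ * (|s| / D)) ^ p * Φ |s| := by
        rw [Real.mul_rpow hκ0 (by positivity)]
        ring
    _ ≤ q ^ 2 * a * Φ D * (d / D) ^ p * (Φ |s| + Φ |t|) := by
        gcongr
        exact le_add_of_nonneg_right hΦt

lemma continuous_comp_abs (hΦ : HasPowerGrowth Φ p a q) : Continuous fun t : ℝ => Φ |t| := by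
  refine continuous_iff_continuousAt.2 fun t => tendsto_iff_norm_sub_tendsto_zero.2 ?_
  have hp := hΦ.one_lt
  have ha := hΦ.one_le_const
  set D := |t| + 1
  have hΦD := hΦ.isPhiPrefun.nonneg D (by positivity)
  have hlim : Filter.Tendsto (fun s => √(q ^ 2 * a * Φ D * (|s - t| / D) ^ p * (Φ D + Φ D)))
      (nhds t) (nhds 0) := by
    have hcont : Continuous fun s => √(q ^ 2 * a * Φ D * (|s - t| / D) ^ p * (Φ D + Φ D)) := by
      fun_prop (disch := first | positivity | linarith)
    simpa [Real.zero_rpow (by linarith : p ≠ 0)] using hcont.tendsto t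
  refine squeeze_zero' (.of_forall fun s => norm_nonneg _) ?_ hlim
  filter_upwards [Metric.closedBall_mem_nhds t one_pos] with s hs
  have hsD : |s| ≤ D := by
    rw [Metric.mem_closedBall, Real.dist_eq] at hs
    linarith [abs_sub_abs_le_abs_sub s t]
  have htD : |t| ≤ D := by linarith
  have hle (r : ℝ) (hr : |r| ≤ D) : Φ |r| ≤ Φ D :=
    hΦ.isPhiPrefun.apply_le (abs_nonneg r) hr
  refine Real.abs_le_sqrt ((hΦ.sq_sub_le hsD htD le_rfl).trans ?_)
  gcongr
  exacts [hle s hsD, hle t htD]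

lemma rpow_le (hΦ : HasPowerGrowth Φ p a q) {t : ℝ} (ht : 0 ≤ t) :
    t ^ p ≤ 1 + a / Φ 1 * Φ t := by
  have hΦ1 := hΦ.dec.pos hΦ.isPhiPrefun one_pos
  have hΦt := hΦ.isPhiPrefun.nonneg t ht
  have ha := hΦ.one_le_const
  rcases le_total t 1 with ht1 | ht1
  · exact (Real.rpow_le_one ht ht1 (by linarith [hΦ.one_lt])).trans
      (le_add_of_nonneg_right (by positivity))
  · refine le_add_of_nonneg_of_le zero_le_one ?_
    have h := hΦ.ainc.le_mul_rpow ha hΦ.isPhiPrefun zero_le_one ht1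
    have ht0 : 0 < t := one_pos.trans_le ht1
    rw [Real.div_rpow zero_le_one ht, Real.one_rpow, mul_one_div, le_div_iff₀ (by positivity)] at h
    rwa [div_mul_eq_mul_div, le_div_iff₀' hΦ1]

end HasPowerGrowth

end PhiFunction

section Luxemburg

variable {Φ : ℝ → ℝ} {a q : ℝ} {α : Type*} [MeasurableSpace α] {μ ν : Measure α} {f : α → ℝ}
  {l s t ε : ℝ}

lemma IsPhiPrefun.integrable_comp_abs_div [IsFiniteMeasure μ] (hΦ : IsPhiPrefun Φ)
    (hf : Measurable f) (hb : ∃ B, ∀ y, |f y| ≤ B) (hl : 0 ≤ l) :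
    Integrable (fun y => Φ (|f y| / l)) μ := by
  obtain ⟨B, hB⟩ := hb
  have h := hΦ.integrable_comp_abs (P := μ) (hf.div_const l) (B := B / l) fun y => by
    rw [abs_div, abs_of_nonneg hl]
    exact div_le_div_of_nonneg_right (hB y) hl
  simpa only [abs_div, abs_of_nonneg hl] using h

lemma DecQ.integral_comp_abs_div_le [IsFiniteMeasure μ] (hdec : DecQ Φ q) (hΦ : IsPhiPrefun Φ)
    (hf : Measurable f) (hb : ∃ B, ∀ y, |f y| ≤ B) (hs : 0 < s) (hst : s ≤ t) :
    ∫ y, Φ (|f y| / s) ∂μ ≤ (t / s) ^ q * ∫ y, Φ (|f y| / t) ∂μ := by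
  have ht := hs.trans_le hst
  rw [← integral_const_mul]
  refine integral_mono (hΦ.integrable_comp_abs_div hf hb hs.le)
    ((hΦ.integrable_comp_abs_div hf hb ht.le).const_mul _) fun y => ?_
  rcases (abs_nonneg (f y)).eq_or_lt with h0 | h0
  · simp [← h0, hΦ.map_zero]
  · have h := hdec.le_mul_rpow (div_pos h0 ht) (div_le_div_of_nonneg_left h0.le hs hst)
    rwa [div_div_div_cancel_left' _ _ h0.ne', mul_comm] at h

lemma AIncP.integral_comp_abs_div_le [IsFiniteMeasure μ] (hinc : AIncP Φ 1 a) (ha : 1 ≤ a)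
    (hΦ : IsPhiPrefun Φ) (hf : Measurable f) (hb : ∃ B, ∀ y, |f y| ≤ B) (hs : 0 < s)
    (hst : s ≤ t) :
    ∫ y, Φ (|f y| / t) ∂μ ≤ a * (s / t) * ∫ y, Φ (|f y| / s) ∂μ := by
  have ht := hs.trans_le hst
  rw [← integral_const_mul]
  refine integral_mono (hΦ.integrable_comp_abs_div hf hb ht.le)
    ((hΦ.integrable_comp_abs_div hf hb hs.le).const_mul _) fun y => ?_
  rcases (abs_nonneg (f y)).eq_or_lt with h0 | h0
  · simp [← h0, hΦ.map_zero]
  · have h := hinc.le_mul_rpow ha hΦ (div_nonneg h0.le ht.le)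
      (div_le_div_of_nonneg_left h0.le hs hst)
    rwa [div_div_div_cancel_left' _ _ h0.ne', Real.rpow_one, mul_right_comm] at h

lemma luxNorm_nonneg : 0 ≤ luxNorm μ Φ f :=
  Real.sInf_nonneg fun _ h => h.1.le

lemma luxNorm_le (hl : 0 < l) (h : ∫ y, Φ (|f y| / l) ∂μ ≤ 1) : luxNorm μ Φ f ≤ l :=
  csInf_le ⟨0, fun _ h => h.1.le⟩ ⟨hl, h⟩

lemma IsPhiPrefun.exists_integral_comp_abs_div_le_one [IsProbabilityMeasure μ]
    (hΦ : IsPhiPrefun Φ) (hf : Measurable f) (hb : ∃ B, ∀ y, |f y| ≤ B) :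
    ∃ l, 0 < l ∧ ∫ y, Φ (|f y| / l) ∂μ ≤ 1 := by
  obtain ⟨t, ht1, ht0 : 0 < t⟩ :=
    ((hΦ.tendsto_zero.eventually (Iio_mem_nhds zero_lt_one)).and self_mem_nhdsWithin).exists
  obtain ⟨B, hB⟩ := id hb
  have : 0 < |B| + 1 := by positivity
  refine ⟨(|B| + 1) / t, by positivity, ?_⟩
  calc ∫ y, Φ (|f y| / ((|B| + 1) / t)) ∂μ ≤ ∫ _, (1 : ℝ) ∂μ := by
        refine integral_mono (hΦ.integrable_comp_abs_div hf hb (by positivity))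
          (integrable_const _) fun y => ?_
        refine (hΦ.apply_le (by positivity) ?_).trans ht1.le
        rw [div_le_iff₀ (by positivity), mul_div_cancel₀ _ ht0.ne']
        linarith [hB y, le_abs_self B]
    _ = 1 := by simp

lemma le_luxNorm [IsProbabilityMeasure μ] (hΦ : IsPhiPrefun Φ) (hf : Measurable f)
    (hb : ∃ B, ∀ y, |f y| ≤ B) (h : ∀ t, 0 < t → ∫ y, Φ (|f y| / t) ∂μ ≤ 1 → l ≤ t) :
    l ≤ luxNorm μ Φ f :=
  le_csInf (hΦ.exists_integral_comp_abs_div_le_one hf hb) fun t ht => h t ht.1 ht.2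

lemma one_lt_integral_of_lt_luxNorm (hl : 0 < l) (h : l < luxNorm μ Φ f) :
    1 < ∫ y, Φ (|f y| / l) ∂μ :=
  lt_of_not_ge fun hle => h.not_ge (luxNorm_le hl hle)

lemma integral_le_one_of_luxNorm_lt [IsProbabilityMeasure μ] (hΦ : IsPhiPrefun Φ)
    (hf : Measurable f) (hb : ∃ B, ∀ y, |f y| ≤ B) (h : luxNorm μ Φ f < l) :
    ∫ y, Φ (|f y| / l) ∂μ ≤ 1 := by
  obtain ⟨t, ⟨ht0, ht⟩, htl⟩ :=
    exists_lt_of_csInf_lt (hΦ.exists_integral_comp_abs_div_le_one hf hb) h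
  refine le_trans (integral_mono (hΦ.integrable_comp_abs_div hf hb (ht0.trans htl).le)
    (hΦ.integrable_comp_abs_div hf hb ht0.le) fun y => ?_) ht
  exact hΦ.apply_le (div_nonneg (abs_nonneg _) (ht0.trans htl).le)
    (div_le_div_of_nonneg_left (abs_nonneg _) ht0 htl.le)

lemma integral_comp_abs_div_luxNorm [IsProbabilityMeasure μ] (hΦ : IsPhiPrefun Φ)
    (hdec : DecQ Φ q) (hf : Measurable f) (hb : ∃ B, ∀ y, |f y| ≤ B) (h0 : 0 < luxNorm μ Φ f) :
    ∫ y, Φ (|f y| / luxNorm μ Φ f) ∂μ = 1 := by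
  set l := luxNorm μ Φ f
  have hlim : Filter.Tendsto (fun r : ℝ => r ^ q) (nhdsWithin 1 (Set.Ioi 1)) (nhds 1) := by
    have h := (Real.continuousAt_rpow_const 1 q (.inl one_ne_zero)).tendsto
    rw [Real.one_rpow] at h
    exact h.mono_left nhdsWithin_le_nhds
  have hbounds (r : ℝ) (hr : 1 < r) :
      ∫ y, Φ (|f y| / l) ∂μ ≤ r ^ q ∧ 1 ≤ r ^ q * ∫ y, Φ (|f y| / l) ∂μ := by
    have hr0 : 0 < r := one_pos.trans hr
    constructor
    · have h :=
        hdec.integral_comp_abs_div_le hΦ hf hb (μ := μ) h0 (le_mul_of_one_le_left h0.le hr.le)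
      rw [mul_div_cancel_right₀ _ h0.ne'] at h
      refine h.trans (mul_le_of_le_one_right (by positivity) ?_)
      exact integral_le_one_of_luxNorm_lt hΦ hf hb (lt_mul_of_one_lt_left h0 hr)
    · have h := hdec.integral_comp_abs_div_le hΦ hf hb (μ := μ) (div_pos h0 hr0)
        (div_le_self h0.le hr.le)
      rw [div_div_cancel₀ h0.ne'] at h
      exact (one_lt_integral_of_lt_luxNorm (div_pos h0 hr0) (div_lt_self h0 hr)).le.trans h
  refine le_antisymm (ge_of_tendsto hlim ?_) ?_
  · filter_upwards [self_mem_nhdsWithin] with r hr using (hbounds r hr).1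
  · have h := ge_of_tendsto (hlim.mul_const (∫ y, Φ (|f y| / l) ∂μ)) (b := 1) (by
      filter_upwards [self_mem_nhdsWithin] with r hr using (hbounds r hr).2)
    rwa [one_mul] at h

section TwoMeasures

variable [IsProbabilityMeasure μ] [IsProbabilityMeasure ν]

lemma luxNorm_le_mul_luxNorm (hΦ : IsPhiPrefun Φ) (ha : 1 ≤ a) (hinc : AIncP Φ 1 a)
    (hf : Measurable f) (hb : ∃ B, ∀ y, |f y| ≤ B) (hε : 0 ≤ ε)
    (hdev : ∀ l, 0 < l → ∫ y, Φ (|f y| / l) ∂μ ≤ 1 → ∫ y, Φ (|f y| / l) ∂ν ≤ 1 + ε) :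
    luxNorm ν Φ f ≤ a * (1 + ε) * luxNorm μ Φ f := by
  have hc : 1 ≤ a * (1 + ε) := one_le_mul_of_one_le_of_one_le ha (by linarith)
  rw [← div_le_iff₀' (by positivity)]
  refine le_luxNorm hΦ hf hb fun l hl hl1 => ?_
  rw [div_le_iff₀' (by positivity)]
  refine luxNorm_le (by positivity) ?_
  calc ∫ y, Φ (|f y| / (a * (1 + ε) * l)) ∂ν
      ≤ a * (l / (a * (1 + ε) * l)) * ∫ y, Φ (|f y| / l) ∂ν :=
        hinc.integral_comp_abs_div_le ha hΦ hf hb hl (le_mul_of_one_le_left hl.le hc)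
    _ ≤ a * (l / (a * (1 + ε) * l)) * (1 + ε) := by
        gcongr
        exact hdev l hl hl1
    _ = 1 := by field_simp

lemma mul_luxNorm_le_luxNorm (hΦ : IsPhiPrefun Φ) (hdec : DecQ Φ q) (ha : 1 ≤ a)
    (hinc : AIncP Φ 1 a) (hf : Measurable f) (hb : ∃ B, ∀ y, |f y| ≤ B) (hε : 0 ≤ ε)
    (hdev : ∀ l, 0 < l → ∫ y, Φ (|f y| / l) ∂μ = 1 → 1 - ε ≤ ∫ y, Φ (|f y| / l) ∂ν) :
    a⁻¹ * (1 - ε) * luxNorm μ Φ f ≤ luxNorm ν Φ f := by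
  refine le_luxNorm hΦ hf hb fun t ht ht1 => ?_
  rw [mul_assoc, inv_mul_le_iff₀ (by positivity)]
  rcases le_or_gt (luxNorm μ Φ f) t with hle | hlt
  · have hl0 : 0 ≤ luxNorm μ Φ f := luxNorm_nonneg
    nlinarith
  · have h0 := ht.trans hlt
    have h := (hdev _ h0 (integral_comp_abs_div_luxNorm hΦ hdec hf hb h0)).trans
      (hinc.integral_comp_abs_div_le ha hΦ hf hb ht hlt.le)
    have h' : 1 - ε ≤ a * (t / luxNorm μ Φ f) :=
      h.trans (mul_le_of_le_one_right (by positivity) ht1)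
    rwa [← mul_div_assoc, le_div_iff₀ h0] at h'

end TwoMeasures

section Empirical

variable {m : ℕ}

/-- The empirical measure of the sample `x`, giving mass `1 / m` to each `x j`. -/
noncomputable def empiricalMeasure (x : Fin m → α) : Measure α :=
  (m : ℝ≥0∞)⁻¹ • ∑ j, Measure.dirac (x j)

instance [NeZero m] (x : Fin m → α) : IsProbabilityMeasure (empiricalMeasure x) where
  measure_univ := by
    simp [empiricalMeasure, ENNReal.inv_mul_cancel, NeZero.ne m]

lemma integral_empiricalMeasure {g : α → ℝ} (hg : Measurable g) (x : Fin m → α) :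
    ∫ y, g y ∂(empiricalMeasure x) = (∑ j, g (x j)) / m := by
  rw [empiricalMeasure, integral_smul_measure, integral_finsetSum_measure fun j _ =>
    integrable_dirac' hg.stronglyMeasurable (by simp)]
  simp [integral_dirac' _ _ hg.stronglyMeasurable, div_eq_inv_mul]

lemma integral_comp_abs_div_empiricalMeasure (hΦ : IsPhiPrefun Φ) (hf : Measurable f)
    (hl : 0 ≤ l) (x : Fin m → α) :
    ∫ y, Φ (|f y| / l) ∂(empiricalMeasure x) = (∑ j, Φ (|f (x j)| / l)) / m :=
  integral_empiricalMeasure (by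
    simpa only [Function.comp_def, abs_div, abs_of_nonneg hl] using
      hΦ.measurable_comp_abs.comp (hf.div_const l)) x

lemma luxNorm_empiricalMeasure (hΦ : IsPhiPrefun Φ) (hf : Measurable f) (x : Fin m → α) :
    luxNorm (empiricalMeasure x) Φ f = discLuxNorm Φ x f := by
  refine congrArg sInf (Set.ext fun l => and_congr_right fun hl => ?_)
  rw [integral_comp_abs_div_empiricalMeasure hΦ hf hl.le]

lemma discLuxNorm_two_sided_of_deviation [NeZero m] [IsProbabilityMeasure μ] (hΦ : IsPhiPrefun Φ)
    (hdec : DecQ Φ q) (ha : 1 ≤ a) (hinc : AIncP Φ 1 a) (hf : Measurable f)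
    (hb : ∃ B, ∀ y, |f y| ≤ B) (hε : 0 ≤ ε) (x : Fin m → α)
    (hdev : ∀ l, 0 < l → ∫ y, Φ (|f y| / l) ∂μ ≤ 1 →
      |(∑ j, Φ (|f (x j)| / l)) / m - ∫ y, Φ (|f y| / l) ∂μ| ≤ ε) :
    a⁻¹ * (1 - ε) * luxNorm μ Φ f ≤ discLuxNorm Φ x f ∧
      discLuxNorm Φ x f ≤ a * (1 + ε) * luxNorm μ Φ f := by
  rw [← luxNorm_empiricalMeasure hΦ hf x]
  constructor
  · refine mul_luxNorm_le_luxNorm hΦ hdec ha hinc hf hb hε fun l hl hl1 => ?_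
    rw [integral_comp_abs_div_empiricalMeasure hΦ hf hl.le]
    linarith [(abs_le.1 (hdev l hl hl1.le)).1]
  · refine luxNorm_le_mul_luxNorm hΦ ha hinc hf hb hε fun l hl hl1 => ?_
    rw [integral_comp_abs_div_empiricalMeasure hΦ hf hl.le]
    linarith [(abs_le.1 (hdev l hl hl1)).2]

end Empirical

end Luxemburg

section Rademacher

lemma expect_le_of_expect_exp_le {ι : Type*} [Fintype ι] [Nonempty ι] {f : ι → ℝ} {c : ℝ}
    (h : 𝔼 i, Real.exp (f i) ≤ Real.exp c) : 𝔼 i, f i ≤ c :=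
  calc 𝔼 i, f i ≤ 𝔼 i, (Real.exp (-c) * Real.exp (f i) + (c - 1)) :=
        Finset.expect_le_expect fun i _ => by
          rw [← Real.exp_add]
          linarith [Real.add_one_le_exp (-c + f i)]
    _ = Real.exp (-c) * 𝔼 i, Real.exp (f i) + (c - 1) := by
        rw [Finset.expect_add_distrib, ← Finset.mul_expect, Fintype.expect_const]
    _ ≤ Real.exp (-c) * Real.exp c + (c - 1) := by gcongr
    _ = c := by rw [← Real.exp_add, neg_add_cancel, Real.exp_zero, add_sub_cancel]

variable {ι : Type*} [Fintype ι]

/-- The vector with coordinates `±1` whose signs are prescribed by `s`; averaging over `s` makes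
`⟪signVector s, v⟫` a Rademacher sum with coefficients `v`. -/
noncomputable def signVector (s : ι → Bool) : EuclideanSpace ℝ ι :=
  WithLp.toLp 2 fun j => if s j then 1 else -1

lemma inner_signVector (s : ι → Bool) (v : EuclideanSpace ℝ ι) :
    ⟪signVector s, v⟫_ℝ = ∑ j, if s j then v j else -v j := by
  simp only [PiLp.inner_apply, signVector, RCLike.inner_apply, conj_trivial, mul_ite, mul_one,
    mul_neg]

lemma norm_signVector (s : ι → Bool) : ‖signVector s‖ = √(Fintype.card ι) := by
  have h (b : Bool) : ‖(if b then 1 else -1 : ℝ)‖ = 1 := by cases b <;> simp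
  simp [EuclideanSpace.norm_eq, signVector, h]

variable [DecidableEq ι]

lemma expect_exp_inner_signVector_le (v : EuclideanSpace ℝ ι) :
    𝔼 s, Real.exp ⟪signVector s, v⟫_ℝ ≤ Real.exp (‖v‖ ^ 2 / 2) := by
  have hfactor (j : ι) : ∑ b : Bool, Real.exp (if b then v j else -v j) ≤
      2 * Real.exp (v j ^ 2 / 2) := by
    have h := Real.cosh_le_exp_half_sq (v j)
    rw [Real.cosh_eq] at h
    rw [Fintype.sum_bool, if_pos rfl, if_neg Bool.false_ne_true]
    linarith
  rw [Fintype.expect_eq_sum_div_card, div_le_iff₀ (by positivity)]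
  calc ∑ s, Real.exp ⟪signVector s, v⟫_ℝ
      = ∏ j, ∑ b : Bool, Real.exp (if b then v j else -v j) := by
        simp only [Finset.prod_univ_sum, Fintype.piFinset_univ, inner_signVector, Real.exp_sum]
    _ ≤ ∏ j, 2 * Real.exp (v j ^ 2 / 2) :=
        Finset.prod_le_prod (fun j _ => by positivity) fun j _ => hfactor j
    _ = Real.exp (‖v‖ ^ 2 / 2) * Fintype.card (ι → Bool) := by
        rw [Finset.prod_mul_distrib, ← Real.exp_sum, ← Finset.sum_div,
          EuclideanSpace.real_norm_sq_eq]
        simp [mul_comm]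

lemma exp_abs_le_exp_add_exp_neg (t : ℝ) : Real.exp |t| ≤ Real.exp t + Real.exp (-t) := by
  rcases abs_choice t with h | h <;> rw [h]
  · exact le_add_of_nonneg_right (Real.exp_pos _).le
  · exact le_add_of_nonneg_left (Real.exp_pos _).le

lemma expect_exp_mul_le_card_mul_exp {F : Finset (EuclideanSpace ℝ ι)} {σ θ : ℝ} (hθ : 0 ≤ θ)
    (hF : ∀ v ∈ F, ‖v‖ ≤ σ) {Y : (ι → Bool) → ℝ}
    (hY : ∀ s, ∃ v ∈ F, Y s ≤ |⟪signVector s, v⟫_ℝ|) :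
    𝔼 s, Real.exp (θ * Y s) ≤ F.card * (2 * Real.exp ((θ * σ) ^ 2 / 2)) := by
  have hmgf (v : EuclideanSpace ℝ ι) (hv : v ∈ F) :
      𝔼 s, Real.exp ⟪signVector s, θ • v⟫_ℝ + 𝔼 s, Real.exp ⟪signVector s, -(θ • v)⟫_ℝ ≤
        2 * Real.exp ((θ * σ) ^ 2 / 2) := by
    have hle : Real.exp (‖θ • v‖ ^ 2 / 2) ≤ Real.exp ((θ * σ) ^ 2 / 2) := by
      rw [norm_smul, Real.norm_of_nonneg hθ]
      gcongr
      exact hF v hv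
    have h := expect_exp_inner_signVector_le (-(θ • v))
    rw [norm_neg] at h
    linarith [expect_exp_inner_signVector_le (θ • v)]
  calc 𝔼 s, Real.exp (θ * Y s)
      ≤ 𝔼 s, ∑ v ∈ F, (Real.exp ⟪signVector s, θ • v⟫_ℝ
          + Real.exp ⟪signVector s, -(θ • v)⟫_ℝ) :=
        Finset.expect_le_expect fun s _ => by
          obtain ⟨v, hv, hle⟩ := hY s
          calc Real.exp (θ * Y s) ≤ Real.exp |⟪signVector s, θ • v⟫_ℝ| := by
                rw [real_inner_smul_right, abs_mul, abs_of_nonneg hθ]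
                gcongr
            _ ≤ _ := exp_abs_le_exp_add_exp_neg _
            _ ≤ _ := by
                rw [← inner_neg_right]
                exact Finset.single_le_sum (f := fun v => Real.exp ⟪signVector s, θ • v⟫_ℝ
                  + Real.exp ⟪signVector s, -(θ • v)⟫_ℝ) (fun _ _ => by positivity) hv
    _ ≤ ∑ v ∈ F, 2 * Real.exp ((θ * σ) ^ 2 / 2) := by
        simp only [Finset.expect_sum_comm, Finset.expect_add_distrib]
        exact Finset.sum_le_sum hmgf
    _ = F.card * (2 * Real.exp ((θ * σ) ^ 2 / 2)) := by rw [Finset.sum_const, nsmul_eq_mul]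

lemma expect_le_of_forall_exists_le_abs_inner_signVector {F : Finset (EuclideanSpace ℝ ι)}
    {σ e : ℝ} (hσ : 0 < σ) (hF : ∀ v ∈ F, ‖v‖ ≤ σ) (he : 1 ≤ e) (hcard : (F.card : ℝ) ≤ Real.exp e)
    {Y : (ι → Bool) → ℝ} (hY : ∀ s, ∃ v ∈ F, Y s ≤ |⟪signVector s, v⟫_ℝ|) :
    𝔼 s, Y s ≤ 3 * σ * √e := by
  have hse2 : √e ^ 2 = e := Real.sq_sqrt (by linarith)
  set θ := √e / σ
  have hθ0 : 0 < θ := div_pos (Real.sqrt_pos.2 (by linarith)) hσ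
  have hθσ : θ * σ = √e := div_mul_cancel₀ _ hσ.ne'
  have hexp : 𝔼 s, Real.exp (θ * Y s) ≤ Real.exp (3 * e) :=
    calc 𝔼 s, Real.exp (θ * Y s) ≤ F.card * (2 * Real.exp (e / 2)) := by
          rw [← hse2, ← hθσ]
          exact expect_exp_mul_le_card_mul_exp hθ0.le hF hY
      _ ≤ Real.exp e * (Real.exp 1 * Real.exp (e / 2)) := by
          gcongr
          linarith [Real.add_one_le_exp (1 : ℝ)]
      _ ≤ Real.exp (3 * e) := by
          rw [← Real.exp_add, ← Real.exp_add]
          gcongr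
          linarith
  have h := expect_le_of_expect_exp_le hexp
  rw [← Finset.mul_expect] at h
  refine le_of_mul_le_mul_left (h.trans_eq ?_) hθ0
  calc 3 * e = 3 * (θ * σ) * √e := by rw [hθσ, mul_assoc, ← sq, hse2]
    _ = θ * (3 * σ * √e) := by ring

lemma abs_inner_le_sum_abs_inner_sub {E : Type*} [NormedAddCommGroup E] [InnerProductSpace ℝ E]
    (x v : E) (w : ℕ → E) (n : ℕ) :
    |⟪x, v⟫_ℝ| ≤ |⟪x, w 0⟫_ℝ| + ∑ i ∈ Finset.range n, |⟪x, w (i + 1) - w i⟫_ℝ|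
      + ‖x‖ * ‖v - w n‖ := by
  have hsum : v = w 0 + ∑ i ∈ Finset.range n, (w (i + 1) - w i) + (v - w n) := by
    rw [Finset.sum_range_sub]
    abel
  conv_lhs => rw [hsum, inner_add_right, inner_add_right, inner_sum]
  refine (abs_add_le _ _).trans
    (add_le_add ((abs_add_le _ _).trans ?_) (abs_real_inner_le_norm _ _))
  gcongr
  exact Finset.abs_sum_le_sum_abs _ _

lemma expect_abs_inner_signVector_sub_le {F G : Finset (EuclideanSpace ℝ ι)} {σ e e' : ℝ}
    (hσ : 0 < σ) (he : 1 ≤ e) (he' : 1 ≤ e') (hF : (F.card : ℝ) ≤ Real.exp e)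
    (hG : (G.card : ℝ) ≤ Real.exp e') {V W : (ι → Bool) → EuclideanSpace ℝ ι}
    (hV : ∀ s, V s ∈ F) (hW : ∀ s, W s ∈ G) (hVW : ∀ s, ‖V s - W s‖ ≤ σ) :
    𝔼 s, |⟪signVector s, V s - W s⟫_ℝ| ≤ 3 * σ * (√e + √e') := by
  classical
  have hcard : (((F ×ˢ G).image fun f => f.1 - f.2).card : ℝ) ≤ Real.exp (e + e') :=
    calc (((F ×ˢ G).image fun f => f.1 - f.2).card : ℝ) ≤ F.card * G.card := by
          exact_mod_cast Finset.card_image_le.trans_eq (Finset.card_product F G)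
      _ ≤ Real.exp e * Real.exp e' := by gcongr
      _ = Real.exp (e + e') := (Real.exp_add e e').symm
  refine (expect_le_of_forall_exists_le_abs_inner_signVector (e := e + e')
    (F := ((F ×ˢ G).image fun f => f.1 - f.2).filter (‖·‖ ≤ σ)) hσ
    (fun v hv => (Finset.mem_filter.1 hv).2)
    (by linarith) ((Nat.cast_le.2 (Finset.card_filter_le _ _)).trans hcard) fun s => ?_).trans ?_
  · refine ⟨V s - W s, Finset.mem_filter.2 ⟨?_, hVW s⟩, le_rfl⟩
    exact Finset.mem_image.2 ⟨(V s, W s), Finset.mk_mem_product (hV s) (hW s), rfl⟩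
  · gcongr
    have hmul := mul_nonneg (Real.sqrt_nonneg e) (Real.sqrt_nonneg e')
    refine Real.sqrt_le_iff.2 ⟨by positivity, ?_⟩
    rw [add_sq, Real.sq_sqrt (by linarith), Real.sq_sqrt (by linarith)]
    linarith

lemma sum_range_add_succ_le {x : ℕ → ℝ} (hx : ∀ i, 0 ≤ x i) (n : ℕ) :
    ∑ i ∈ Finset.range n, (6 * x i + 12 * x (i + 1)) ≤
      18 * ∑ i ∈ Finset.range (n + 1), x i - 3 * x 0 := by
  have h1 := Finset.sum_range_succ x n
  have h2 := Finset.sum_range_succ' x n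
  rw [Finset.sum_add_distrib, ← Finset.mul_sum, ← Finset.mul_sum]
  linarith [hx 0, hx n]

lemma expect_le_sum_of_isCoveredBy {T : Finset (EuclideanSpace ℝ ι)} {e τ : ℕ → ℝ}
    (he : ∀ i, 1 ≤ e i) (hτ : ∀ i, 0 < τ i) (hanti : ∀ i, τ (i + 1) ≤ τ i)
    (hhalf : ∀ i, τ i ≤ 2 * τ (i + 1)) (hT : ∀ v ∈ T, ‖v‖ ≤ τ 0)
    (hcov : ∀ i, IsCoveredBy T (Real.exp (e i)) (Metric.closedBall 0 (τ i)))
    {Y : (ι → Bool) → ℝ} (hY : ∀ s, ∃ v ∈ T, Y s ≤ |⟪signVector s, v⟫_ℝ|) (n : ℕ) :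
    𝔼 s, Y s ≤ 18 * ∑ i ∈ Finset.range (n + 1), τ i * √(e i) + √(Fintype.card ι) * τ n := by
  choose F hFT hcard hF using hcov
  choose! π hπF hπ using hF
  choose V hVT hV using hY
  simp only [mem_closedBall_zero_iff] at hπ
  have hbase : 𝔼 s, |⟪signVector s, π 0 (V s)⟫_ℝ| ≤ 3 * τ 0 * √(e 0) :=
    expect_le_of_forall_exists_le_abs_inner_signVector (hτ 0) (fun v hv => hT v (hFT 0 hv)) (he 0)
      (hcard 0) fun s => ⟨_, hπF 0 _ (hVT s), le_rfl⟩
  have hlink (i : ℕ) : 𝔼 s, |⟪signVector s, π (i + 1) (V s) - π i (V s)⟫_ℝ| ≤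
      6 * (τ i * √(e i)) + 12 * (τ (i + 1) * √(e (i + 1))) := by
    have h := expect_abs_inner_signVector_sub_le (σ := 2 * τ i) (mul_pos two_pos (hτ i))
      (he (i + 1)) (he i) (hcard (i + 1)) (hcard i) (fun s => hπF (i + 1) _ (hVT s))
      (fun s => hπF i _ (hVT s)) fun s => by
        rw [← sub_sub_sub_cancel_left _ _ (V s)]
        linarith [norm_sub_le (V s - π i (V s)) (V s - π (i + 1) (V s)), hπ i _ (hVT s),
          hπ (i + 1) _ (hVT s), hanti i]
    nlinarith [mul_le_mul_of_nonneg_right (hhalf i) (Real.sqrt_nonneg (e (i + 1)))]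
  calc 𝔼 s, Y s
      ≤ 𝔼 s, (|⟪signVector s, π 0 (V s)⟫_ℝ| +
          ∑ i ∈ Finset.range n, |⟪signVector s, π (i + 1) (V s) - π i (V s)⟫_ℝ| +
          √(Fintype.card ι) * τ n) := Finset.expect_le_expect fun s _ => by
        refine ((hV s).trans (abs_inner_le_sum_abs_inner_sub _ _ (fun i => π i (V s)) n)).trans ?_
        rw [norm_signVector]
        gcongr
        exact hπ n _ (hVT s)
    _ = 𝔼 s, |⟪signVector s, π 0 (V s)⟫_ℝ| +
          ∑ i ∈ Finset.range n, 𝔼 s, |⟪signVector s, π (i + 1) (V s) - π i (V s)⟫_ℝ| +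
          √(Fintype.card ι) * τ n := by
        rw [Finset.expect_add_distrib, Finset.expect_add_distrib, Finset.expect_sum_comm,
          Fintype.expect_const]
    _ ≤ 18 * ∑ i ∈ Finset.range (n + 1), τ i * √(e i) + √(Fintype.card ι) * τ n := by
        have h := Finset.sum_le_sum fun i (_ : i ∈ Finset.range n) => hlink i
        have hsum := sum_range_add_succ_le
          (fun i => mul_nonneg (hτ i).le (Real.sqrt_nonneg (e i))) n
        linarith

end Rademacher

section PhiChaining

lemma IsCoveredBy.superset {E : Type*} [AddCommGroup E] {T : Finset E} {n : ℝ} {B B' : Set E}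
    (h : IsCoveredBy T n B) (hB : B ⊆ B') : IsCoveredBy T n B' :=
  let ⟨F, hF, hcard, hcov⟩ := h
  ⟨F, hF, hcard, fun a ha => (hcov a ha).imp fun _ hf => ⟨hf.1, hB hf.2⟩⟩

lemma IsCoveredBy.image {E E' : Type*} [AddCommGroup E] [AddCommGroup E'] [DecidableEq E']
    {T : Finset E} {n : ℝ} {B : Set E} {B' : Set E'} (h : IsCoveredBy T n B) (g : E → E')
    (hg : ∀ a ∈ T, ∀ b ∈ T, a - b ∈ B → g a - g b ∈ B') : IsCoveredBy (T.image g) n B' := by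
  obtain ⟨F, hF, hcard, hcov⟩ := h
  refine ⟨F.image g, Finset.image_subset_image hF,
    (Nat.cast_le.2 Finset.card_image_le).trans hcard, Finset.forall_mem_image.2 fun a ha => ?_⟩
  obtain ⟨f, hf, hfa⟩ := hcov a ha
  exact ⟨g f, Finset.mem_image_of_mem g hf, hg a ha f (hF hf) hfa⟩

/-- The point of Euclidean space with coordinates `Φ |f j|`, for samples `f` of a function. -/
noncomputable def phiVector {ι : Type*} (Φ : ℝ → ℝ) (f : ι → ℝ) : EuclideanSpace ℝ ι :=
  WithLp.toLp 2 fun j => Φ |f j|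

section

variable {Φ : ℝ → ℝ} {p a q : ℝ} {ι : Type*} [Fintype ι]

lemma HasPowerGrowth.norm_phiVector_sub_sq_le (hΦ : HasPowerGrowth Φ p a q) {D d R : ℝ}
    (hd : 0 ≤ d) (hdD : 0 ≤ D) {f g : ι → ℝ} (hf : ∀ j, |f j| ≤ D) (hg : ∀ j, |g j| ≤ D)
    (hfg : ∀ j, |f j - g j| ≤ d) (hfR : ∑ j, Φ |f j| ≤ R) (hgR : ∑ j, Φ |g j| ≤ R) :
    ‖phiVector Φ f - phiVector Φ g‖ ^ 2 ≤ 2 * q ^ 2 * a * Φ D * R * (d / D) ^ p := by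
  have ha := hΦ.one_le_const
  have hΦD := hΦ.isPhiPrefun.nonneg D hdD
  calc ‖phiVector Φ f - phiVector Φ g‖ ^ 2 = ∑ j, (Φ |f j| - Φ |g j|) ^ 2 := by
        simp [EuclideanSpace.real_norm_sq_eq, phiVector]
    _ ≤ ∑ j, q ^ 2 * a * Φ D * (d / D) ^ p * (Φ |f j| + Φ |g j|) :=
        Finset.sum_le_sum fun j _ => hΦ.sq_sub_le (hf j) (hg j) (hfg j)
    _ = q ^ 2 * a * Φ D * (d / D) ^ p * (∑ j, Φ |f j| + ∑ j, Φ |g j|) := by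
        rw [← Finset.mul_sum, Finset.sum_add_distrib]
    _ ≤ q ^ 2 * a * Φ D * (d / D) ^ p * (R + R) := by gcongr
    _ = 2 * q ^ 2 * a * Φ D * R * (d / D) ^ p := by ring

lemma HasPowerGrowth.norm_phiVector_sq_le (hΦ : HasPowerGrowth Φ p a q) {D R : ℝ}
    (hD : 0 < D) {f : ι → ℝ} (hf : ∀ j, |f j| ≤ D) (hfR : ∑ j, Φ |f j| ≤ R) :
    ‖phiVector Φ f‖ ^ 2 ≤ 2 * q ^ 2 * a * Φ D * R := by
  have hR : 0 ≤ R := (Finset.sum_nonneg fun j _ => hΦ.isPhiPrefun.nonneg _ (abs_nonneg _)).trans hfR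
  have h := hΦ.norm_phiVector_sub_sq_le hD.le hD.le hf (g := 0) (by simpa using fun _ => hD.le)
    (by simpa using hf) hfR (by simpa [hΦ.isPhiPrefun.map_zero] using hR)
  have h0 : phiVector Φ (0 : ι → ℝ) = 0 := by
    ext j
    simp [phiVector, hΦ.isPhiPrefun.map_zero]
  rwa [div_self hD.ne', Real.one_rpow, mul_one, h0, sub_zero] at h

end

lemma sum_pow_le_of_pow_four_eq_half {y : ℝ} (hy0 : 0 < y) (hy : y ^ 4 = 1 / 2) (n : ℕ) :
    ∑ i ∈ Finset.range n, y ^ i ≤ 20 / 3 := by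
  have hy1 : y ≤ 17 / 20 :=
    le_of_pow_le_pow_left₀ (n := 4) (by norm_num) (by norm_num) (by rw [hy]; norm_num)
  have hgeom := geom_sum_mul y n
  have hpow : 0 < y ^ n := by positivity
  have hsum : 0 ≤ ∑ i ∈ Finset.range n, y ^ i := by positivity
  nlinarith

lemma natCast_mul_pow_le_of_pow_four_eq_half {y : ℝ} (hy0 : 0 < y) (hy : y ^ 4 = 1 / 2) (i : ℕ) :
    i * y ^ i ≤ 8 := by
  have hy1 : y ≤ 17 / 20 :=
    le_of_pow_le_pow_left₀ (n := 4) (by norm_num) (by norm_num) (by rw [hy]; norm_num)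
  have hinv : 20 / 17 ≤ y⁻¹ := by
    rw [le_inv_comm₀ (by norm_num) hy0]
    linarith
  have hbern : 1 + i * (y⁻¹ - 1) ≤ 1 / y ^ i :=
    (one_add_mul_le_pow (by linarith) i).trans_eq (by rw [add_sub_cancel, inv_pow, one_div])
  rw [le_div_iff₀ (by positivity)] at hbern
  have hyi : 0 < y ^ i := by positivity
  have hi : (0 : ℝ) ≤ i := by positivity
  nlinarith [mul_nonneg (mul_nonneg hi hyi.le) (sub_nonneg.2 hinv)]

lemma seventeen_mul_div_two_pow_le {n i : ℕ} (hn : n ^ 4 ≤ 2 ^ i) {y : ℝ} (hy0 : 0 < y)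
    (hy : y ^ 4 = 1 / 2) : 17 * (n : ℝ) * i / 2 ^ i ≤ (12 * y ^ i) ^ 2 := by
  have : 0 < y ^ i := by positivity
  have hpow : (y ^ i) ^ 4 = (2 ^ i)⁻¹ := by rw [pow_right_comm, hy, one_div, inv_pow]
  have hny : (n : ℝ) * y ^ i ≤ 1 := by
    refine le_of_pow_le_pow_left₀ (n := 4) (by norm_num) zero_le_one ?_
    rw [mul_pow, hpow, one_pow, ← div_eq_mul_inv, div_le_one (by positivity)]
    exact_mod_cast hn
  calc 17 * (n : ℝ) * i / 2 ^ i = 17 * (n * y ^ i) * (i * y ^ i) * (y ^ i) ^ 2 := by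
        rw [div_eq_mul_inv, ← hpow]
        ring
    _ ≤ 17 * 1 * 8 * (y ^ i) ^ 2 := by
        gcongr
        exact natCast_mul_pow_le_of_pow_four_eq_half hy0 hy i
    _ ≤ (12 * y ^ i) ^ 2 := by nlinarith [sq_nonneg (y ^ i)]

/-- Exponents of the covering numbers used at scale `2⁻ⁱ`: the dual Sudakov bound for `i ≤ k₀`,
the volumetric bound in dimension `n` beyond; `b = 2 ^ p`. -/
noncomputable def coverExponent (k n k₀ r : ℕ) (b : ℝ) (i : ℕ) : ℝ :=
  if i ≤ k₀ then 982 * k * b ^ (i + r) else 17 * n * i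

section

variable {k n k₀ r : ℕ} {b : ℝ}

lemma one_le_coverExponent (hk : 1 ≤ k) (hn : 1 ≤ n) (hb : 1 ≤ b) (i : ℕ) :
    1 ≤ coverExponent k n k₀ r b i := by
  have hk1 : (1 : ℝ) ≤ k := Nat.one_le_cast.2 hk
  have hn1 : (1 : ℝ) ≤ n := Nat.one_le_cast.2 hn
  unfold coverExponent
  split_ifs with hi
  · nlinarith [one_le_pow₀ hb (n := i + r)]
  · have hi1 : (1 : ℝ) ≤ i := Nat.one_le_cast.2 (by omega)
    nlinarith

lemma sqrt_mul_sqrt_coverExponent_le (hb : 2 ≤ b) (hn : n ^ 4 ≤ 2 ^ k₀) {A y : ℝ} (hA : 0 ≤ A)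
    (hy0 : 0 < y) (hy : y ^ 4 = 1 / 2) (i : ℕ) :
    √(A / b ^ i) * √(coverExponent k n k₀ r b i) ≤
      √A * ((if i ≤ k₀ then 32 * √(k * b ^ r) else 0) + 12 * y ^ i) := by
  have : 0 < b := by linarith
  rw [← Real.sqrt_mul (by positivity), div_mul_eq_mul_div, mul_div_assoc, Real.sqrt_mul hA]
  gcongr
  refine Real.sqrt_le_iff.2 ⟨by positivity, ?_⟩
  unfold coverExponent
  split_ifs with hi
  · have hg := Real.sq_sqrt (show 0 ≤ k * b ^ r by positivity)
    have he : 982 * k * b ^ (i + r) / b ^ i = 982 * (k * b ^ r) := by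
      rw [pow_add]
      field_simp
    have hcross : 0 ≤ √(k * b ^ r) * y ^ i := by positivity
    nlinarith [sq_nonneg (y ^ i)]
  · rw [zero_add]
    refine le_trans ?_ (seventeen_mul_div_two_pow_le
      (hn.trans (Nat.pow_le_pow_right two_pos (not_le.1 hi).le)) hy0 hy)
    gcongr

lemma sum_sqrt_mul_sqrt_coverExponent_le (hb : 2 ≤ b) (hn : n ^ 4 ≤ 2 ^ k₀) {A : ℝ} (hA : 0 ≤ A)
    (l : ℕ) : ∑ i ∈ Finset.range l, √(A / b ^ i) * √(coverExponent k n k₀ r b i) ≤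
      √A * ((k₀ + 1) * (32 * √(k * b ^ r)) + 80) := by
  obtain ⟨y, hy0, hy⟩ : ∃ y : ℝ, 0 < y ∧ y ^ 4 = 1 / 2 :=
    ⟨√√(1 / 2), by positivity, by
      rw [show 4 = 2 * 2 from rfl, pow_mul, Real.sq_sqrt (by positivity),
        Real.sq_sqrt (by positivity)]⟩
  have hcard : (((Finset.range l).filter (· ≤ k₀)).card : ℝ) ≤ k₀ + 1 := by
    have h : (Finset.range l).filter (· ≤ k₀) ⊆ Finset.range (k₀ + 1) := fun i hi =>
      Finset.mem_range_succ_iff.2 (Finset.mem_filter.1 hi).2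
    simpa using (Nat.cast_le (α := ℝ)).2 (Finset.card_le_card h)
  refine (Finset.sum_le_sum fun i _ =>
    sqrt_mul_sqrt_coverExponent_le hb hn hA hy0 hy i).trans ?_
  rw [← Finset.mul_sum, Finset.sum_add_distrib, ← Finset.sum_filter, Finset.sum_const,
    nsmul_eq_mul, ← Finset.mul_sum]
  refine mul_le_mul_of_nonneg_left (add_le_add ?_ ?_) (Real.sqrt_nonneg A)
  · gcongr
  · linarith [sum_pow_le_of_pow_four_eq_half hy0 hy l]

lemma sqrt_natCast_mul_sqrt_div_pow_le (hb : 2 ≤ b) {A : ℝ} (hA : 0 ≤ A) (l : ℕ) :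
    √l * √(A / b ^ l) ≤ √A := by
  rw [← Real.sqrt_mul l.cast_nonneg, mul_div_assoc']
  have : 0 < b := by linarith
  refine Real.sqrt_le_sqrt ((div_le_iff₀ (by positivity)).2 ?_)
  rw [mul_comm]
  have h : (l : ℝ) ≤ 2 ^ l := by exact_mod_cast l.lt_two_pow_self.le
  have h2 : (2 : ℝ) ^ l ≤ b ^ l := pow_le_pow_left₀ zero_le_two hb l
  exact mul_le_mul_of_nonneg_left (h.trans h2) hA

lemma sqrt_div_pow_le_two_mul (hb0 : 0 < b) (hb4 : b ≤ 4) {A : ℝ} (hA : 0 ≤ A) (i : ℕ) :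
    √(A / b ^ i) ≤ 2 * √(A / b ^ (i + 1)) := by
  refine Real.sqrt_le_iff.2 ⟨by positivity, ?_⟩
  rw [mul_pow, Real.sq_sqrt (by positivity), pow_succ b, mul_div_assoc',
    div_le_div_iff₀ (by positivity) (by positivity)]
  have : 0 ≤ A * b ^ i := by positivity
  nlinarith

lemma chaining_sum_le (hk : 1 ≤ k) (hb : 2 ≤ b) (hn : n ^ 4 ≤ 2 ^ k₀) {A : ℝ} (hA : 0 ≤ A)
    (l : ℕ) :
    18 * ∑ i ∈ Finset.range (l + 1), √(A / b ^ i) * √(coverExponent k n k₀ r b i) +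
      √l * √(A / b ^ l) ≤ 2100 * (k₀ + 1) * √(k * b ^ r) * √A := by
  have hg : 1 ≤ √(k * b ^ r) :=
    Real.one_le_sqrt.2 (one_le_mul_of_one_le_of_one_le (Nat.one_le_cast.2 hk)
      (one_le_pow₀ (by linarith)))
  have hkg : 1 ≤ (k₀ + 1) * √(k * b ^ r) :=
    one_le_mul_of_one_le_of_one_le (by linarith [k₀.cast_nonneg (α := ℝ)]) hg
  have hsum := sum_sqrt_mul_sqrt_coverExponent_le (k := k) (r := r) hb hn hA (l + 1)
  have htail := sqrt_natCast_mul_sqrt_div_pow_le hb hA l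
  linarith [mul_le_mul_of_nonneg_right hkg (Real.sqrt_nonneg A), A.sqrt_nonneg]

end

namespace IsBoundedParsevalFrame

variable {Ω E : Type*} [MeasurableSpace Ω] [NormedAddCommGroup E] [InnerProductSpace ℝ E]
  [MeasurableSpace E] [BorelSpace E] [FiniteDimensional ℝ E] [Nontrivial E] {μ : Measure Ω}
  [IsProbabilityMeasure μ] {u : Ω → E} {h D M p : ℝ} {T : Finset E} {k k₀ r : ℕ}
  {ι : Type*} [Fintype ι] [Nonempty ι] {x : ι → Ω}

lemma isCoveredBy_exp_coverExponent (hu : IsBoundedParsevalFrame μ u h) (hp : 1 ≤ p)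
    (hp2 : p ≤ 2) (hD : 0 < D) (hM : 0 ≤ M) (hDM : D ^ p = M * h ^ 2) (hk : 1 ≤ k)
    (hhk : h ^ 2 ≤ 4 ^ (2 * k - 2)) (hT : T.Nonempty)
    (hTM : ∀ a ∈ T, ∀ b ∈ T, ∫ y, |⟪u y, a - b⟫_ℝ| ^ p ∂μ ≤ M)
    (hr : Real.log (4 * Fintype.card ι) ≤ k * 4 ^ r) (i : ℕ) :
    IsCoveredBy T (Real.exp (coverExponent k (Module.finrank ℝ E) k₀ r (2 ^ p) i))
      {a | ∀ l, |⟪u (x l), a⟫_ℝ| ≤ D / 2 ^ i} := by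
  unfold coverExponent
  split_ifs
  · exact hu.isCoveredBy_forall_abs_inner_le hp hp2 hD hM hDM hk hhk hT hTM x hr i
  · have hh := hu.bound_pos
    have hdist (a : E) (ha : a ∈ T) (b : E) (hb : b ∈ T) : ‖a - b‖ ≤ D / h := by
      rw [le_div_iff₀' hh]
      exact hu.bound_mul_norm_le (by linarith) hp2 hD.le hDM (hTM a ha b hb)
    refine (isCoveredBy_closedBall_div_two_pow hT (div_pos hD hh) hdist i).superset fun a ha l => ?_
    calc |⟪u (x l), a⟫_ℝ| ≤ h * ‖a‖ := hu.abs_inner_le a _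
      _ ≤ h * (D / h / 2 ^ i) := by
          gcongr
          exact mem_closedBall_zero_iff.1 ha
      _ = D / 2 ^ i := by field_simp

open Classical in
lemma expect_le_of_forall_exists_le_abs_inner_phiVector (hu : IsBoundedParsevalFrame μ u h)
    {Φ : ℝ → ℝ} {c q R : ℝ} (hΦ : HasPowerGrowth Φ p c q) (hD : 0 < D) (hM : 0 ≤ M)
    (hDM : D ^ p = M * h ^ 2) (hk : 1 ≤ k) (hhk : h ^ 2 ≤ 4 ^ (2 * k - 2))
    (hk₀ : Module.finrank ℝ E ^ 4 ≤ 2 ^ k₀)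
    (hTM : ∀ a ∈ T, ∀ b ∈ T, ∫ y, |⟪u y, a - b⟫_ℝ| ^ p ∂μ ≤ M)
    (hTD : ∀ a ∈ T, ∀ j, |⟪u (x j), a⟫_ℝ| ≤ D) (hR : 0 < R)
    (hTR : ∀ a ∈ T, ∑ j, Φ |⟪u (x j), a⟫_ℝ| ≤ R)
    (hr : Real.log (4 * Fintype.card ι) ≤ k * 4 ^ r) {Y : (ι → Bool) → ℝ}
    (hY : ∀ s, ∃ a ∈ T, Y s ≤ |⟪signVector s, phiVector Φ fun j => ⟪u (x j), a⟫_ℝ⟫_ℝ|) :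
    𝔼 s, Y s ≤ 2100 * (k₀ + 1) * √(k * ((2 : ℝ) ^ p) ^ r) * √(2 * q ^ 2 * c * Φ D * R) := by
  have hp := hΦ.one_lt
  have hp2 := hΦ.le_two
  have hT : T.Nonempty := (hY fun _ => true).imp fun _ h => h.1
  have hb2 : (2 : ℝ) ≤ 2 ^ p := Real.self_le_rpow_of_one_le one_le_two hp.le
  have hb4 : (2 : ℝ) ^ p ≤ 4 :=
    (Real.rpow_le_rpow_of_exponent_le one_le_two hp2).trans_eq (by norm_num)
  have hA : 0 < 2 * q ^ 2 * c * Φ D * R := by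
    have := hΦ.dec.pos hΦ.isPhiPrefun hD
    have := hΦ.one_le_const
    have := hΦ.one_le_exponent
    positivity
  set A := 2 * q ^ 2 * c * Φ D * R
  set b : ℝ := 2 ^ p with hb
  have hscale (i : ℕ) : (D / 2 ^ i / D) ^ p = (b ^ i)⁻¹ := by
    rw [div_div_cancel_left' hD.ne', Real.inv_rpow (by positivity), hb,
      Real.rpow_pow_comm zero_le_two]
  have hcov (i : ℕ) := (hu.isCoveredBy_exp_coverExponent (k₀ := k₀) (x := x) hp.le hp2 hD hM hDM hk
    hhk hT hTM hr i).image (B' := Metric.closedBall (0 : EuclideanSpace ℝ ι) √(A / b ^ i))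
    (fun a => phiVector Φ fun j => ⟪u (x j), a⟫_ℝ) fun a ha a' ha' haa' => by
      rw [mem_closedBall_zero_iff]
      refine Real.le_sqrt_of_sq_le ((hΦ.norm_phiVector_sub_sq_le (d := D / 2 ^ i) (by positivity)
        hD.le (hTD a ha) (hTD a' ha') (fun j => ?_) (hTR a ha) (hTR a' ha')).trans_eq ?_)
      · simpa [inner_sub_right] using haa' j
      · rw [hscale, div_eq_mul_inv]
  refine (expect_le_sum_of_isCoveredBy
    (one_le_coverExponent hk Module.finrank_pos (one_le_two.trans hb2))
    (fun i => by positivity) (fun i => ?_) (fun i => ?_) ?_ hcov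
    (fun s => ?_) (Fintype.card ι)).trans (chaining_sum_le hk hb2 hk₀ hA.le _)
  · gcongr
    · linarith
    · omega
  · exact sqrt_div_pow_le_two_mul (by linarith) hb4 hA.le i
  · refine Finset.forall_mem_image.2 fun a ha => Real.le_sqrt_of_sq_le ?_
    simpa using hΦ.norm_phiVector_sq_le hD (hTD a ha) (hTR a ha)
  · obtain ⟨a, ha, hYa⟩ := hY s
    exact ⟨_, Finset.mem_image_of_mem _ ha, hYa⟩

end IsBoundedParsevalFrame

end PhiChaining

section Symmetrization

variable {Ω V ι : Type*} [MeasurableSpace Ω] {μ : Measure Ω} [IsProbabilityMeasure μ] [Fintype ι]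

lemma measurePreserving_exchange (s : ι → Bool) :
    MeasurePreserving
      (fun z : (ι → Ω) × (ι → Ω) =>
        ((fun j => if s j then z.1 j else z.2 j), fun j => if s j then z.2 j else z.1 j))
      ((Measure.pi fun _ => μ).prod (Measure.pi fun _ => μ))
      ((Measure.pi fun _ => μ).prod (Measure.pi fun _ => μ)) := by
  have hpair := measurePreserving_arrowProdEquivProdArrow Ω Ω ι (fun _ => μ) (fun _ => μ)
  have hswap : MeasurePreserving (fun (w : ι → Ω × Ω) j => (if s j then id else Prod.swap) (w j))
      (Measure.pi fun _ => μ.prod μ) (Measure.pi fun _ => μ.prod μ) := by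
    refine measurePreserving_pi (fun _ => μ.prod μ) (fun _ => μ.prod μ)
      (f := fun j => if s j then id else Prod.swap) fun j => ?_
    cases s j
    · exact Measure.measurePreserving_swap
    · exact .id _
  convert! hpair.comp (hswap.comp hpair.symm) using 1
  ext z j <;> cases hs : s j <;>
    simp [MeasurableEquiv.arrowProdEquivProdArrow, Equiv.arrowProdEquivProdArrow, hs]

variable [NormedAddCommGroup V] {φ : Ω → V}

lemma integrable_sum_comp_eval (hφ : Integrable φ μ) :
    Integrable (fun x : ι → Ω => ∑ j, φ (x j)) (Measure.pi fun _ => μ) :=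
  integrable_finsetSum _ fun _ _ => integrable_comp_eval hφ

lemma integrable_sum_signed_comp_eval (hφ : Integrable φ μ) (s : ι → Bool) :
    Integrable (fun x : ι → Ω => ∑ j, if s j then φ (x j) else -φ (x j))
      (Measure.pi fun _ => μ) := by
  refine integrable_finsetSum _ fun j _ => ?_
  cases s j
  · exact (integrable_comp_eval hφ).neg
  · exact integrable_comp_eval hφ

lemma integrable_norm_sum_comp_eval_sub (hφ : Integrable φ μ) (v : V) :
    Integrable (fun x : ι → Ω => ‖∑ j, φ (x j) - v‖) (Measure.pi fun _ => μ) :=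
  ((integrable_sum_comp_eval hφ).sub (integrable_const v)).norm

lemma integrable_norm_sum_sub_sum (hφ : Integrable φ μ) :
    Integrable (fun z : (ι → Ω) × (ι → Ω) => ‖∑ j, φ (z.1 j) - ∑ j, φ (z.2 j)‖)
      ((Measure.pi fun _ => μ).prod (Measure.pi fun _ => μ)) :=
  (((integrable_sum_comp_eval hφ).comp_fst _).sub ((integrable_sum_comp_eval hφ).comp_snd _)).norm

lemma integral_prod_norm_sum_sub_sum_le (hφ : Integrable φ μ) (s : ι → Bool) :
    ∫ z, ‖∑ j, φ (z.1 j) - ∑ j, φ (z.2 j)‖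
        ∂((Measure.pi fun _ : ι => μ).prod (Measure.pi fun _ : ι => μ)) ≤
      2 * ∫ x, ‖∑ j, if s j then φ (x j) else -φ (x j)‖ ∂(Measure.pi fun _ : ι => μ) := by
  have hexch := measurePreserving_exchange (μ := μ) s
  have hdiff := integrable_norm_sum_sub_sum (ι := ι) hφ
  set signed : (ι → Ω) → ℝ := fun x => ‖∑ j, if s j then φ (x j) else -φ (x j)‖
  have hsigned : Integrable signed (Measure.pi fun _ => μ) :=
    (integrable_sum_signed_comp_eval hφ s).norm
  have hmap := integral_map hexch.aemeasurable
    (hexch.map_eq.symm ▸ hdiff.aestronglyMeasurable)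
  rw [hexch.map_eq] at hmap
  calc _ = _ := hmap
    _ ≤ ∫ z, (signed z.1 + signed z.2)
        ∂((Measure.pi fun _ : ι => μ).prod (Measure.pi fun _ : ι => μ)) := by
        refine integral_mono (hexch.integrable_comp_of_integrable hdiff)
          ((hsigned.comp_fst _).add (hsigned.comp_snd _)) fun z => ?_
        refine (congrArg norm ?_).trans_le (norm_sub_le _ _)
        simp only [← Finset.sum_sub_distrib]
        refine Finset.sum_congr rfl fun j _ => ?_
        cases s j <;> simp [neg_add_eq_sub]
    _ = _ := by
        rw [integral_add (hsigned.comp_fst _) (hsigned.comp_snd _), integral_fun_fst signed,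
          integral_fun_snd signed]
        simp [two_mul]

variable [NormedSpace ℝ V] [CompleteSpace V]

lemma integral_norm_sum_sub_le_integral_prod (hφ : Integrable φ μ) :
    ∫ x, ‖∑ j, φ (x j) - Fintype.card ι • ∫ y, φ y ∂μ‖ ∂(Measure.pi fun _ : ι => μ) ≤
      ∫ z, ‖∑ j, φ (z.1 j) - ∑ j, φ (z.2 j)‖
        ∂((Measure.pi fun _ : ι => μ).prod (Measure.pi fun _ : ι => μ)) := by
  have hmean : ∫ x, ∑ j, φ (x j) ∂(Measure.pi fun _ : ι => μ) =
      Fintype.card ι • ∫ y, φ y ∂μ := by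
    rw [integral_finsetSum _ fun j _ => integrable_comp_eval hφ]
    simp [integral_comp_eval (μ := fun _ : ι => μ) hφ.aestronglyMeasurable]
  have hprod := integrable_norm_sum_sub_sum (ι := ι) hφ
  rw [integral_prod _ hprod]
  refine integral_mono_of_nonneg (.of_forall fun _ => norm_nonneg _) hprod.integral_prod_left
    (.of_forall fun x => ?_)
  calc ‖∑ j, φ (x j) - Fintype.card ι • ∫ y, φ y ∂μ‖
      = ‖∫ x', (∑ j, φ (x j) - ∑ j, φ (x' j)) ∂(Measure.pi fun _ : ι => μ)‖ := by
        rw [integral_sub (integrable_const _) (integrable_sum_comp_eval hφ), hmean]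
        simp
    _ ≤ _ := norm_integral_le_integral_norm _

lemma integral_norm_sum_sub_le_two_mul_integral_expect [DecidableEq ι]
    (hφ : Integrable φ μ) :
    ∫ x, ‖∑ j, φ (x j) - Fintype.card ι • ∫ y, φ y ∂μ‖ ∂(Measure.pi fun _ : ι => μ) ≤
      2 * ∫ x, 𝔼 s : ι → Bool, ‖∑ j, if s j then φ (x j) else -φ (x j)‖
        ∂(Measure.pi fun _ : ι => μ) := by
  have hswap : ∫ x, 𝔼 s : ι → Bool, ‖∑ j, if s j then φ (x j) else -φ (x j)‖
        ∂(Measure.pi fun _ : ι => μ) =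
      𝔼 s : ι → Bool, ∫ x, ‖∑ j, if s j then φ (x j) else -φ (x j)‖
        ∂(Measure.pi fun _ : ι => μ) := by
    simp only [Fintype.expect_eq_sum_div_card]
    rw [integral_div, integral_finsetSum _ fun s _ => (integrable_sum_signed_comp_eval hφ s).norm]
  rw [hswap, Finset.mul_expect]
  exact (integral_norm_sum_sub_le_integral_prod hφ).trans
    (Finset.le_expect Finset.univ_nonempty fun s _ => integral_prod_norm_sum_sub_sum_le hφ s)

end Symmetrization

lemma sqrt_add_le_mul_one_add_div {m z : ℝ} (hm : 0 < m) (hz : 0 ≤ z) :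
    √(m + z) ≤ √m * (1 + z / (2 * m)) := by
  rw [show m + z = m * (1 + z / m) by field_simp, Real.sqrt_mul hm.le]
  refine mul_le_mul_of_nonneg_left (Real.sqrt_le_iff.2 ⟨by positivity, ?_⟩) (Real.sqrt_nonneg m)
  linear_combination sq_nonneg (z / (2 * m))

section SelfBounding

variable {Ω V ι : Type*} [MeasurableSpace Ω] {μ : Measure Ω} [IsProbabilityMeasure μ] [Fintype ι]
  [DecidableEq ι] [Nonempty ι] [NormedAddCommGroup V] [NormedSpace ℝ V] [CompleteSpace V]
  {φ : Ω → V} {A τ : ℝ}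

lemma integral_norm_sum_sub_le_of_expect_le_sqrt (hφ : Integrable φ μ)
    (hA : ∀ x : ι → Ω, 𝔼 s : ι → Bool, ‖∑ j, if s j then φ (x j) else -φ (x j)‖ ≤
      A * √(Fintype.card ι + ‖∑ j, φ (x j) - Fintype.card ι • ∫ y, φ y ∂μ‖))
    (hA₀ : 0 ≤ A) (hAτ : 2 * A ≤ √(Fintype.card ι) * τ) (hτ : τ ≤ 1) :
    ∫ x, ‖∑ j, φ (x j) - Fintype.card ι • ∫ y, φ y ∂μ‖ ∂(Measure.pi fun _ : ι => μ) ≤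
      2 * (Fintype.card ι * τ) := by
  have hm : (0 : ℝ) < Fintype.card ι := Nat.cast_pos.2 Fintype.card_pos
  set m : ℝ := (Fintype.card ι : ℝ)
  set Z : (ι → Ω) → ℝ := fun x => ‖∑ j, φ (x j) - Fintype.card ι • ∫ y, φ y ∂μ‖
  have hZ : Integrable Z (Measure.pi fun _ => μ) := integrable_norm_sum_comp_eval_sub hφ _
  set I : ℝ := ∫ x, Z x ∂(Measure.pi fun _ : ι => μ)
  have hI : 0 ≤ I := integral_nonneg fun _ => norm_nonneg _
  have hI_le : I ≤ m * τ * (1 + I / (2 * m)) :=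
    calc I ≤ 2 * ∫ x, 𝔼 s : ι → Bool, ‖∑ j, if s j then φ (x j) else -φ (x j)‖
            ∂(Measure.pi fun _ : ι => μ) :=
          integral_norm_sum_sub_le_two_mul_integral_expect hφ
      _ ≤ 2 * ∫ x, A * (√m * (1 + Z x / (2 * m))) ∂(Measure.pi fun _ : ι => μ) := by
          refine mul_le_mul_of_nonneg_left (integral_mono_of_nonneg
            (.of_forall fun x => Finset.expect_nonneg fun s _ => norm_nonneg _)
            ((((integrable_const _).add (hZ.div_const _)).const_mul _).const_mul _)
            (.of_forall fun x => (hA x).trans ?_)) zero_le_two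
          exact mul_le_mul_of_nonneg_left (sqrt_add_le_mul_one_add_div hm (norm_nonneg _)) hA₀
      _ = 2 * A * √m * (1 + I / (2 * m)) := by
          rw [integral_const_mul, integral_const_mul,
            integral_add (integrable_const _) (hZ.div_const _), integral_div]
          simp only [integral_const, probReal_univ, one_smul]
          ring
      _ ≤ √m * τ * √m * (1 + I / (2 * m)) := by gcongr
      _ = m * τ * (1 + I / (2 * m)) := by rw [mul_right_comm (√m), Real.mul_self_sqrt hm.le]
  have hexpand : m * τ * (1 + I / (2 * m)) = m * τ + τ * (I / 2) := by field_simp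
  linarith [mul_le_of_le_one_left (div_nonneg hI zero_le_two) hτ]

lemma measure_le_norm_sum_sub_le (hφ : Integrable φ μ)
    (hA : ∀ x : ι → Ω, 𝔼 s : ι → Bool, ‖∑ j, if s j then φ (x j) else -φ (x j)‖ ≤
      A * √(Fintype.card ι + ‖∑ j, φ (x j) - Fintype.card ι • ∫ y, φ y ∂μ‖))
    (hA₀ : 0 ≤ A) (hAτ : 2 * A ≤ √(Fintype.card ι) * τ) (hτ : τ ≤ 1) {ε : ℝ} (hε : 0 < ε) :
    (Measure.pi fun _ : ι => μ)
        {x | Fintype.card ι * ε ≤ ‖∑ j, φ (x j) - Fintype.card ι • ∫ y, φ y ∂μ‖} ≤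
      ENNReal.ofReal (2 * τ / ε) := by
  have hm : (0 : ℝ) < Fintype.card ι := by exact_mod_cast Fintype.card_pos
  have hmarkov := (mul_meas_ge_le_integral_of_nonneg (.of_forall fun _ => norm_nonneg _)
    (integrable_norm_sum_comp_eval_sub hφ _) (Fintype.card ι * ε)).trans
      (integral_norm_sum_sub_le_of_expect_le_sqrt hφ hA hA₀ hAτ hτ)
  rw [← ofReal_measureReal]
  refine ENNReal.ofReal_le_ofReal ?_
  rw [le_div_iff₀ hε]
  refine le_of_mul_le_mul_left (hmarkov.trans_eq' ?_ |>.trans_eq ?_) hm <;> ring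

end SelfBounding

section ModularBall

variable {Ω E : Type*} [MeasurableSpace Ω] [NormedAddCommGroup E] [InnerProductSpace ℝ E]

/-- The unit ball of the Orlicz modular of the functions `⟪u ·, a⟫`, in the parameter `a`. -/
def modularBall (μ : Measure Ω) (u : Ω → E) (Φ : ℝ → ℝ) : Set E :=
  {a | ∫ y, Φ |⟪u y, a⟫_ℝ| ∂μ ≤ 1}

/-- The vector `(Φ |⟪v, a⟫|)_{a ∈ T}`, as an element of `ℓ^∞(T)`. -/
def modularVector (Φ : ℝ → ℝ) (T : Finset E) (v : E) : T → ℝ :=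
  fun a => Φ |⟪v, (a : E)⟫_ℝ|

/-- Bounds the `p`-th moments of `⟪u ·, a - b⟫` for `a` and `b` in the modular unit ball when `Φ`
is in `(aInc)_p` with constant `c`. -/
noncomputable def momentConst (Φ : ℝ → ℝ) (c : ℝ) : ℝ :=
  8 * (1 + c / Φ 1)

/-- Bounds `|⟪u ·, a⟫|` for `a` in the modular unit ball when `‖u ·‖ ≤ h`. -/
noncomputable def peakBound (Φ : ℝ → ℝ) (p c h : ℝ) : ℝ :=
  (momentConst Φ c * h ^ 2) ^ p⁻¹

variable {Φ : ℝ → ℝ} {p c q h : ℝ}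

lemma abs_sub_rpow_le (hp : 1 ≤ p) (hp2 : p ≤ 2) (s t : ℝ) :
    |s - t| ^ p ≤ 4 * (|s| ^ p + |t| ^ p) := by
  wlog hts : |t| ≤ |s| generalizing s t
  · rw [abs_sub_comm, add_comm]
    exact this t s (le_of_not_ge hts)
  have h2 : (2 : ℝ) ^ p ≤ 4 :=
    (Real.rpow_le_rpow_of_exponent_le one_le_two hp2).trans_eq (by norm_num)
  calc |s - t| ^ p ≤ (2 * |s|) ^ p := by
        gcongr
        linarith [abs_sub s t]
    _ = 2 ^ p * |s| ^ p := Real.mul_rpow zero_le_two (abs_nonneg s)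
    _ ≤ 4 * (|s| ^ p + |t| ^ p) := by
        gcongr
        exact le_add_of_nonneg_right (by positivity)

lemma HasPowerGrowth.momentConst_pos (hΦ : HasPowerGrowth Φ p c q) : 0 < momentConst Φ c := by
  have := hΦ.dec.pos hΦ.isPhiPrefun one_pos
  have := hΦ.one_le_const
  unfold momentConst
  positivity

lemma HasPowerGrowth.peakBound_pos (hΦ : HasPowerGrowth Φ p c q) (hh : 0 < h) :
    0 < peakBound Φ p c h :=
  Real.rpow_pos_of_pos (mul_pos hΦ.momentConst_pos (pow_pos hh 2)) _

lemma HasPowerGrowth.peakBound_rpow (hΦ : HasPowerGrowth Φ p c q) :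
    peakBound Φ p c h ^ p = momentConst Φ c * h ^ 2 :=
  Real.rpow_inv_rpow (mul_nonneg hΦ.momentConst_pos.le (sq_nonneg h)) (by linarith [hΦ.one_lt])

lemma exists_norm_le_norm_apply {α : Type*} [Fintype α] [Nonempty α] (v : α → ℝ) :
    ∃ a, ‖v‖ ≤ ‖v a‖ :=
  (Finite.exists_max fun a => ‖v a‖).imp fun _ ha =>
    (pi_norm_le_iff_of_nonneg (norm_nonneg _)).2 ha

namespace IsBoundedParsevalFrame

variable [MeasurableSpace E] [BorelSpace E] [FiniteDimensional ℝ E] {μ : Measure Ω}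
  [IsProbabilityMeasure μ] {u : Ω → E} {a b : E} {T : Finset E}

lemma integrable_comp_abs_inner (hu : IsBoundedParsevalFrame μ u h) (hΦ : IsPhiPrefun Φ) (a : E) :
    Integrable (fun y => Φ |⟪u y, a⟫_ℝ|) μ :=
  hΦ.integrable_comp_abs (hu.measurable_inner a) (hu.abs_inner_le a)

lemma integral_abs_inner_rpow_le (hu : IsBoundedParsevalFrame μ u h)
    (hΦ : HasPowerGrowth Φ p c q) (ha : a ∈ modularBall μ u Φ) :
    ∫ y, |⟪u y, a⟫_ℝ| ^ p ∂μ ≤ momentConst Φ c / 8 := by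
  have hΦ1 := hΦ.dec.pos hΦ.isPhiPrefun one_pos
  have hint := (hu.integrable_comp_abs_inner hΦ.isPhiPrefun a).const_mul (c / Φ 1)
  calc ∫ y, |⟪u y, a⟫_ℝ| ^ p ∂μ ≤ ∫ y, (1 + c / Φ 1 * Φ |⟪u y, a⟫_ℝ|) ∂μ :=
        integral_mono (hu.integrable_abs_inner_rpow (by linarith [hΦ.one_lt]) a)
          ((integrable_const _).add hint) fun y => hΦ.rpow_le (abs_nonneg _)
    _ = 1 + c / Φ 1 * ∫ y, Φ |⟪u y, a⟫_ℝ| ∂μ := by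
        rw [integral_add (integrable_const _) hint, integral_const_mul]
        simp
    _ ≤ 1 + c / Φ 1 := by
        have := div_nonneg (zero_le_one.trans hΦ.one_le_const) hΦ1.le
        gcongr
        exact mul_le_of_le_one_right this ha
    _ = momentConst Φ c / 8 := by
        unfold momentConst
        ring

lemma integral_abs_inner_sub_rpow_le (hu : IsBoundedParsevalFrame μ u h)
    (hΦ : HasPowerGrowth Φ p c q) (ha : a ∈ modularBall μ u Φ) (hb : b ∈ modularBall μ u Φ) :
    ∫ y, |⟪u y, a - b⟫_ℝ| ^ p ∂μ ≤ momentConst Φ c := by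
  have hint := hu.integrable_abs_inner_rpow (p := p) (by linarith [hΦ.one_lt])
  calc ∫ y, |⟪u y, a - b⟫_ℝ| ^ p ∂μ
      ≤ ∫ y, 4 * (|⟪u y, a⟫_ℝ| ^ p + |⟪u y, b⟫_ℝ| ^ p) ∂μ := by
        refine integral_mono (hint _) (((hint a).add (hint b)).const_mul 4) fun y => ?_
        simpa only [inner_sub_right] using abs_sub_rpow_le hΦ.one_lt.le hΦ.le_two _ _
    _ = 4 * (∫ y, |⟪u y, a⟫_ℝ| ^ p ∂μ + ∫ y, |⟪u y, b⟫_ℝ| ^ p ∂μ) := by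
        rw [integral_const_mul, integral_add (hint a) (hint b)]
    _ ≤ momentConst Φ c := by
        linarith [hu.integral_abs_inner_rpow_le hΦ ha, hu.integral_abs_inner_rpow_le hΦ hb]

lemma abs_inner_le_peakBound (hu : IsBoundedParsevalFrame μ u h) (hΦ : HasPowerGrowth Φ p c q)
    (ha : a ∈ modularBall μ u Φ) (y : Ω) : |⟪u y, a⟫_ℝ| ≤ peakBound Φ p c h :=
  (hu.abs_inner_le a y).trans <|
    hu.bound_mul_norm_le (by linarith [hΦ.one_lt]) hΦ.le_two (hΦ.peakBound_pos hu.bound_pos).le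
      hΦ.peakBound_rpow
      ((hu.integral_abs_inner_rpow_le hΦ ha).trans (by linarith [hΦ.momentConst_pos]))

lemma integrable_modularVector (hu : IsBoundedParsevalFrame μ u h) (hΦ : IsPhiPrefun Φ)
    (T : Finset E) : Integrable (fun y => modularVector Φ T (u y)) μ :=
  .of_eval fun a => hu.integrable_comp_abs_inner hΦ a

lemma sum_modularVector_sub_apply (hu : IsBoundedParsevalFrame μ u h) (hΦ : IsPhiPrefun Φ)
    {ι : Type*} [Fintype ι] (x : ι → Ω) (a : T) :
    (∑ j, modularVector Φ T (u (x j)) -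
        Fintype.card ι • ∫ y, modularVector Φ T (u y) ∂μ) a =
      ∑ j, Φ |⟪u (x j), (a : E)⟫_ℝ| - Fintype.card ι * ∫ y, Φ |⟪u y, (a : E)⟫_ℝ| ∂μ := by
  rw [Pi.sub_apply, Finset.sum_apply, Pi.smul_apply, nsmul_eq_mul,
    eval_integral (integrable_pi_iff.1 (hu.integrable_modularVector hΦ T))]
  rfl

variable [Nontrivial E] {k k₀ r : ℕ} {ι : Type*} [Fintype ι] [DecidableEq ι] [Nonempty ι]

lemma expect_norm_sum_signed_modularVector_le (hu : IsBoundedParsevalFrame μ u h)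
    (hΦ : HasPowerGrowth Φ p c q) (hk : 1 ≤ k) (hhk : h ^ 2 ≤ 4 ^ (2 * k - 2))
    (hk₀ : Module.finrank ℝ E ^ 4 ≤ 2 ^ k₀) (hr : Real.log (4 * Fintype.card ι) ≤ k * 4 ^ r)
    (hT : T.Nonempty) (hTΦ : ∀ a ∈ T, a ∈ modularBall μ u Φ) (x : ι → Ω) :
    𝔼 s : ι → Bool,
        ‖∑ j, if s j then modularVector Φ T (u (x j)) else -modularVector Φ T (u (x j))‖ ≤
      2100 * (k₀ + 1) * √(k * ((2 : ℝ) ^ p) ^ r) * √(2 * q ^ 2 * c * Φ (peakBound Φ p c h)) *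
        √(Fintype.card ι + ‖∑ j, modularVector Φ T (u (x j)) -
          Fintype.card ι • ∫ y, modularVector Φ T (u y) ∂μ‖) := by
  set R : ℝ := Fintype.card ι + ‖∑ j, modularVector Φ T (u (x j)) -
          Fintype.card ι • ∫ y, modularVector Φ T (u y) ∂μ‖
  have hm : (0 : ℝ) < Fintype.card ι := Nat.cast_pos.2 Fintype.card_pos
  have hR : 0 < R := by positivity
  have hTR (a : E) (ha : a ∈ T) : ∑ j, Φ |⟪u (x j), a⟫_ℝ| ≤ R := by
    have hdev := (le_abs_self _).trans (norm_le_pi_norm (∑ j, modularVector Φ T (u (x j)) -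
      Fintype.card ι • ∫ y, modularVector Φ T (u y) ∂μ) ⟨a, ha⟩)
    rw [hu.sum_modularVector_sub_apply hΦ.isPhiPrefun] at hdev
    linarith [mul_le_of_le_one_right hm.le (hTΦ a ha)]
  have hY (s : ι → Bool) : ∃ a ∈ T,
      ‖∑ j, if s j then modularVector Φ T (u (x j)) else -modularVector Φ T (u (x j))‖ ≤
        |⟪signVector s, phiVector Φ fun j => ⟪u (x j), a⟫_ℝ⟫_ℝ| := by
    have := hT.to_subtype
    obtain ⟨a, ha⟩ := exists_norm_le_norm_apply
      (∑ j, if s j then modularVector Φ T (u (x j)) else -modularVector Φ T (u (x j)))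
    refine ⟨a, a.2, ha.trans_eq ?_⟩
    rw [inner_signVector, Finset.sum_apply, Real.norm_eq_abs]
    exact congrArg abs (Finset.sum_congr rfl fun j _ => by cases s j <;> rfl)
  have hbound := hu.expect_le_of_forall_exists_le_abs_inner_phiVector hΦ
    (hΦ.peakBound_pos hu.bound_pos) hΦ.momentConst_pos.le hΦ.peakBound_rpow hk hhk hk₀
    (fun a ha b hb => hu.integral_abs_inner_sub_rpow_le hΦ (hTΦ a ha) (hTΦ b hb))
    (fun a ha j => hu.abs_inner_le_peakBound hΦ (hTΦ a ha) (x j)) hR hTR hr hY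
  rw [Real.sqrt_mul' _ hR.le, ← mul_assoc] at hbound
  convert hbound

end IsBoundedParsevalFrame

end ModularBall

section ModularDeviation

variable {Ω E : Type*} [MeasurableSpace Ω] [NormedAddCommGroup E] [InnerProductSpace ℝ E]

/-- The error made when the modular of `⟪u ·, a⟫` is estimated from the sample `x`. -/
noncomputable def modularDeviation {ι : Type*} [Fintype ι] (μ : Measure Ω) (u : Ω → E) (Φ : ℝ → ℝ)
    (x : ι → Ω) (a : E) : ℝ :=
  |(∑ j, Φ |⟪u (x j), a⟫_ℝ|) / Fintype.card ι - ∫ y, Φ |⟪u y, a⟫_ℝ| ∂μ|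

variable {Φ : ℝ → ℝ} {p c q h : ℝ}

namespace IsBoundedParsevalFrame

variable [MeasurableSpace E] [BorelSpace E] [FiniteDimensional ℝ E] {μ : Measure Ω}
  [IsProbabilityMeasure μ] {u : Ω → E} {a b : E} {T : Finset E}

lemma card_mul_modularDeviation_le (hu : IsBoundedParsevalFrame μ u h) (hΦ : IsPhiPrefun Φ)
    {ι : Type*} [Fintype ι] [Nonempty ι] (x : ι → Ω) (ha : a ∈ T) :
    Fintype.card ι * modularDeviation μ u Φ x a ≤
      ‖∑ j, modularVector Φ T (u (x j)) - Fintype.card ι • ∫ y, modularVector Φ T (u y) ∂μ‖ := by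
  have hm : (0 : ℝ) < Fintype.card ι := Nat.cast_pos.2 Fintype.card_pos
  have hcoord := norm_le_pi_norm (∑ j, modularVector Φ T (u (x j)) -
    Fintype.card ι • ∫ y, modularVector Φ T (u y) ∂μ) ⟨a, ha⟩
  rw [hu.sum_modularVector_sub_apply hΦ, Real.norm_eq_abs] at hcoord
  refine hcoord.trans_eq' ?_
  rw [modularDeviation, ← abs_of_pos hm, ← abs_mul, abs_of_pos hm, mul_sub,
    mul_div_cancel₀ _ hm.ne']

lemma continuous_integral_comp_abs_inner (hu : IsBoundedParsevalFrame μ u h)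
    (hΦ : HasPowerGrowth Φ p c q) : Continuous fun a : E => ∫ y, Φ |⟪u y, a⟫_ℝ| ∂μ := by
  refine continuous_iff_continuousAt.2 fun a => continuousAt_of_dominated
    (bound := fun _ => Φ (h * (‖a‖ + 1)))
    (.of_forall fun b => (hu.integrable_comp_abs_inner hΦ.isPhiPrefun b).aestronglyMeasurable)
    ?_ (integrable_const _) (.of_forall fun y => ?_)
  · filter_upwards [Metric.ball_mem_nhds a one_pos] with b hb
    have hba : ‖b‖ ≤ ‖a‖ + 1 := by
      linarith [norm_le_norm_add_norm_sub' b a, mem_ball_iff_norm.1 hb]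
    refine .of_forall fun y => ?_
    rw [Real.norm_of_nonneg (hΦ.isPhiPrefun.nonneg _ (abs_nonneg _))]
    exact hΦ.isPhiPrefun.apply_le (abs_nonneg _)
      ((hu.abs_inner_le b y).trans (mul_le_mul_of_nonneg_left hba hu.bound_pos.le))
  · exact (hΦ.continuous_comp_abs.comp (by fun_prop : Continuous fun a => ⟪u y, a⟫_ℝ)).continuousAt

lemma continuous_modularDeviation (hu : IsBoundedParsevalFrame μ u h)
    (hΦ : HasPowerGrowth Φ p c q) {ι : Type*} [Fintype ι] (x : ι → Ω) :
    Continuous (modularDeviation μ u Φ x) := by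
  refine ((continuous_finsetSum _ fun j _ => ?_).div_const _ |>.sub
    (hu.continuous_integral_comp_abs_inner hΦ)).abs
  exact hΦ.continuous_comp_abs.comp (by fun_prop : Continuous fun a => ⟪u (x j), a⟫_ℝ)

variable [Nontrivial E] {k k₀ r : ℕ} {ι : Type*} [Fintype ι] [Nonempty ι] {ε τ : ℝ}

lemma measure_exists_mem_finset_lt_modularDeviation_le (hu : IsBoundedParsevalFrame μ u h)
    (hΦ : HasPowerGrowth Φ p c q) (hk : 1 ≤ k) (hhk : h ^ 2 ≤ 4 ^ (2 * k - 2))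
    (hk₀ : Module.finrank ℝ E ^ 4 ≤ 2 ^ k₀) (hr : Real.log (4 * Fintype.card ι) ≤ k * 4 ^ r)
    (hm : 2 * (2100 * (k₀ + 1) * √(k * ((2 : ℝ) ^ p) ^ r) *
      √(2 * q ^ 2 * c * Φ (peakBound Φ p c h))) ≤ √(Fintype.card ι) * τ)
    (hτ : τ ≤ 1) (hε : 0 < ε) (hT : T.Nonempty) (hTΦ : ∀ a ∈ T, a ∈ modularBall μ u Φ) :
    (Measure.pi fun _ : ι => μ) {x | ∃ a ∈ T, ε < modularDeviation μ u Φ x a} ≤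
      ENNReal.ofReal (2 * τ / ε) := by
  classical
  refine (measure_mono ?_).trans <| measure_le_norm_sum_sub_le
    (hu.integrable_modularVector hΦ.isPhiPrefun T)
    (hu.expect_norm_sum_signed_modularVector_le hΦ hk hhk hk₀ hr hT hTΦ) (by positivity) hm hτ hε
  rintro x ⟨a, ha, hx⟩
  exact (mul_le_mul_of_nonneg_left hx.le (Nat.cast_nonneg _)).trans
    (hu.card_mul_modularDeviation_le hΦ.isPhiPrefun x ha)

lemma measure_exists_mem_modularBall_lt_modularDeviation_le (hu : IsBoundedParsevalFrame μ u h)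
    (hΦ : HasPowerGrowth Φ p c q) (hk : 1 ≤ k) (hhk : h ^ 2 ≤ 4 ^ (2 * k - 2))
    (hk₀ : Module.finrank ℝ E ^ 4 ≤ 2 ^ k₀) (hr : Real.log (4 * Fintype.card ι) ≤ k * 4 ^ r)
    (hm : 2 * (2100 * (k₀ + 1) * √(k * ((2 : ℝ) ^ p) ^ r) *
      √(2 * q ^ 2 * c * Φ (peakBound Φ p c h))) ≤ √(Fintype.card ι) * τ)
    (hτ : τ ≤ 1) (hε : 0 < ε) :
    (Measure.pi fun _ : ι => μ) {x | ∃ a ∈ modularBall μ u Φ, ε < modularDeviation μ u Φ x a} ≤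
      ENNReal.ofReal (2 * τ / ε) := by
  classical
  have : Nonempty (modularBall μ u Φ) :=
    ⟨0, by simp [modularBall, hΦ.isPhiPrefun.map_zero]⟩
  obtain ⟨d, hd⟩ := TopologicalSpace.exists_dense_seq (modularBall μ u Φ)
  set bad : ℕ → Set (ι → Ω) := fun n => {x | ε < modularDeviation μ u Φ x (d n)}
  calc (Measure.pi fun _ : ι => μ) {x | ∃ a ∈ modularBall μ u Φ, ε < modularDeviation μ u Φ x a}
      ≤ (Measure.pi fun _ : ι => μ) (⋃ n, bad n) := by
        refine measure_mono fun x ⟨a, ha, hx⟩ => ?_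
        have hopen : IsOpen {b : modularBall μ u Φ | ε < modularDeviation μ u Φ x b} :=
          isOpen_lt continuous_const
            ((hu.continuous_modularDeviation hΦ x).comp continuous_subtype_val)
        obtain ⟨n, hn⟩ := hd.exists_mem_open hopen ⟨⟨a, ha⟩, hx⟩
        exact Set.mem_iUnion.2 ⟨n, hn⟩
    _ = ⨆ n, (Measure.pi fun _ : ι => μ) (Set.accumulate bad n) :=
        measure_iUnion_eq_iSup_accumulate
    _ ≤ ENNReal.ofReal (2 * τ / ε) := by
        refine iSup_le fun n => (measure_mono fun x hx => ?_).trans <|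
          hu.measure_exists_mem_finset_lt_modularDeviation_le hΦ hk hhk hk₀ hr hm hτ hε
            (T := (Finset.range (n + 1)).image fun i => (d i : E)) (by simp)
            (Finset.forall_mem_image.2 fun i _ => (d i).2)
        obtain ⟨i, hi, hx⟩ := Set.mem_accumulate.1 hx
        exact ⟨d i, Finset.mem_image_of_mem _ (Finset.mem_range_succ_iff.2 hi), hx⟩

end IsBoundedParsevalFrame

end ModularDeviation

section FrameOfSubspace

variable {Ω : Type*}

lemma inner_apply_single_eq {n : ℕ} (Ψ : EuclideanSpace ℝ (Fin n) →ₗ[ℝ] Ω → ℝ) (y : Ω)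
    (a : EuclideanSpace ℝ (Fin n)) :
    ⟪WithLp.toLp 2 (fun i => Ψ (EuclideanSpace.single i 1) y), a⟫_ℝ = Ψ a y := by
  conv_rhs => rw [← (EuclideanSpace.basisFun (Fin n) ℝ).sum_repr a]
  simp [PiLp.inner_apply]

variable [MeasurableSpace Ω] {μ : Measure Ω} {X : Submodule ℝ (Ω → ℝ)}

lemma exists_linearEquiv_integral_sq_eq [FiniteDimensional ℝ X]
    (hint : ∀ f ∈ X, ∀ g ∈ X, Integrable (fun y => f y * g y) μ)
    (hzero : ∀ f ∈ X, ∫ y, f y ^ 2 ∂μ = 0 → f = 0) :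
    ∃ Ψ : EuclideanSpace ℝ (Fin (Module.finrank ℝ X)) ≃ₗ[ℝ] X,
      ∀ a, ∫ y, (Ψ a : Ω → ℝ) y ^ 2 ∂μ = ‖a‖ ^ 2 := by
  let core : InnerProductSpace.Core ℝ X :=
    { inner := fun f g => ∫ y, (f : Ω → ℝ) y * (g : Ω → ℝ) y ∂μ
      conj_inner_symm := fun f g => integral_congr_ae (.of_forall fun y => mul_comm _ _)
      re_inner_nonneg := fun f => integral_nonneg fun y => mul_self_nonneg _
      add_left := fun f g v => by
        simpa only [Submodule.coe_add, Pi.add_apply, add_mul] using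
          integral_add (hint f f.2 v v.2) (hint g g.2 v v.2)
      smul_left := fun f g r => by
        simpa only [Submodule.coe_smul, Pi.smul_apply, smul_eq_mul, mul_assoc,
          conj_trivial] using
          integral_const_mul r _
      definite := fun f hf => Subtype.ext (hzero f f.2 (by simpa only [sq] using hf)) }
  let _ : NormedAddCommGroup X := core.toNormedAddCommGroup
  let _ : InnerProductSpace ℝ X := InnerProductSpace.ofCore core.toCore
  let e := (stdOrthonormalBasis ℝ X).repr
  refine ⟨e.symm.toLinearEquiv, fun a => ?_⟩
  rw [← e.symm.norm_map a, ← real_inner_self_eq_norm_sq]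
  exact integral_congr_ae (.of_forall fun y => sq _)

lemma exists_isBoundedParsevalFrame [IsFiniteMeasure μ] [FiniteDimensional ℝ X] {h : ℝ}
    (hh : 0 < h) (hmeas : ∀ f ∈ X, Measurable f)
    (hX : ∀ f ∈ X, ∀ y, |f y| ≤ h * √(∫ z, f z ^ 2 ∂μ)) :
    ∃ u : Ω → EuclideanSpace ℝ (Fin (Module.finrank ℝ X)),
      IsBoundedParsevalFrame μ u h ∧ ∀ f ∈ X, ∃ a, ∀ y, f y = ⟪u y, a⟫_ℝ := by
  have hint : ∀ f ∈ X, ∀ g ∈ X, Integrable (fun y => f y * g y) μ := fun f hf g hg =>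
    .of_bound ((hmeas f hf).mul (hmeas g hg)).aestronglyMeasurable
      (h * √(∫ z, f z ^ 2 ∂μ) * (h * √(∫ z, g z ^ 2 ∂μ))) (.of_forall fun y => by
        rw [norm_mul]
        exact mul_le_mul (hX f hf y) (hX g hg y) (norm_nonneg _) (by positivity))
  have hzero : ∀ f ∈ X, ∫ y, f y ^ 2 ∂μ = 0 → f = 0 := fun f hf h0 =>
    funext fun y => abs_nonpos_iff.1 (by simpa [h0] using hX f hf y)
  obtain ⟨Ψ, hΨ⟩ := exists_linearEquiv_integral_sq_eq hint hzero
  set u : Ω → EuclideanSpace ℝ (Fin (Module.finrank ℝ X)) := fun y =>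
    WithLp.toLp 2 (fun i => (Ψ (EuclideanSpace.single i 1) : Ω → ℝ) y)
  have hinner (y a) : ⟪u y, a⟫_ℝ = (Ψ a : Ω → ℝ) y :=
    inner_apply_single_eq (X.subtype ∘ₗ Ψ.toLinearMap) y a
  refine ⟨u, ⟨hh, ?_, fun y => ?_, fun a => by simpa only [hinner] using hΨ a⟩, fun f hf =>
    ⟨Ψ.symm ⟨f, hf⟩, fun y => by rw [hinner, Ψ.apply_symm_apply]⟩⟩
  · exact (PiLp.continuous_toLp 2 _).measurable.comp
      (measurable_pi_lambda _ fun i => hmeas _ (Ψ _).2)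
  · have hself : ‖u y‖ ^ 2 ≤ h * ‖u y‖ :=
      calc ‖u y‖ ^ 2 = (Ψ (u y) : Ω → ℝ) y := by rw [← hinner, real_inner_self_eq_norm_sq]
        _ ≤ h * √(∫ z, (Ψ (u y) : Ω → ℝ) z ^ 2 ∂μ) := (le_abs_self _).trans (hX _ (Ψ _).2 y)
        _ = h * ‖u y‖ := by rw [hΨ, Real.sqrt_sq (norm_nonneg _)]
    rcases (norm_nonneg (u y)).eq_or_lt with h0 | hpos
    · exact h0 ▸ hh.le
    · exact le_of_mul_le_mul_right (by rwa [← sq]) hpos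

lemma IsBoundedParsevalFrame.finrank_le {E : Type*} [NormedAddCommGroup E] [InnerProductSpace ℝ E]
    [FiniteDimensional ℝ E] [MeasurableSpace E] [BorelSpace E] [IsProbabilityMeasure μ]
    {u : Ω → E} {h : ℝ} (hu : IsBoundedParsevalFrame μ u h) : Module.finrank ℝ E ≤ h ^ 2 := by
  let e := stdOrthonormalBasis ℝ E
  have hint (i) : Integrable (fun y => ⟪u y, e i⟫_ℝ ^ 2) μ := hu.integrable_inner_pow (e i) 2
  calc (Module.finrank ℝ E : ℝ) = ∑ i, ∫ y, ⟪u y, e i⟫_ℝ ^ 2 ∂μ := by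
        simp [hu.integral_inner_sq, e.orthonormal.1]
    _ = ∫ y, ‖u y‖ ^ 2 ∂μ := by
        simp_rw [← e.sum_sq_inner_left, integral_finsetSum _ fun i _ => hint i]
    _ ≤ ∫ _, h ^ 2 ∂μ := integral_mono_of_nonneg (.of_forall fun y => sq_nonneg _)
        (integrable_const _)
        (.of_forall fun y => pow_le_pow_left₀ (norm_nonneg _) (hu.norm_le y) 2)
    _ = h ^ 2 := by simp

end FrameOfSubspace

section SampleSize

lemma log_le_logb_two {x : ℝ} (hx : 1 ≤ x) : Real.log x ≤ Real.logb 2 x :=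
  le_div_self (Real.log_nonneg hx) (Real.log_pos one_lt_two) (by linarith [Real.log_two_lt_d9])

lemma one_le_logb_two {x : ℝ} (hx : 2 ≤ x) : 1 ≤ Real.logb 2 x :=
  (Real.le_logb_iff_rpow_le one_lt_two (by linarith)).2 (by simpa using hx)

lemma le_two_pow_ceil_logb_two {x : ℝ} (hx : 0 < x) : x ≤ 2 ^ ⌈Real.logb 2 x⌉₊ :=
  calc x = (2 : ℝ) ^ Real.logb 2 x := (Real.rpow_logb two_pos (by norm_num) hx).symm
    _ ≤ 2 ^ (⌈Real.logb 2 x⌉₊ : ℝ) := Real.rpow_le_rpow_of_exponent_le one_le_two (Nat.le_ceil _)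
    _ = 2 ^ ⌈Real.logb 2 x⌉₊ := Real.rpow_natCast 2 _

lemma exists_le_four_pow_and_two_rpow_pow_le {p x : ℝ} (hp : 0 ≤ p) (hp2 : p ≤ 2) (hx : 1 ≤ x) :
    ∃ r : ℕ, x ≤ 4 ^ r ∧ ((2 : ℝ) ^ p) ^ r ≤ 4 * x ^ (p / 2) := by
  obtain ⟨r, hrx, hxr⟩ := exists_nat_pow_near hx (by norm_num : (1 : ℝ) < 4)
  refine ⟨r + 1, hxr.le, ?_⟩
  have htwo : (2 : ℝ) ^ p ≤ 4 :=
    (Real.rpow_le_rpow_of_exponent_le one_le_two hp2).trans_eq (by norm_num)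
  have hfour : ((4 : ℝ) ^ r) ^ (p / 2) = ((2 : ℝ) ^ p) ^ r := by
    rw [← Real.rpow_natCast, ← Real.rpow_natCast, ← Real.rpow_mul (by norm_num),
      ← Real.rpow_mul two_pos.le, show (4 : ℝ) = 2 ^ (2 : ℝ) by norm_num,
      ← Real.rpow_mul two_pos.le]
    congr 1
    ring
  calc ((2 : ℝ) ^ p) ^ (r + 1) = 2 ^ p * ((4 : ℝ) ^ r) ^ (p / 2) := by rw [hfour, pow_succ']
    _ ≤ 4 * x ^ (p / 2) := by gcongr

lemma max_log_four_mul_div_le {B L c d l : ℝ} (hB : 0 < B) (hL : 1 ≤ L) (hl : 1 ≤ l)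
    (hc : 1 ≤ c) (hd : 0 ≤ d) (hlog : Real.log B ≤ d * (L * l)) :
    max L (Real.log (4 * (c * B)) / l) ≤ L * (4 * √c + d) := by
  have hs : 1 ≤ √c := Real.one_le_sqrt.2 hc
  refine max_le (le_mul_of_one_le_right (by linarith) (by linarith)) ?_
  have hlogc : Real.log (4 * c) ≤ 4 * √c :=
    calc Real.log (4 * c) = 2 * Real.log (2 * √c) := by
          rw [← Real.log_rpow (by positivity), Real.rpow_two, mul_pow, Real.sq_sqrt (by linarith)]
          norm_num
      _ ≤ 4 * √c := by linarith [Real.log_le_self (x := 2 * √c) (by positivity)]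
  rw [div_le_iff₀ (by linarith), ← mul_assoc, Real.log_mul (by positivity) hB.ne']
  calc Real.log (4 * c) + Real.log B ≤ 4 * √c * (L * l) + d * (L * l) := by
        gcongr
        exact hlogc.trans
          (le_mul_of_one_le_right (by positivity) (one_le_mul_of_one_le_of_one_le hL hl))
    _ = L * (4 * √c + d) * l := by ring

lemma max_log_four_mul_div_rpow_le {B L c d l p : ℝ} (hB : 0 < B) (hL : 1 ≤ L) (hl : 1 ≤ l)
    (hc : 1 ≤ c) (hd : 0 ≤ d) (hlog : Real.log B ≤ d * (L * l)) (hp : 0 ≤ p) (hp2 : p ≤ 2) :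
    max L (Real.log (4 * (c * B)) / l) ^ (p / 2) ≤ L ^ (p / 2) * (4 * √c + d) := by
  have hs : 1 ≤ 4 * √c + d := by linarith [Real.one_le_sqrt.2 hc]
  calc max L (Real.log (4 * (c * B)) / l) ^ (p / 2) ≤ (L * (4 * √c + d)) ^ (p / 2) :=
        Real.rpow_le_rpow (le_max_of_le_left (by linarith))
          (max_log_four_mul_div_le hB hL hl hc hd hlog) (by linarith)
    _ = L ^ (p / 2) * (4 * √c + d) ^ (p / 2) := Real.mul_rpow (by linarith) (by linarith)
    _ ≤ L ^ (p / 2) * (4 * √c + d) := by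
        gcongr
        exact (Real.rpow_le_rpow_of_exponent_le hs (by linarith)).trans_eq (Real.rpow_one _)

lemma four_mul_mul_sqrt_add_le {K c d : ℝ} (hK : 0 ≤ K) (hd : 0 ≤ d)
    (hc : (16 * K + 4 * K * d + 1) ^ 2 ≤ c) : 4 * K * (4 * √c + d) ≤ c := by
  have hbase : 0 ≤ 4 * K * d := by positivity
  have hs : 16 * K + 4 * K * d + 1 ≤ √c := Real.le_sqrt_of_sq_le hc
  calc 4 * K * (4 * √c + d) ≤ (16 * K + 4 * K * d + 1) * √c := by
        nlinarith [le_mul_of_one_le_right hbase (by linarith : 1 ≤ √c)]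
    _ ≤ √c * √c := by gcongr
    _ = c := Real.mul_self_sqrt ((sq_nonneg _).trans hc)

/-- The number of random points that suffices, up to a constant depending only on `Φ`, to
discretize `‖·‖_Φ` on an `n`-dimensional space with `‖f‖_∞ ≤ H‖f‖₂`, where `η = εδ` is the product
of the accuracy and the failure probability. -/
noncomputable def sampleSize (Φ : ℝ → ℝ) (p η H n : ℝ) : ℝ :=
  η⁻¹ ^ 2 * Real.logb 2 η⁻¹ ^ (p / 2) * Φ (H ^ (2 / p)) * Real.logb 2 (2 * n) ^ 2 *
    Real.logb 2 (2 * H ^ 2)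

lemma sampleSize_mul_sq {Φ : ℝ → ℝ} {p η H n : ℝ} (hη : η ≠ 0) :
    sampleSize Φ p η H n * η ^ 2 =
      Real.logb 2 η⁻¹ ^ (p / 2) * Φ (H ^ (2 / p)) * Real.logb 2 (2 * n) ^ 2 *
        Real.logb 2 (2 * H ^ 2) := by
  have hcancel : η⁻¹ ^ 2 * η ^ 2 = 1 := by rw [← mul_pow, inv_mul_cancel₀ hη, one_pow]
  rw [sampleSize]
  linear_combination (Real.logb 2 η⁻¹ ^ (p / 2) * Φ (H ^ (2 / p)) * Real.logb 2 (2 * n) ^ 2 *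
    Real.logb 2 (2 * H ^ 2)) * hcancel

/-- The constant in front of the square of the chaining bound, in terms of the logarithmic
parameters occurring in `sampleSize`: the bound on the dyadic levels contributes `81`, the exponent
of the moment norm `3`. -/
noncomputable def chainingConst (Φ : ℝ → ℝ) (p c q : ℝ) : ℝ :=
  16800 ^ 2 * 81 * 3 * (2 * q ^ 2 * c * momentConst Φ c ^ (q / p))

/-- A constant bounding `log (sampleSize Φ p η H n)` by the product of the logarithms of `η⁻¹` and
`2 * H ^ 2`. -/
noncomputable def logSampleConst (Φ : ℝ → ℝ) (q : ℝ) : ℝ :=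
  6 + |Real.log (Φ 1)| + q

/-- The constant in front of `sampleSize`. It absorbs the dependence of the chaining bound on the
logarithm of the number of points, which is why `chainingConst` enters squared. -/
noncomputable def sampleConst (Φ : ℝ → ℝ) (p c q : ℝ) : ℝ :=
  (16 * chainingConst Φ p c q + 4 * chainingConst Φ p c q * logSampleConst Φ q + 1) ^ 2

namespace HasPowerGrowth

variable {Φ : ℝ → ℝ} {p c q H : ℝ}

lemma one_le_momentConst (hΦ : HasPowerGrowth Φ p c q) : 1 ≤ momentConst Φ c := by
  have hΦ1 := hΦ.dec.pos hΦ.isPhiPrefun one_pos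
  have : 0 ≤ c / Φ 1 := div_nonneg (by linarith [hΦ.one_le_const]) hΦ1.le
  unfold momentConst
  linarith

lemma chainingConst_pos (hΦ : HasPowerGrowth Φ p c q) : 0 < chainingConst Φ p c q := by
  have := hΦ.one_le_exponent
  have := hΦ.one_le_const
  have := hΦ.momentConst_pos
  unfold chainingConst
  positivity

lemma logSampleConst_nonneg (hΦ : HasPowerGrowth Φ p c q) : 0 ≤ logSampleConst Φ q := by
  have := hΦ.one_le_exponent
  unfold logSampleConst
  positivity

lemma sampleConst_pos (hΦ : HasPowerGrowth Φ p c q) : 0 < sampleConst Φ p c q := by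
  have := hΦ.chainingConst_pos
  have := hΦ.logSampleConst_nonneg
  unfold sampleConst
  positivity

lemma apply_peakBound_le (hΦ : HasPowerGrowth Φ p c q) (hH : 0 < H) :
    Φ (peakBound Φ p c H) ≤ Φ (H ^ (2 / p)) * momentConst Φ c ^ (q / p) := by
  have hp := hΦ.one_lt
  have hM := hΦ.momentConst_pos
  have hM1 : 1 ≤ momentConst Φ c ^ p⁻¹ :=
    Real.one_le_rpow hΦ.one_le_momentConst (by positivity)
  have hpeak : peakBound Φ p c H = momentConst Φ c ^ p⁻¹ * H ^ (2 / p) := by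
    rw [peakBound, Real.mul_rpow hM.le (sq_nonneg H), ← Real.rpow_two, ← Real.rpow_mul hH.le,
      div_eq_mul_inv]
  have hH0 : 0 < H ^ (2 / p) := Real.rpow_pos_of_pos hH _
  calc Φ (peakBound Φ p c H) ≤ Φ (H ^ (2 / p)) * (peakBound Φ p c H / H ^ (2 / p)) ^ q :=
        hΦ.dec.le_mul_rpow hH0 (hpeak ▸ le_mul_of_one_le_left hH0.le hM1)
    _ = Φ (H ^ (2 / p)) * momentConst Φ c ^ (q / p) := by
        rw [hpeak, mul_div_cancel_right₀ _ hH0.ne', ← Real.rpow_mul hM.le, inv_mul_eq_div]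

lemma log_apply_rpow_le (hΦ : HasPowerGrowth Φ p c q) (hH : 1 ≤ H) :
    Real.log (Φ (H ^ (2 / p))) ≤ (|Real.log (Φ 1)| + q) * Real.logb 2 (2 * H ^ 2) := by
  have hp := hΦ.one_lt
  have hq := hΦ.one_le_exponent
  have hH0 : 0 < H := by linarith
  have hH2 : 1 ≤ H ^ 2 := one_le_pow₀ hH
  have hD1 : 1 ≤ H ^ (2 / p) := Real.one_le_rpow hH (by positivity)
  have hΦ1 := hΦ.dec.pos hΦ.isPhiPrefun one_pos
  have hlogH : 2 / p * Real.log H ≤ Real.logb 2 (2 * H ^ 2) :=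
    calc 2 / p * Real.log H ≤ 2 * Real.log H := by
          gcongr
          · exact Real.log_nonneg hH
          · exact div_le_self two_pos.le hp.le
      _ = Real.log (H ^ 2) := by simp
      _ ≤ Real.logb 2 (H ^ 2) := log_le_logb_two hH2
      _ ≤ Real.logb 2 (2 * H ^ 2) :=
          Real.logb_le_logb_of_le one_lt_two (by positivity) (by linarith)
  calc Real.log (Φ (H ^ (2 / p))) ≤ Real.log (Φ 1 * (H ^ (2 / p)) ^ q) := by
        refine Real.log_le_log (hΦ.dec.pos hΦ.isPhiPrefun (by linarith)) ?_
        simpa using hΦ.dec.le_mul_rpow one_pos hD1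
    _ = Real.log (Φ 1) + q * (2 / p * Real.log H) := by
        rw [Real.log_mul hΦ1.ne' (by positivity), Real.log_rpow (by positivity), Real.log_rpow hH0]
    _ ≤ |Real.log (Φ 1)| * Real.logb 2 (2 * H ^ 2) + q * Real.logb 2 (2 * H ^ 2) := by
        gcongr
        exact (le_abs_self _).trans
          (le_mul_of_one_le_right (abs_nonneg _) (one_le_logb_two (by linarith)))
    _ = (|Real.log (Φ 1)| + q) * Real.logb 2 (2 * H ^ 2) := by ring

variable {η n : ℝ}

lemma sampleSize_pos (hΦ : HasPowerGrowth Φ p c q) (hη : 0 < η) (hη2 : η ≤ 1 / 2) (hH : 1 ≤ H)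
    (hn : 1 ≤ n) : 0 < sampleSize Φ p η H n := by
  have hL := one_le_logb_two (x := η⁻¹) (by rw [le_inv_comm₀ two_pos hη]; linarith)
  have hl := one_le_logb_two (x := 2 * H ^ 2) (by linarith [one_le_pow₀ (n := 2) hH])
  have hnn := one_le_logb_two (x := 2 * n) (by linarith)
  have hΦH := hΦ.dec.pos hΦ.isPhiPrefun (t := H ^ (2 / p)) (by positivity)
  unfold sampleSize
  positivity

lemma log_sampleSize_le (hΦ : HasPowerGrowth Φ p c q) (hη : 0 < η) (hη2 : η ≤ 1 / 2) (hn : 1 ≤ n)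
    (hH : 1 ≤ H) (hnH : n ≤ H ^ 2) :
    Real.log (sampleSize Φ p η H n) ≤
      logSampleConst Φ q * (Real.logb 2 η⁻¹ * Real.logb 2 (2 * H ^ 2)) := by
  have hηi : 2 ≤ η⁻¹ := by rw [le_inv_comm₀ two_pos hη]; linarith
  have : 1 ≤ H ^ 2 := one_le_pow₀ hH
  have hq := hΦ.one_le_exponent
  have hΦH := hΦ.dec.pos hΦ.isPhiPrefun (t := H ^ (2 / p)) (by positivity)
  have hlogΦ := hΦ.log_apply_rpow_le hH
  have hlogη := log_le_logb_two (x := η⁻¹) (by linarith)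
  have hL := one_le_logb_two hηi
  have hl := one_le_logb_two (x := 2 * H ^ 2) (by linarith)
  have hnn := one_le_logb_two (x := 2 * n) (by linarith)
  have hnl : Real.logb 2 (2 * n) ≤ Real.logb 2 (2 * H ^ 2) :=
    Real.logb_le_logb_of_le one_lt_two (by positivity) (by linarith)
  unfold sampleSize logSampleConst
  set L := Real.logb 2 η⁻¹
  set l := Real.logb 2 (2 * H ^ 2)
  set b := Real.logb 2 (2 * n)
  have hlogL : p / 2 * Real.log L ≤ 1 * L :=
    mul_le_mul (by linarith [hΦ.le_two]) (Real.log_le_self (by linarith)) (Real.log_nonneg hL)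
      one_pos.le
  have hlogb : Real.log b ≤ l := (Real.log_le_self (by linarith)).trans hnl
  have hlogl : Real.log l ≤ l := Real.log_le_self (by linarith)
  rw [Real.log_mul (by positivity) (by positivity), Real.log_mul (by positivity) (by positivity),
    Real.log_mul (by positivity) hΦH.ne', Real.log_mul (by positivity) (by positivity),
    Real.log_pow, Real.log_pow, Real.log_rpow (by positivity)]
  calc (2 : ℕ) * Real.log η⁻¹ + p / 2 * Real.log L + Real.log (Φ (H ^ (2 / p))) +
        (2 : ℕ) * Real.log b + Real.log l
      ≤ 3 * L + (3 + |Real.log (Φ 1)| + q) * l := by push_cast; linarith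
    _ ≤ 3 * (L * l) + (3 + |Real.log (Φ 1)| + q) * (L * l) := by
        gcongr
        · exact le_mul_of_one_le_right (by linarith) hl
        · exact le_mul_of_one_le_left (by linarith) hL
    _ = (6 + |Real.log (Φ 1)| + q) * (L * l) := by ring

lemma chainingConst_mul_le (hΦ : HasPowerGrowth Φ p c q) (hη : 0 < η) (hη2 : η ≤ 1 / 2)
    (hn : 1 ≤ n) (hH : 1 ≤ H) (hnH : n ≤ H ^ 2) {m : ℝ}
    (hm : sampleConst Φ p c q * sampleSize Φ p η H n ≤ m) :
    4 * chainingConst Φ p c q * Real.logb 2 (2 * n) ^ 2 * Real.logb 2 (2 * H ^ 2) *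
        Φ (H ^ (2 / p)) *
        max (Real.logb 2 η⁻¹) (Real.log (4 * m) / Real.logb 2 (2 * H ^ 2)) ^ (p / 2) ≤
      m * η ^ 2 := by
  have hB := hΦ.sampleSize_pos hη hη2 hH hn
  have hlogB := hΦ.log_sampleSize_le hη hη2 hn hH hnH
  have hL := one_le_logb_two (x := η⁻¹) (by rw [le_inv_comm₀ two_pos hη]; linarith)
  have hl := one_le_logb_two (x := 2 * H ^ 2) (by linarith [one_le_pow₀ (n := 2) hH])
  have hK := hΦ.chainingConst_pos
  have hd := hΦ.logSampleConst_nonneg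
  have hΦH := hΦ.dec.pos hΦ.isPhiPrefun (t := H ^ (2 / p)) (by positivity)
  obtain ⟨b, rfl⟩ : ∃ b, b * sampleSize Φ p η H n = m := ⟨_, div_mul_cancel₀ m hB.ne'⟩
  have hb : sampleConst Φ p c q ≤ b := le_of_mul_le_mul_right hm hB
  have hb1 : 1 ≤ b := (one_le_pow₀ (by linarith [mul_nonneg hK.le hd])).trans hb
  have hpow := max_log_four_mul_div_rpow_le hB hL hl hb1 hd hlogB
    (by linarith [hΦ.one_lt]) hΦ.le_two
  have := Real.one_le_sqrt.2 hb1
  have hfactor := four_mul_mul_sqrt_add_le hK.le hd hb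
  set L := Real.logb 2 η⁻¹
  set l := Real.logb 2 (2 * H ^ 2)
  set w := Real.logb 2 (2 * n)
  set K := chainingConst Φ p c q
  calc 4 * K * w ^ 2 * l * Φ (H ^ (2 / p)) *
        max L (Real.log (4 * (b * sampleSize Φ p η H n)) / l) ^ (p / 2)
      ≤ 4 * K * w ^ 2 * l * Φ (H ^ (2 / p)) *
        (L ^ (p / 2) * (4 * √b + logSampleConst Φ q)) := by gcongr
    _ = 4 * K * (4 * √b + logSampleConst Φ q) * (L ^ (p / 2) * Φ (H ^ (2 / p)) * w ^ 2 * l) := by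
        ring
    _ ≤ b * (L ^ (p / 2) * Φ (H ^ (2 / p)) * w ^ 2 * l) := by gcongr
    _ = b * sampleSize Φ p η H n * η ^ 2 := by
        rw [mul_assoc b (sampleSize Φ p η H n), sampleSize_mul_sq hη.ne']

end HasPowerGrowth

end SampleSize

section Sampling

variable {Φ : ℝ → ℝ} {p c q H η : ℝ} {N m : ℕ}

lemma abs_apply_le_supNorm {Ω : Type*} [TopologicalSpace Ω] [CompactSpace Ω]
    {f : Ω → ℝ} (hf : Continuous f) (y : Ω) :
    |f y| ≤ supNorm f :=
  le_ciSup (f := fun x => |f x|)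
    (by simpa [Set.image_univ] using isCompact_univ.bddAbove_image hf.abs.continuousOn) y

lemma sq_le_four_pow_ceil_logb (hH : H ≠ 0) :
    H ^ 2 ≤ 4 ^ (2 * (⌈Real.logb 2 (2 * H ^ 2)⌉₊ + 1) - 2) := by
  calc H ^ 2 ≤ 2 * H ^ 2 := by linarith [sq_nonneg H]
    _ ≤ 2 ^ ⌈Real.logb 2 (2 * H ^ 2)⌉₊ := le_two_pow_ceil_logb_two (by positivity)
    _ ≤ 4 ^ ⌈Real.logb 2 (2 * H ^ 2)⌉₊ := by gcongr; norm_num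
    _ ≤ 4 ^ (2 * (⌈Real.logb 2 (2 * H ^ 2)⌉₊ + 1) - 2) := by
        gcongr
        · norm_num
        · omega

lemma pow_four_le_two_pow_ceil_logb (hN : 1 ≤ N) :
    N ^ 4 ≤ 2 ^ (4 * ⌈Real.logb 2 (2 * N)⌉₊) := by
  have hN' : (1 : ℝ) ≤ N := by exact_mod_cast hN
  have h2 : (N : ℝ) ≤ 2 ^ ⌈Real.logb 2 (2 * N)⌉₊ := by
    linarith [le_two_pow_ceil_logb_two (x := 2 * N) (by positivity)]
  rw [mul_comm, pow_mul]
  exact Nat.pow_le_pow_left (by exact_mod_cast h2) 4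

namespace HasPowerGrowth

lemma mul_sqrt_mul_sqrt_le_of_sampleSize_le (hΦ : HasPowerGrowth Φ p c q) (hη : 0 < η)
    (hη2 : η ≤ 1 / 2) (hN : 1 ≤ N) (hH : 1 ≤ H) (hNH : N ≤ H ^ 2)
    (hm : sampleConst Φ p c q * sampleSize Φ p η H N ≤ m) {k k₀ r : ℕ}
    (hk : k ≤ 3 * Real.logb 2 (2 * H ^ 2)) (hk₀ : k₀ + 1 ≤ 9 * Real.logb 2 (2 * N))
    (hr : ((2 : ℝ) ^ p) ^ r ≤ 4 * max (Real.logb 2 η⁻¹)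
      (Real.log (4 * m) / Real.logb 2 (2 * H ^ 2)) ^ (p / 2)) :
    2 * (2100 * (k₀ + 1) * √(k * ((2 : ℝ) ^ p) ^ r) * √(2 * q ^ 2 * c * Φ (peakBound Φ p c H))) ≤
      √m * (η / 4) := by
  have hmain := hΦ.chainingConst_mul_le hη hη2 (by exact_mod_cast hN) hH hNH hm
  have hpeak := hΦ.apply_peakBound_le (by linarith : 0 < H)
  have hΦpeak := hΦ.isPhiPrefun.nonneg _ (hΦ.peakBound_pos (by linarith : 0 < H)).le
  have hc := hΦ.one_le_const
  set l := Real.logb 2 (2 * H ^ 2)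
  set n := Real.logb 2 (2 * N)
  set Λ := max (Real.logb 2 η⁻¹) (Real.log (4 * m) / l)
  have hl : 0 ≤ l := nonneg_of_mul_nonneg_right ((Nat.cast_nonneg k).trans hk) three_pos
  have hΛ : 0 ≤ Λ ^ (p / 2) := nonneg_of_mul_nonneg_right (le_trans (by positivity) hr) four_pos
  refine (abs_le_of_sq_le_sq' ?_ (by positivity)).2
  calc (2 * (2100 * (k₀ + 1) * √(k * ((2 : ℝ) ^ p) ^ r) *
        √(2 * q ^ 2 * c * Φ (peakBound Φ p c H)))) ^ 2
      = 16800 ^ 2 * (k₀ + 1 : ℝ) ^ 2 * (k * ((2 : ℝ) ^ p) ^ r) *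
          (2 * q ^ 2 * c * Φ (peakBound Φ p c H)) / 16 := by
        simp only [mul_pow]
        rw [Real.sq_sqrt (by positivity), Real.sq_sqrt (by positivity)]
        ring
    _ ≤ 16800 ^ 2 * (9 * n) ^ 2 * (3 * l * (4 * Λ ^ (p / 2))) *
          (2 * q ^ 2 * c * (Φ (H ^ (2 / p)) * momentConst Φ c ^ (q / p))) / 16 := by gcongr
    _ = 4 * chainingConst Φ p c q * n ^ 2 * l * Φ (H ^ (2 / p)) * Λ ^ (p / 2) / 16 := by
        rw [chainingConst]
        ring
    _ ≤ m * η ^ 2 / 16 := by gcongr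
    _ = (√m * (η / 4)) ^ 2 := by
        rw [mul_pow, Real.sq_sqrt (Nat.cast_nonneg m)]
        ring

lemma pos_of_sampleSize_le (hΦ : HasPowerGrowth Φ p c q) (hη : 0 < η) (hη2 : η ≤ 1 / 2)
    (hN : 1 ≤ N) (hH : 1 ≤ H) (hm : sampleConst Φ p c q * sampleSize Φ p η H N ≤ m) : 0 < m :=
  Nat.cast_pos.1 <| (mul_pos hΦ.sampleConst_pos
    (hΦ.sampleSize_pos hη hη2 hH (Nat.one_le_cast.2 hN))).trans_le hm

lemma exists_chaining_parameters (hΦ : HasPowerGrowth Φ p c q) (hη : 0 < η)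
    (hη2 : η ≤ 1 / 2) (hN : 1 ≤ N) (hH : 1 ≤ H) (hNH : N ≤ H ^ 2)
    (hm : sampleConst Φ p c q * sampleSize Φ p η H N ≤ m) :
    ∃ k k₀ r : ℕ, 1 ≤ k ∧ H ^ 2 ≤ 4 ^ (2 * k - 2) ∧ N ^ 4 ≤ 2 ^ k₀ ∧
      Real.log (4 * m) ≤ k * 4 ^ r ∧
      2 * (2100 * (k₀ + 1) * √(k * ((2 : ℝ) ^ p) ^ r) *
        √(2 * q ^ 2 * c * Φ (peakBound Φ p c H))) ≤ √m * (η / 4) := by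
  have hL := one_le_logb_two (x := η⁻¹) (by rw [le_inv_comm₀ two_pos hη]; linarith)
  have hl := one_le_logb_two (x := 2 * H ^ 2) (by linarith [one_le_pow₀ (n := 2) hH])
  have hn := one_le_logb_two (x := 2 * N) (by linarith [Nat.one_le_cast (α := ℝ).2 hN])
  have hlceil := Nat.ceil_lt_add_one (a := Real.logb 2 (2 * H ^ 2)) (by linarith)
  have hnceil := Nat.ceil_lt_add_one (a := Real.logb 2 (2 * N)) (by linarith)
  obtain ⟨r, hΛr, hr⟩ := exists_le_four_pow_and_two_rpow_pow_le (by linarith [hΦ.one_lt])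
    hΦ.le_two (le_max_of_le_left hL :
      1 ≤ max (Real.logb 2 η⁻¹) (Real.log (4 * m) / Real.logb 2 (2 * H ^ 2)))
  refine ⟨⌈Real.logb 2 (2 * H ^ 2)⌉₊ + 1, 4 * ⌈Real.logb 2 (2 * N)⌉₊, r, by omega,
    sq_le_four_pow_ceil_logb (by positivity), pow_four_le_two_pow_ceil_logb hN, ?_,
    hΦ.mul_sqrt_mul_sqrt_le_of_sampleSize_le hη hη2 hN hH hNH hm (by push_cast; linarith)
      (by push_cast; linarith) hr⟩
  calc Real.log (4 * m) ≤ Real.logb 2 (2 * H ^ 2) * 4 ^ r :=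
        (div_le_iff₀' (by linarith)).1 ((le_max_right _ _).trans hΛr)
    _ ≤ ((⌈Real.logb 2 (2 * H ^ 2)⌉₊ + 1 : ℕ) : ℝ) * 4 ^ r := by
        gcongr
        push_cast
        linarith [Nat.le_ceil (Real.logb 2 (2 * H ^ 2))]

end HasPowerGrowth

variable {Ω E : Type*} [MeasurableSpace Ω] {μ : Measure Ω} [IsProbabilityMeasure μ] {ε δ : ℝ}

lemma ofReal_one_sub_le_measure_compl {s : Set Ω} {t : ℝ} (ht : 0 ≤ t)
    (hs : μ s ≤ ENNReal.ofReal t) : ENNReal.ofReal (1 - t) ≤ μ sᶜ := by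
  rw [ENNReal.ofReal_sub 1 ht, ENNReal.ofReal_one, tsub_le_iff_right]
  calc 1 = μ Set.univ := measure_univ.symm
    _ = μ (sᶜ ∪ s) := by rw [Set.compl_union_self]
    _ ≤ μ sᶜ + ENNReal.ofReal t := (measure_union_le _ _).trans (by gcongr)

lemma IsBoundedParsevalFrame.measure_lt_modularDeviation_le_of_sampleSize_le
    [NormedAddCommGroup E] [InnerProductSpace ℝ E] [FiniteDimensional ℝ E] [Nontrivial E]
    [MeasurableSpace E] [BorelSpace E] {u : Ω → E} (hu : IsBoundedParsevalFrame μ u H)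
    (hH : 1 ≤ H) (hΦ : HasPowerGrowth Φ p c q) (hε : 0 < ε) (hε2 : ε ≤ 1 / 2) (hδ : 0 < δ)
    (hδ1 : δ ≤ 1)
    (hm : sampleConst Φ p c q * sampleSize Φ p (ε * δ) H (Module.finrank ℝ E) ≤ m) :
    (Measure.pi fun _ : Fin m => μ) {x | ∃ a ∈ modularBall μ u Φ, ε < modularDeviation μ u Φ x a} ≤
      ENNReal.ofReal (δ / 2) := by
  have hη2 : ε * δ ≤ 1 / 2 := (mul_le_of_le_one_right hε.le hδ1).trans hε2
  have hN : 1 ≤ Module.finrank ℝ E := Module.finrank_pos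
  have : Nonempty (Fin m) := Fin.pos_iff_nonempty.1 <|
    hΦ.pos_of_sampleSize_le (mul_pos hε hδ) hη2 hN hH hm
  obtain ⟨k, k₀, r, hk, hHk, hNk₀, hr, hchain⟩ :=
    hΦ.exists_chaining_parameters (mul_pos hε hδ) hη2 hN hH hu.finrank_le hm
  refine (hu.measure_exists_mem_modularBall_lt_modularDeviation_le hΦ hk hHk hNk₀
    (by simpa using hr) (by simpa using hchain) (by linarith) hε).trans_eq ?_
  congr 1
  field_simp
  norm_num

lemma IsBoundedParsevalFrame.discLuxNorm_two_sided [NormedAddCommGroup E] [InnerProductSpace ℝ E]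
    [FiniteDimensional ℝ E] [MeasurableSpace E] [BorelSpace E] {u : Ω → E} {a₁ : ℝ} [NeZero m]
    (hu : IsBoundedParsevalFrame μ u H) (hΦ : IsPhiPrefun Φ) (hdec : DecQ Φ q) (ha₁ : 1 ≤ a₁)
    (hinc : AIncP Φ 1 a₁) (hε : 0 ≤ ε) {x : Fin m → Ω}
    (hx : ∀ a ∈ modularBall μ u Φ, modularDeviation μ u Φ x a ≤ ε) (a : E) :
    a₁⁻¹ * (1 - ε) * luxNorm μ Φ (fun y => ⟪u y, a⟫_ℝ) ≤ discLuxNorm Φ x (fun y => ⟪u y, a⟫_ℝ) ∧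
      discLuxNorm Φ x (fun y => ⟪u y, a⟫_ℝ) ≤
        a₁ * (1 + ε) * luxNorm μ Φ (fun y => ⟪u y, a⟫_ℝ) := by
  refine discLuxNorm_two_sided_of_deviation hΦ hdec ha₁ hinc hu.measurable.inner_const
    ⟨_, hu.abs_inner_le a⟩ hε x fun l hl hl1 => ?_
  have hscale (y : Ω) : |⟪u y, a⟫_ℝ| / l = |⟪u y, l⁻¹ • a⟫_ℝ| := by
    rw [inner_smul_right, abs_mul, abs_of_pos (inv_pos.2 hl), inv_mul_eq_div]
  simp only [hscale] at hl1 ⊢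
  simpa [modularDeviation] using hx (l⁻¹ • a) hl1

theorem ofReal_one_sub_le_measure_discLuxNorm_two_sided {X : Submodule ℝ (Ω → ℝ)} {a₁ : ℝ}
    (hΦ : HasPowerGrowth Φ p c q) (ha₁ : 1 ≤ a₁) (hinc : AIncP Φ 1 a₁)
    (hmeas : ∀ f ∈ X, Measurable f) (hN : 1 ≤ Module.finrank ℝ X) (hH : 1 ≤ H)
    (hX : ∀ f ∈ X, ∀ y, |f y| ≤ H * √(∫ z, f z ^ 2 ∂μ))
    (hε : 0 < ε) (hε2 : ε ≤ 1 / 2) (hδ : 0 < δ) (hδ1 : δ ≤ 1)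
    (hm : sampleConst Φ p c q * sampleSize Φ p (ε * δ) H (Module.finrank ℝ X) ≤ m) :
    ENNReal.ofReal (1 - δ / 2) ≤ (Measure.pi fun _ : Fin m => μ)
      {x | ∀ f ∈ X, a₁⁻¹ * (1 - ε) * luxNorm μ Φ f ≤ discLuxNorm Φ x f ∧
        discLuxNorm Φ x f ≤ a₁ * (1 + ε) * luxNorm μ Φ f} := by
  have hη2 : ε * δ ≤ 1 / 2 := (mul_le_of_le_one_right hε.le hδ1).trans hε2
  have : NeZero m := ⟨(hΦ.pos_of_sampleSize_le (mul_pos hε hδ) hη2 hN hH hm).ne'⟩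
  have : FiniteDimensional ℝ X := .of_finrank_pos hN
  have : Nontrivial (EuclideanSpace ℝ (Fin (Module.finrank ℝ X))) :=
    Module.nontrivial_of_finrank_pos (R := ℝ) (by rwa [finrank_euclideanSpace_fin])
  obtain ⟨u, hu, hrep⟩ := exists_isBoundedParsevalFrame (by linarith) hmeas hX
  have hbad := hu.measure_lt_modularDeviation_le_of_sampleSize_le hH hΦ hε hε2 hδ hδ1
    (m := m) (by simpa using hm)
  refine (ofReal_one_sub_le_measure_compl (by positivity) hbad).trans
    (measure_mono fun x hx f hf => ?_)
  obtain ⟨a, ha⟩ := hrep f hf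
  rw [show f = fun y => ⟪u y, a⟫_ℝ from funext ha]
  exact hu.discLuxNorm_two_sided hΦ.isPhiPrefun hΦ.dec ha₁ hinc hε.le
    (fun b hb => not_lt.1 fun hlt => hx ⟨b, hb, hlt⟩) a

end Sampling

theorem statement10_general (p : ℝ) (hp : 1 < p)
    (Φ : ℝ → ℝ) (hpre : IsPhiPrefun Φ)
    (a1 : ℝ) (ha1 : 1 ≤ a1) (hA1 : AIncP Φ 1 a1)
    (aP : ℝ) (haP : 1 ≤ aP) (hAp : AIncP Φ p aP)
    (hdec : ∃ q : ℝ, 1 ≤ q ∧ DecQ Φ q) :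
    ∃ C : ℝ, 0 < C ∧
      ∀ (Ω : Type*) [MeasurableSpace Ω] (μ : Measure Ω), IsProbabilityMeasure μ →
      ∀ N : ℕ, 1 ≤ N → ∀ H : ℝ, 1 ≤ H →
      ∀ X : Submodule ℝ (Ω → ℝ),
        (∀ f ∈ X, Measurable f) →
        Module.finrank ℝ X = N →
        (∀ f ∈ X, ∀ y, |f y| ≤ H * √(∫ z, f z ^ 2 ∂μ)) →
      ∀ ε : ℝ, 0 < ε → ε ≤ 1 / 2 →
      ∀ δ : ℝ, 0 < δ → δ ≤ 1 →
      ∀ m : ℕ,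
        C * (ε * δ)⁻¹ ^ 2 * (Real.logb 2 (ε * δ)⁻¹) ^ (min p 2 / 2) *
            Φ (H ^ (2 / min p 2)) * (Real.logb 2 (2 * N)) ^ 2 *
            Real.logb 2 (2 * H ^ 2) ≤ (m : ℝ) →
        ENNReal.ofReal (1 - δ / 2) ≤
          (Measure.pi fun _ : Fin m => μ)
            {x : Fin m → Ω | ∀ f ∈ X,
              a1⁻¹ * (1 - ε) * luxNorm μ Φ f ≤ discLuxNorm Φ x f ∧
              discLuxNorm Φ x f ≤ a1 * (1 + ε) * luxNorm μ Φ f} := by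
  obtain ⟨q, hq, hdecq⟩ := hdec
  have hΦ : HasPowerGrowth Φ (min p 2) aP q :=
    ⟨hpre, lt_min hp one_lt_two, min_le_right p 2, haP, hAp.of_le hpre (min_le_left p 2), hq, hdecq⟩
  refine ⟨sampleConst Φ (min p 2) aP q, hΦ.sampleConst_pos, ?_⟩
  rintro Ω _ μ _ N hN H hH X hmeas rfl hX ε hε hε2 δ hδ hδ1 m hm
  exact ofReal_one_sub_le_measure_discLuxNorm_two_sided hΦ ha1 hA1 hmeas hN hH hX hε hε2 hδ hδ1
    (by simpa only [sampleSize, mul_assoc] using hm)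

/-- Remark rem2.1. Under the assumptions of Theorem cor4.1
(`Φ` a Φ-function, `Φ ∈ (aInc)_p ∩ (Dec)`, `p ∈ (1,∞)`), there is `C = C_{Φ,p} > 0` such
that for every `N`-dimensional `X_N ∈ NI_{2,∞}(H)`, `ε ∈ (0,1/2]`, `δ ∈ (0,1]` and
`m ≥ C (εδ)^{-2} (log₂ (εδ)⁻¹)^{min{p,2}/2} Φ(H^{2/min{p,2}}) (log₂ 2N)² log₂ 2H²`,
i.i.d. points `x₁,…,x_m ∼ μ` satisfy, with probability at least `1 − δ/2`,
`a_Φ(1)⁻¹(1−ε)‖f‖_Φ ≤ ‖f‖_{Φ,x} ≤ a_Φ(1)(1+ε)‖f‖_Φ` for all `f ∈ X_N`. -/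
theorem statement10 (p : ℝ) (hp : 1 < p)
    (Φ : ℝ → ℝ) (hpre : IsPhiPrefun Φ)
    (a1 : ℝ) (ha1 : 1 ≤ a1) (hA1 : AIncP Φ 1 a1)
    (aP : ℝ) (haP : 1 ≤ aP) (hAp : AIncP Φ p aP)
    (hdec : ∃ q : ℝ, 1 ≤ q ∧ DecQ Φ q) :
    ∃ C : ℝ, 0 < C ∧
      ∀ (Ω : Type) [MetricSpace Ω] [CompactSpace Ω] [MeasurableSpace Ω] [BorelSpace Ω],
      ∀ (μ : Measure Ω), IsProbabilityMeasure μ →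
      ∀ N : ℕ, 1 ≤ N → ∀ H : ℝ, 1 ≤ H →
      ∀ X : Submodule ℝ (Ω → ℝ),
        (∀ f ∈ X, Continuous f) →
        Module.finrank ℝ X = N →
        (∀ f ∈ X, supNorm f ≤ H * Real.sqrt (∫ y, (f y) ^ 2 ∂μ)) →
      ∀ ε : ℝ, 0 < ε → ε ≤ 1 / 2 →
      ∀ δ : ℝ, 0 < δ → δ ≤ 1 →
      ∀ m : ℕ,
        C * (ε * δ)⁻¹ ^ 2 * (Real.logb 2 (ε * δ)⁻¹) ^ (min p 2 / 2) *
            Φ (H ^ (2 / min p 2)) * (Real.logb 2 (2 * N)) ^ 2 *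
            Real.logb 2 (2 * H ^ 2) ≤ (m : ℝ) →
        ENNReal.ofReal (1 - δ / 2) ≤
          (Measure.pi fun _ : Fin m => μ)
            {x : Fin m → Ω | ∀ f ∈ X,
              a1⁻¹ * (1 - ε) * luxNorm μ Φ f ≤ discLuxNorm Φ x f ∧
              discLuxNorm Φ x f ≤ a1 * (1 + ε) * luxNorm μ Φ f} := by
  obtain ⟨C, hC, hmain⟩ := statement10_general p hp Φ hpre a1 ha1 hA1 aP haP hAp hdec
  exact ⟨C, hC, fun Ω _ _ _ _ μ hμ N hN H hH X hcont hdim hX =>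
    hmain Ω μ hμ N hN H hH X (fun f hf => (hcont f hf).measurable) hdim fun f hf y =>
      (abs_apply_le_supNorm (hcont f hf) y).trans (hX f hf)⟩
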